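/- Convexity of positivity in the potential: Let V₀, V₁ : Ω → ℝ be measurable functions, each bounded on every compact subset of Ω, and suppose Q_{V₀}(u) ≥ 0 and Q_{V₁}(u) ≥ 0 for every u ∈ C_c^∞(Ω). For t ∈ ℝ set Q_t(u) := t Q_{V₁}(u) + (1−t) Q_{V₀}(u). Then Q_t(u) ≥ 0 for every t ∈ [0,1] and every u ∈ C_c^∞(Ω). Moreover, if the set {x ∈ Ω : V₀(x) ≠ V₁(x)} has positive Lebesgue measure, then for every t ∈ (0,1) the functional Q_t is strictly positive in Ω: there exists a continuous function W : Ω → ℝ with W > 0 everywhere such that Q_t(u) ≥ ∫_Ω W|u|^p dx for all u ∈ C_c^∞(Ω). -/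

import Mathlib

open MeasureTheory Filter
open scoped RealInnerProductSpace Topology

noncomputable section

/-- Euclidean space `ℝ^d`. -/
abbrev Euc (d : ℕ) := EuclideanSpace ℝ (Fin d)

/-- A test function on `Ω`: smooth with compact support contained in `Ω`. -/
def IsTestFun {d : ℕ} (Ω : Set (Euc d)) (u : Euc d → ℝ) : Prop :=
  ContDiff ℝ (⊤ : ℕ∞) u ∧ HasCompactSupport u ∧ tsupport u ⊆ Ω

/-- The energy functional `Q(u) = ∫_Ω (|∇u|^p + V |u|^p) dx`. -/
def energyQ {d : ℕ} (Ω : Set (Euc d)) (V : Euc d → ℝ) (p : ℝ) (u : Euc d → ℝ) : ℝ :=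
  ∫ x in Ω, (‖gradient u x‖ ^ p + V x * |u x| ^ p)

/-- `V` is measurable and bounded on every compact subset of `Ω`. -/
def LocBddPotential {d : ℕ} (Ω : Set (Euc d)) (V : Euc d → ℝ) : Prop :=
  Measurable V ∧ ∀ K : Set (Euc d), K ⊆ Ω → IsCompact K → ∃ C : ℝ, ∀ x ∈ K, |V x| ≤ C

/-- A positive supersolution of `Q'(u) = 0` in `Ω`. -/
def IsPositiveSupersolution {d : ℕ} (Ω : Set (Euc d)) (V : Euc d → ℝ) (p : ℝ)
    (v : Euc d → ℝ) : Prop :=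
  ContDiffOn ℝ 1 v Ω ∧ (∀ x ∈ Ω, 0 < v x) ∧
    ∀ φ : Euc d → ℝ, IsTestFun Ω φ → (∀ x, 0 ≤ φ x) →
      0 ≤ ∫ x in Ω, (‖gradient v x‖ ^ (p - 2) * ⟪gradient v x, gradient φ x⟫
            + V x * v x ^ (p - 1) * φ x)

/-- A positive (weak) solution of `Q'(u) = 0` in `Ω`. -/
def IsPositiveSolution {d : ℕ} (Ω : Set (Euc d)) (V : Euc d → ℝ) (p : ℝ)
    (v : Euc d → ℝ) : Prop :=
  ContDiffOn ℝ 1 v Ω ∧ (∀ x ∈ Ω, 0 < v x) ∧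
    ∀ φ : Euc d → ℝ, IsTestFun Ω φ →
      (∫ x in Ω, (‖gradient v x‖ ^ (p - 2) * ⟪gradient v x, gradient φ x⟫
            + V x * v x ^ (p - 1) * φ x)) = 0

/-- A null sequence for the functional `Q`. -/
def IsNullSequence {d : ℕ} (Ω : Set (Euc d)) (V : Euc d → ℝ) (p : ℝ)
    (u : ℕ → Euc d → ℝ) : Prop :=
  (∀ k, IsTestFun Ω (u k)) ∧ (∀ k x, 0 ≤ u k x) ∧
    ∃ B : Set (Euc d), IsOpen B ∧ IsCompact (closure B) ∧ closure B ⊆ Ω ∧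
      (∀ k, (∫ x in B, u k x ^ p) = 1) ∧
      Tendsto (fun k => energyQ Ω V p (u k)) atTop (𝓝 0)

/-- A ground state of `Q`: a positive `C¹` function on `Ω` which is the limit in
`L^p_loc(Ω)` of a null sequence. -/
def IsGroundState {d : ℕ} (Ω : Set (Euc d)) (V : Euc d → ℝ) (p : ℝ)
    (v : Euc d → ℝ) : Prop :=
  ContDiffOn ℝ 1 v Ω ∧ (∀ x ∈ Ω, 0 < v x) ∧
    ∃ u : ℕ → Euc d → ℝ, IsNullSequence Ω V p u ∧
      ∀ K : Set (Euc d), K ⊆ Ω → IsCompact K →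
        Tendsto (fun k => ∫ x in K, |u k x - v x| ^ p) atTop (𝓝 0)

/-- `Q` has a weighted spectral gap (is strictly positive) in `Ω`. -/
def HasSpectralGap {d : ℕ} (Ω : Set (Euc d)) (V : Euc d → ℝ) (p : ℝ) : Prop :=
  ∃ W : Euc d → ℝ, ContinuousOn W Ω ∧ (∀ x ∈ Ω, 0 < W x) ∧
    ∀ u : Euc d → ℝ, IsTestFun Ω u → (∫ x in Ω, W x * |u x| ^ p) ≤ energyQ Ω V p u

/-- `c_B`: the infimum of `Q(u)` over test functions with `∫_B |u|^p = 1`. -/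
def cB {d : ℕ} (Ω B : Set (Euc d)) (V : Euc d → ℝ) (p : ℝ) : ℝ :=
  sInf { q : ℝ | ∃ u : Euc d → ℝ, IsTestFun Ω u ∧ (∫ x in B, |u x| ^ p) = 1 ∧
    q = energyQ Ω V p u }

/-- The Picone Lagrangian `L(u,v)`. -/
def piconeL {d : ℕ} (p : ℝ) (u v : Euc d → ℝ) (x : Euc d) : ℝ :=
  ‖gradient u x‖ ^ p + (p - 1) * (u x / v x) ^ p * ‖gradient v x‖ ^ p
    - p * (u x / v x) ^ (p - 1) *
        (‖gradient v x‖ ^ (p - 2) * ⟪gradient u x, gradient v x⟫)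


namespace CP

/-! ### Pointwise inequalities -/

lemma pw_convex {E : Type*} [NormedAddCommGroup E] [NormedSpace ℝ E] {p θ D : ℝ} (hp : 1 < p)
    (hθ : 0 ≤ θ) (hθ' : θ ≤ 1 / 2) (X Y : E) (hY : ‖Y‖ ^ p ≤ θ ^ (p - 1) * D) (hD : 0 ≤ D) :
    ‖(1 - 2 * θ) • X + Y‖ ^ p ≤ (1 - θ) * ‖X‖ ^ p + D := by
  rcases hθ.eq_or_lt with h0 | h0
  · subst h0
    rw [Real.zero_rpow (by linarith), zero_mul] at hY
    have h1 : ‖Y‖ ^ p = 0 := le_antisymm hY (by positivity)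
    rw [Real.rpow_eq_zero (norm_nonneg _) (by linarith)] at h1
    rw [norm_eq_zero] at h1
    subst h1
    simp [hD]
  · have h1 : ‖(1 - 2 * θ) • X + Y‖ ≤ (1 - θ) * ‖X‖ + θ * (‖Y‖ / θ) := by
      calc ‖(1 - 2 * θ) • X + Y‖ ≤ ‖(1 - 2 * θ) • X‖ + ‖Y‖ := norm_add_le _ _
        _ = (1 - 2 * θ) * ‖X‖ + θ * (‖Y‖ / θ) := by
            rw [norm_smul, Real.norm_of_nonneg (by linarith)]; field_simp
        _ ≤ _ := by
            have := norm_nonneg X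
            nlinarith
    have h2 := (convexOn_rpow hp.le).2 (norm_nonneg X : ‖X‖ ∈ Set.Ici 0)
      (show ‖Y‖ / θ ∈ Set.Ici 0 from by simp only [Set.mem_Ici]; positivity) (show 0 ≤ 1 - θ by linarith) hθ
      (by ring)
    simp only [smul_eq_mul] at h2
    have h3 : θ * (‖Y‖ / θ) ^ p ≤ D := by
      rw [Real.div_rpow (norm_nonneg _) hθ]
      have e : θ ^ p = θ ^ (p - 1) * θ := by
        rw [Real.rpow_sub_one h0.ne']; field_simp
      have : θ * (‖Y‖ ^ p / θ ^ p) = ‖Y‖ ^ p / θ ^ (p - 1) := by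
        rw [e]; have := Real.rpow_pos_of_pos h0 (p - 1); field_simp
      rw [this, div_le_iff₀ (Real.rpow_pos_of_pos h0 _)]
      linarith
    calc _ ≤ ((1 - θ) * ‖X‖ + θ * (‖Y‖ / θ)) ^ p :=
          Real.rpow_le_rpow (norm_nonneg _) h1 (by linarith)
      _ ≤ _ := by linarith

lemma modulus {E : Type*} [NormedAddCommGroup E] [InnerProductSpace ℝ E] [FiniteDimensional ℝ E]
    {p : ℝ} (hp : 1 < p) {η : ℝ} (hη : 0 < η) :
    ∃ τ : ℝ, 0 < τ ∧ τ ≤ 1 ∧ ∀ h, 0 ≤ h → h ≤ τ → ∀ x y : E,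
      |‖x + h • y‖ ^ p - ‖x‖ ^ p - h * (p * ‖x‖ ^ (p - 2) * ⟪x, y⟫)| ≤
        h * η * (‖x‖ + ‖y‖) ^ p := by
  have hcd := contDiff_norm_rpow (E := E) hp
  have hc : Continuous (fderiv ℝ (fun x : E => ‖x‖ ^ p)) := hcd.continuous_fderiv (by norm_num)
  have huc : UniformContinuousOn (fderiv ℝ (fun x : E => ‖x‖ ^ p)) (Metric.closedBall 0 2) :=
    (isCompact_closedBall _ _).uniformContinuousOn_of_continuous hc.continuousOn
  rw [Metric.uniformContinuousOn_iff] at huc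
  obtain ⟨δ, hδ, hδ'⟩ := huc η hη
  refine ⟨min 1 (δ / 2), by positivity, min_le_left _ _, ?_⟩
  intro h h0 h1 x y
  have hh1 : h ≤ 1 := h1.trans (min_le_left _ _)
  have hh2 : h < δ := by linarith [h1.trans (min_le_right _ _)]
  -- normalized version
  have key : ∀ x y : E, ‖x‖ + ‖y‖ = 1 →
      |‖x + h • y‖ ^ p - ‖x‖ ^ p - h * (p * ‖x‖ ^ (p - 2) * ⟪x, y⟫)| ≤ h * η := by
    intro x y hxy
    have hx1 : ‖x‖ ≤ 1 := by linarith [norm_nonneg y]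
    have hy1 : ‖y‖ ≤ 1 := by linarith [norm_nonneg x]
    have hbd : ∀ w ∈ segment ℝ x (x + h • y), ‖fderiv ℝ (fun x : E => ‖x‖ ^ p) w -
        fderiv ℝ (fun x : E => ‖x‖ ^ p) x‖ ≤ η := by
      intro w hw
      rw [segment_eq_image'] at hw
      obtain ⟨t, ⟨ht0, ht1⟩, rfl⟩ := hw
      have hn : ‖t • (x + h • y - x)‖ ≤ h := by
        rw [add_sub_cancel_left, norm_smul, norm_smul, Real.norm_of_nonneg ht0,
          Real.norm_of_nonneg h0]
        calc t * (h * ‖y‖) ≤ 1 * (h * 1) := by gcongr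
          _ = h := by ring
      rw [← dist_eq_norm]
      refine (hδ' _ ?_ _ ?_ ?_).le
      · rw [mem_closedBall_zero_iff]
        exact (norm_add_le _ _).trans (by linarith)
      · rw [mem_closedBall_zero_iff]; linarith
      · rw [dist_eq_norm, add_sub_cancel_left]; linarith
    have := (convex_segment x (x + h • y)).norm_image_sub_le_of_norm_fderiv_le'
      (𝕜 := ℝ) (f := fun x : E => ‖x‖ ^ p) (fun w _ => (differentiable_norm_rpow hp) w) hbd
      (left_mem_segment _ _ _) (right_mem_segment _ _ _)
    rw [add_sub_cancel_left, (hasFDerivAt_norm_rpow x hp).fderiv] at this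
    simp only [_root_.smul_apply, innerSL_apply_apply, smul_eq_mul, inner_smul_right,
      Real.norm_eq_abs] at this
    have e : h * (p * ‖x‖ ^ (p - 2) * ⟪x, y⟫) = p * ‖x‖ ^ (p - 2) * (h * ⟪x, y⟫) := by ring
    rw [e]
    refine this.trans ?_
    rw [norm_smul, Real.norm_of_nonneg h0]
    nlinarith [mul_nonneg hη.le h0]
  set N := ‖x‖ + ‖y‖ with hN
  have hN0 : 0 ≤ N := by positivity
  rcases hN0.eq_or_lt with h00 | hNp
  · have hx : x = 0 := by rw [← norm_eq_zero]; linarith [norm_nonneg x, norm_nonneg y]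
    have hy : y = 0 := by rw [← norm_eq_zero]; linarith [norm_nonneg x, norm_nonneg y]
    subst hx; subst hy
    simp
    positivity
  · have k := key (N⁻¹ • x) (N⁻¹ • y) (by
      rw [norm_smul, norm_smul, Real.norm_of_nonneg (by positivity), ← mul_add, ← hN]
      field_simp)
    have e1 : N⁻¹ • x + h • (N⁻¹ • y) = N⁻¹ • (x + h • y) := by
      rw [smul_add, smul_comm]
    rw [e1, norm_smul, norm_smul, Real.norm_of_nonneg (by positivity), real_inner_smul_left,
      real_inner_smul_right, Real.mul_rpow (by positivity) (norm_nonneg _),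
      Real.mul_rpow (by positivity) (norm_nonneg _),
      Real.mul_rpow (by positivity) (norm_nonneg _)] at k
    have e2 : N⁻¹ ^ (p - 2) * N⁻¹ * N⁻¹ = N⁻¹ ^ p := by
      rw [mul_assoc, ← sq, ← Real.rpow_natCast, ← Real.rpow_add (by positivity)]
      norm_num
    have e3 : N⁻¹ ^ p * ‖x + h • y‖ ^ p - N⁻¹ ^ p * ‖x‖ ^ p -
        h * (p * (N⁻¹ ^ (p - 2) * ‖x‖ ^ (p - 2)) * (N⁻¹ * (N⁻¹ * ⟪x, y⟫))) =
        N⁻¹ ^ p * (‖x + h • y‖ ^ p - ‖x‖ ^ p - h * (p * ‖x‖ ^ (p - 2) * ⟪x, y⟫)) := by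
      rw [← e2]; ring
    rw [e3, abs_mul, abs_of_pos (by positivity), Real.inv_rpow hN0, inv_mul_le_iff₀ (by positivity)] at k
    linarith

/-! ### Gradient calculus -/

section grad
variable {d : ℕ} {f g : Euc d → ℝ} {f' g' : Euc d} {x : Euc d}

lemma hg_add (hf : HasGradientAt f f' x) (hg : HasGradientAt g g' x) :
    HasGradientAt (fun y => f y + g y) (f' + g') x := by
  rw [hasGradientAt_iff_hasFDerivAt] at *
  rw [map_add]; exact hf.add hg

lemma hg_mul (hf : HasGradientAt f f' x) (hg : HasGradientAt g g' x) :
    HasGradientAt (fun y => f y * g y) (f x • g' + g x • f') x := by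
  rw [hasGradientAt_iff_hasFDerivAt] at *
  rw [map_add]
  have := hf.mul hg
  refine this.congr_fderiv ?_
  ext y; simp

lemma hg_comp {h : ℝ → ℝ} {h' : ℝ} (hh : HasDerivAt h h' (f x)) (hf : HasGradientAt f f' x) :
    HasGradientAt (fun y => h (f y)) (h' • f') x := by
  rw [hasGradientAt_iff_hasFDerivAt] at *
  have := hh.comp_hasFDerivAt x hf
  refine this.congr_fderiv ?_
  ext; simp

lemma hg_const (c : ℝ) : HasGradientAt (fun _ => c) (0 : Euc d) x := by
  rw [hasGradientAt_iff_hasFDerivAt, map_zero]; exact hasFDerivAt_const _ _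

lemma hg_const_mul (c : ℝ) (hf : HasGradientAt f f' x) :
    HasGradientAt (fun y => c * f y) (c • f') x := by
  have := hg_mul (hg_const (x := x) c) hf
  simpa using this

lemma hg_of_contDiff (hf : ContDiff ℝ 1 f) (x : Euc d) : HasGradientAt f (gradient f x) x :=
  (hf.differentiable (by norm_num) x).hasGradientAt

lemma norm_grad (f : Euc d → ℝ) (x : Euc d) : ‖gradient f x‖ = ‖fderiv ℝ f x‖ := by
  rw [← toDual_gradient, LinearIsometryEquiv.norm_map]

lemma cont_grad (hf : ContDiff ℝ 1 f) : Continuous (gradient f) := by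
  unfold gradient
  exact (LinearIsometryEquiv.continuous _).comp (hf.continuous_fderiv (by norm_num))

lemma grad_zero_of_nmem (hx : x ∉ tsupport f) : gradient f x = 0 := by
  have : fderiv ℝ f x = 0 := by
    by_contra h
    exact hx (support_fderiv_subset ℝ h)
  unfold gradient
  rw [this, map_zero]

lemma hcs_grad (hf : HasCompactSupport f) : HasCompactSupport (gradient f) := by
  refine HasCompactSupport.intro hf (fun x hx => grad_zero_of_nmem hx)

end grad

/-! ### Test functions and integrability -/

section test
variable {d : ℕ} {Ω : Set (Euc d)} {V : Euc d → ℝ} {p : ℝ} {u f : Euc d → ℝ}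

lemma test_c1 (hu : IsTestFun Ω u) : ContDiff ℝ 1 u :=
  hu.1.of_le (by exact_mod_cast le_top)

lemma int_V (hV : LocBddPotential Ω V) (hf : Continuous f) (hfc : HasCompactSupport f)
    (hfs : tsupport f ⊆ Ω) : Integrable (fun x => V x * f x) := by
  obtain ⟨C, hC⟩ := hV.2 _ hfs hfc
  have hi : Integrable f := hf.integrable_of_hasCompactSupport hfc
  refine (hi.norm.const_mul C).mono' (hV.1.aestronglyMeasurable.mul hf.aestronglyMeasurable) ?_
  refine Eventually.of_forall (fun x => ?_)
  by_cases hx : x ∈ tsupport f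
  · rw [norm_mul]
    exact mul_le_mul_of_nonneg_right (hC x hx) (norm_nonneg _)
  · simp [image_eq_zero_of_notMem_tsupport hx]

lemma abs_rpow_props (hp : 1 < p) (hu : IsTestFun Ω u) : Continuous (fun x => |u x| ^ p) ∧
    HasCompactSupport (fun x => |u x| ^ p) ∧ tsupport (fun x => |u x| ^ p) ⊆ Ω := by
  refine ⟨hu.1.continuous.abs.rpow_const (fun _ => Or.inr (by linarith)), ?_, ?_⟩
  · exact hu.2.1.comp_left (g := fun t : ℝ => |t| ^ p) (by simp [Real.zero_rpow (by linarith : p ≠ 0)])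
  · refine (closure_mono ?_).trans hu.2.2
    intro x hx
    simp only [Function.mem_support] at *
    intro h; apply hx; simp [h, Real.zero_rpow (by linarith : p ≠ 0)]

lemma int_gradp (hp : 1 < p) (hu : IsTestFun Ω u) :
    Integrable (fun x => ‖gradient u x‖ ^ p) := by
  refine Continuous.integrable_of_hasCompactSupport
    ((cont_grad (test_c1 hu)).norm.rpow_const (fun _ => Or.inr (by linarith))) ?_
  exact (hcs_grad hu.2.1).comp_left (g := fun t : Euc d => ‖t‖ ^ p)
    (by simp [Real.zero_rpow (by linarith : p ≠ 0)])

lemma int_Vp (hp : 1 < p) (hV : LocBddPotential Ω V) (hu : IsTestFun Ω u) :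
    Integrable (fun x => V x * |u x| ^ p) :=
  int_V hV (abs_rpow_props hp hu).1 (abs_rpow_props hp hu).2.1 (abs_rpow_props hp hu).2.2

lemma energy_eq (hp : 1 < p) (hu : IsTestFun Ω u) :
    energyQ Ω V p u = ∫ x, (‖gradient u x‖ ^ p + V x * |u x| ^ p) := by
  unfold energyQ
  refine setIntegral_eq_integral_of_forall_compl_eq_zero (fun x hx => ?_)
  have hx' : x ∉ tsupport u := fun h => hx (hu.2.2 h)
  simp [grad_zero_of_nmem hx', image_eq_zero_of_notMem_tsupport hx',
    Real.zero_rpow (by linarith : p ≠ 0)]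

/-- Comparison principle behind both Caccioppoli estimates. -/
lemma compare (hp : 1 < p) (hV : LocBddPotential Ω V)
    (hQ : ∀ u : Euc d → ℝ, IsTestFun Ω u → 0 ≤ energyQ Ω V p u) {σ a b : Euc d → ℝ}
    (hu : IsTestFun Ω u) (hσ : IsTestFun Ω σ) (ha : Integrable a) (hb : Integrable b)
    (h : ∀ x, ‖gradient σ x‖ ^ p + V x * |σ x| ^ p ≤
      ‖gradient u x‖ ^ p + V x * |u x| ^ p - a x + b x) :
    ∫ x, a x ≤ energyQ Ω V p u + ∫ x, b x := by
  have h1 := hQ σ hσ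
  rw [energy_eq hp hσ] at h1
  rw [energy_eq hp hu]
  have hi := (int_gradp hp hu).add (int_Vp hp hV hu)
  have hiσ := (int_gradp hp hσ).add (int_Vp hp hV hσ)
  have h2 := integral_mono hiσ ((hi.sub ha).add hb) h
  have e : ∫ x, ((fun x => ‖gradient u x‖ ^ p) + (fun x => V x * |u x| ^ p) - a + b) x =
      (∫ x, (‖gradient u x‖ ^ p + V x * |u x| ^ p)) - (∫ x, a x) + ∫ x, b x := by
    rw [integral_add' (hi.sub ha) hb, integral_sub' hi ha]; rfl
  rw [e] at h2
  have h3 : ∫ x, ((fun x => ‖gradient σ x‖ ^ p) + fun x => V x * |σ x| ^ p) x =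
    ∫ x, (‖gradient σ x‖ ^ p + V x * |σ x| ^ p) := rfl
  rw [h3] at h2
  linarith

end test
end CP

namespace CP

lemma chi_pow {χ p : ℝ} {k : ℕ} (h0 : 0 ≤ χ) (h1 : χ ≤ 1) (hp : 1 < p) (hk : p ≤ k) (hk2 : 2 ≤ k) :
    (χ ^ (k - 1)) ^ p ≤ (χ ^ k) ^ (p - 1) := by
  rcases h0.eq_or_lt with h | h
  · subst h
    rw [zero_pow (by omega), zero_pow (by omega), Real.zero_rpow (by linarith),
      Real.zero_rpow (by linarith)]
  · rw [← Real.rpow_natCast, ← Real.rpow_natCast, ← Real.rpow_mul h0, ← Real.rpow_mul h0]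
    refine Real.rpow_le_rpow_of_exponent_ge h h1 ?_
    rw [Nat.cast_sub (by omega)]
    push_cast
    nlinarith

lemma rpow_diff_le {a b p : ℝ} (ha : 0 ≤ a) (hb : 0 ≤ b) (hp : 1 < p) :
    (a + b) ^ p - a ^ p ≤ p * b * (a + b) ^ (p - 1) := by
  rcases (add_nonneg ha hb).eq_or_lt with h | h
  · have ha' : a = 0 := by linarith
    have hb' : b = 0 := by linarith
    subst ha' hb'; simp
  · have h1 := one_add_mul_self_le_rpow_one_add (s := -(b / (a + b))) (p := p) (by
      rw [neg_le_neg_iff, div_le_one h]; linarith) hp.le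
    have e : 1 + -(b / (a + b)) = a / (a + b) := by field_simp; ring
    rw [e, Real.div_rpow ha h.le, le_div_iff₀ (by positivity)] at h1
    have e2 : (a + b) ^ (p - 1) = (a + b) ^ p / (a + b) := Real.rpow_sub_one h.ne' p
    rw [e2]
    have e3 : (1 + p * -(b / (a + b))) * (a + b) ^ p = (a + b) ^ p - p * b * ((a + b) ^ p / (a + b)) := by
      field_simp; ring
    linarith

variable {d : ℕ} {Ω : Set (Euc d)} {V : Euc d → ℝ} {p : ℝ}

lemma test_add_mul {u χ g : Euc d → ℝ} (hu : IsTestFun Ω u) (hχ : IsTestFun Ω χ)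
    (hg : ContDiff ℝ (⊤ : ℕ∞) g) : IsTestFun Ω (fun x => u x + χ x * g x) := by
  refine ⟨hu.1.add (hχ.1.mul hg), hu.2.1.add (hχ.2.1.mul_right), ?_⟩
  refine (tsupport_add u (fun x => χ x * g x)).trans (Set.union_subset hu.2.2 ?_)
  exact (tsupport_mul_subset_left).trans hχ.2.2

lemma cacc (hp : 1 < p) (hV : LocBddPotential Ω V)
    (hQ : ∀ u : Euc d → ℝ, IsTestFun Ω u → 0 ≤ energyQ Ω V p u)
    {k : ℕ} (hk : p ≤ k) (hk2 : 2 ≤ k) {u χ : Euc d → ℝ} (hu : IsTestFun Ω u) (hu0 : ∀ x, 0 ≤ u x)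
    (hχ : IsTestFun Ω χ) (hχ0 : ∀ x, 0 ≤ χ x) (hχ1 : ∀ x, χ x ≤ 1)
    {Λ : ℝ} (hΛ : ∀ x ∈ tsupport χ, |V x| ≤ Λ) :
    ∫ x, χ x ^ k * ‖gradient u x‖ ^ p / 2 ≤ energyQ Ω V p u +
      ∫ x, (2 ^ (p - 1) * k ^ p * (u x ^ p * ‖gradient χ x‖ ^ p) + Λ * p * (χ x ^ k * u x ^ p)) := by
  have hp0 : p ≠ 0 := by linarith
  have hgχ : Continuous (fun x => ‖gradient χ x‖ ^ p) :=
    (cont_grad (test_c1 hχ)).norm.rpow_const (fun _ => Or.inr (by linarith))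
  have hgu : Continuous (fun x => ‖gradient u x‖ ^ p) :=
    (cont_grad (test_c1 hu)).norm.rpow_const (fun _ => Or.inr (by linarith))
  have huc : Continuous u := hu.1.continuous
  have hχc : Continuous χ := hχ.1.continuous
  have hup : Continuous (fun x => u x ^ p) := huc.rpow_const (fun _ => Or.inr (by linarith))
  have hup0 : HasCompactSupport (fun x => u x ^ p) :=
    hu.2.1.comp_left (g := fun t : ℝ => t ^ p) (by simp [hp0])
  have ht : IsTestFun Ω (fun x => u x + χ x * (-(χ x ^ (k - 1)) * u x)) :=
    test_add_mul hu hχ (((hχ.1.pow _).neg).mul hu.1)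
  refine compare hp hV hQ hu ht ?_ ?_ ?_
  · refine Continuous.integrable_of_hasCompactSupport (by fun_prop) ?_
    refine HasCompactSupport.intro hu.2.1 (fun x hx => ?_)
    simp [grad_zero_of_nmem hx, hp0]
  · refine Continuous.integrable_of_hasCompactSupport (by fun_prop) ?_
    refine HasCompactSupport.intro hu.2.1 (fun x hx => ?_)
    simp [image_eq_zero_of_notMem_tsupport hx, hp0]
  · intro x
    have hχk : HasGradientAt (fun y => χ y ^ k) ((k * χ x ^ (k - 1)) • gradient χ x) x :=
      hg_comp (hasDerivAt_pow k (χ x)) (hg_of_contDiff (test_c1 hχ) x)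
    have hg := hg_add (hg_of_contDiff (test_c1 hu) x)
      (hg_const_mul (-1) (hg_mul hχk (hg_of_contDiff (test_c1 hu) x)))
    have hfe : (fun y => u y + χ y * (-(χ y ^ (k - 1)) * u y)) =
        (fun y => u y + (-1) * (χ y ^ k * u y)) := by
      ext y
      obtain ⟨m, rfl⟩ : ∃ m, k = m + 1 := ⟨k - 1, by omega⟩
      simp only [Nat.add_sub_cancel]; ring
    have hfx := congrFun hfe x
    rw [hfx, hfe, hg.gradient]
    set η := χ x ^ k with hη
    have hη0 : 0 ≤ η := pow_nonneg (hχ0 x) _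
    have hη1 : η ≤ 1 := pow_le_one₀ (hχ0 x) (hχ1 x)
    have ev : gradient u x + (-1 : ℝ) • (η • gradient u x + u x • ((k * χ x ^ (k - 1)) • gradient χ x))
      = (1 - 2 * (η / 2)) • gradient u x + (-(u x * (k * χ x ^ (k - 1)))) • gradient χ x := by
      module
    have hux := hu0 x
    have h1 := pw_convex (θ := η / 2) (D := 2 ^ (p - 1) * k ^ p * (u x ^ p * ‖gradient χ x‖ ^ p))
      hp (by positivity) (by linarith) (gradient u x)
      ((-(u x * (k * χ x ^ (k - 1)))) • gradient χ x) (by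
        have hc0 := hχ0 x
        rw [norm_smul, norm_neg, Real.norm_of_nonneg (by positivity), Real.mul_rpow (by positivity) (by positivity),
          Real.mul_rpow (by positivity) (by positivity), Real.mul_rpow (by positivity) (by positivity),
          Real.div_rpow hη0 (by norm_num)]
        have := chi_pow (hχ0 x) (hχ1 x) hp hk hk2
        have e : η ^ (p - 1) / 2 ^ (p - 1) * (2 ^ (p - 1) * k ^ p * (u x ^ p * ‖gradient χ x‖ ^ p)) =
          u x ^ p * (k ^ p * η ^ (p - 1)) * ‖gradient χ x‖ ^ p := by
          have : (2:ℝ) ^ (p - 1) ≠ 0 := by positivity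
          field_simp
        rw [e]
        gcongr) (by positivity)
    rw [ev]
    have hs : |u x + -1 * (η * u x)| = (1 - η) * u x := by
      rw [abs_of_nonneg (by nlinarith)]; ring
    rw [hs, abs_of_nonneg hux, Real.mul_rpow (by linarith) hux]
    have hB := one_add_mul_self_le_rpow_one_add (s := -η) (p := p) (by linarith) hp.le
    have hB2 : (1 - η) ^ p ≤ 1 := Real.rpow_le_one (by linarith) (by linarith) (by linarith)
    have hVb : V x * ((1 - η) ^ p * u x ^ p) ≤ V x * u x ^ p + Λ * p * (η * u x ^ p) := by
      by_cases hx : x ∈ tsupport χ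
      · have h2 := hΛ x hx
        have hΛ0 : 0 ≤ Λ := (abs_nonneg _).trans h2
        have h3 : -V x ≤ Λ := (neg_le_abs _).trans h2
        have h4 : 1 - (1 - η) ^ p ≤ p * η := by
          have : 1 + -η = 1 - η := by ring
          rw [this] at hB; linarith
        have hup0 : 0 ≤ u x ^ p := by positivity
        have h5 : (-V x) * (1 - (1 - η) ^ p) ≤ Λ * (p * η) := by
          calc (-V x) * (1 - (1 - η) ^ p) ≤ Λ * (1 - (1 - η) ^ p) := by gcongr
            _ ≤ _ := by gcongr
        nlinarith
      · have : η = 0 := by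
          rw [hη, image_eq_zero_of_notMem_tsupport hx, zero_pow (by omega)]
        simp [this]
    linarith

set_option maxHeartbeats 1000000 in
lemma logcacc (hp : 1 < p) (hV : LocBddPotential Ω V)
    (hQ : ∀ u : Euc d → ℝ, IsTestFun Ω u → 0 ≤ energyQ Ω V p u)
    {k : ℕ} (hk : p ≤ k) (hk2 : 2 ≤ k) {u χ : Euc d → ℝ} (hu : IsTestFun Ω u) (hu0 : ∀ x, 0 ≤ u x)
    (hχ : IsTestFun Ω χ) (hχ0 : ∀ x, 0 ≤ χ x) (hχ1 : ∀ x, χ x ≤ 1)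
    {Λ : ℝ} (hΛ : ∀ x ∈ tsupport χ, |V x| ≤ Λ) {s : ℝ} (hs : 0 < s) :
    ∫ x, (p - 1) / (2 * p) * s ^ p * (χ x ^ k * (‖gradient u x‖ ^ p / (u x + s) ^ p)) ≤
      energyQ Ω V p u +
      ∫ x, s ^ p * ((((p - 1) / 2)⁻¹ ^ (p - 1) * k ^ p / p) * ‖gradient χ x‖ ^ p + Λ * χ x ^ k) := by
  have hp0 : p ≠ 0 := by linarith
  have hpp : 0 < p := by linarith
  have hz : ∀ x, 0 < u x + s := fun x => by linarith [hu0 x]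
  have hgχ : Continuous (fun x => ‖gradient χ x‖ ^ p) :=
    (cont_grad (test_c1 hχ)).norm.rpow_const (fun _ => Or.inr (by linarith))
  have hgu : Continuous (fun x => ‖gradient u x‖ ^ p) :=
    (cont_grad (test_c1 hu)).norm.rpow_const (fun _ => Or.inr (by linarith))
  have huc : Continuous u := hu.1.continuous
  have hχc : Continuous χ := hχ.1.continuous
  have hzp : Continuous (fun x => (u x + s) ^ p) := (huc.add continuous_const).rpow_const (fun _ => Or.inr (by linarith))
  have hzs : ContDiff ℝ (⊤ : ℕ∞) (fun x => (u x + s) ^ (1 - p)) := by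
    refine (hu.1.add contDiff_const).rpow_const_of_ne (fun x => (hz x).ne')
  have ht : IsTestFun Ω (fun x => u x + χ x * (s ^ p / p * (χ x ^ (k - 1) * (u x + s) ^ (1 - p)))) :=
    test_add_mul hu hχ (contDiff_const.mul ((hχ.1.pow _).mul hzs))
  refine compare hp hV hQ hu ht ?_ ?_ ?_
  · refine Continuous.integrable_of_hasCompactSupport ?_ ?_
    · have : Continuous (fun x => ‖gradient u x‖ ^ p / (u x + s) ^ p) :=
        hgu.div hzp (fun x => (Real.rpow_pos_of_pos (hz x) _).ne')
      fun_prop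
    refine HasCompactSupport.intro hu.2.1 (fun x hx => ?_)
    simp [grad_zero_of_nmem hx, hp0]
  · refine Continuous.integrable_of_hasCompactSupport (by fun_prop) ?_
    refine HasCompactSupport.intro hχ.2.1 (fun x hx => ?_)
    simp [grad_zero_of_nmem hx, image_eq_zero_of_notMem_tsupport hx, hp0]
    right; right; omega
  · intro x
    have hχk : HasGradientAt (fun y => χ y ^ k) ((k * χ x ^ (k - 1)) • gradient χ x) x :=
      hg_comp (hasDerivAt_pow k (χ x)) (hg_of_contDiff (test_c1 hχ) x)
    have hzg : HasGradientAt (fun y => (u y + s) ^ (1 - p))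
        (((1 - p) * (u x + s) ^ (1 - p - 1)) • (gradient u x + 0)) x :=
      hg_comp (f := fun y => u y + s) (h := fun t => t ^ (1 - p))
        (Real.hasDerivAt_rpow_const (Or.inl (hz x).ne'))
        (hg_add (hg_of_contDiff (test_c1 hu) x) (hg_const s))
    have hg := hg_add (hg_of_contDiff (test_c1 hu) x)
      (hg_const_mul (s ^ p / p) (hg_mul hχk hzg))
    have hfe : (fun y => u y + χ y * (s ^ p / p * (χ y ^ (k - 1) * (u y + s) ^ (1 - p)))) =
        (fun y => u y + (s ^ p / p) * (χ y ^ k * (u y + s) ^ (1 - p))) := by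
      ext y
      obtain ⟨m, rfl⟩ : ∃ m, k = m + 1 := ⟨k - 1, by omega⟩
      simp only [Nat.add_sub_cancel]; ring
    have hfx := congrFun hfe x
    rw [hfx, hfe, hg.gradient]
    set η := χ x ^ k with hη
    have hη0 : 0 ≤ η := pow_nonneg (hχ0 x) _
    have hη1 : η ≤ 1 := pow_le_one₀ (hχ0 x) (hχ1 x)
    set z := u x + s with hzdef
    have hz0 : 0 < z := hz x
    have hsz : s ≤ z := by linarith [hu0 x]
    set lam := s ^ p / p * z ^ (-p) with hlam
    have hlam0 : 0 < lam := by positivity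
    have hlamz : lam * z ^ p = s ^ p / p := by
      rw [hlam, mul_assoc, ← Real.rpow_add hz0]; simp
    have e1 : z ^ (1 - p) = z ^ (-p) * z := by
      rw [← Real.rpow_add_one hz0.ne']; ring_nf
    have e2 : z ^ (1 - p - 1) = z ^ (-p) := by ring_nf
    have hlam1 : p * lam ≤ 1 := by
      have : p * lam = s ^ p / z ^ p := by
        rw [hlam, Real.rpow_neg hz0.le]; field_simp
      rw [this, div_le_one (by positivity)]
      exact Real.rpow_le_rpow hs.le hsz hpp.le
    have ev : gradient u x + (s ^ p / p) • (η • (((1 - p) * z ^ (1 - p - 1)) • (gradient u x + 0)) +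
        z ^ (1 - p) • ((k * χ x ^ (k - 1)) • gradient χ x))
      = (1 - 2 * ((p - 1) / 2 * (lam * η))) • gradient u x +
        (lam * z * (k * χ x ^ (k - 1))) • gradient χ x := by
      rw [e1, e2, add_zero]
      simp only [hlam]
      module
    have hux := hu0 x
    have hθ : (p - 1) / 2 * (lam * η) ≤ 1 / 2 := by
      have h6 : lam * η ≤ lam := by nlinarith
      have h7 : (p - 1) * (lam * η) ≤ (p - 1) * lam := by gcongr
      nlinarith
    have hp1 : 0 < (p - 1) / 2 := by linarith
    have h1 := pw_convex (θ := (p - 1) / 2 * (lam * η))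
      (D := s ^ p * ((((p - 1) / 2)⁻¹ ^ (p - 1) * k ^ p / p) * ‖gradient χ x‖ ^ p))
      hp (by positivity) hθ (gradient u x)
      ((lam * z * (k * χ x ^ (k - 1))) • gradient χ x) (by
        have hc0 := hχ0 x
        have m1 : (lam * z * (k * χ x ^ (k - 1)) * ‖gradient χ x‖) ^ p =
            lam ^ p * z ^ p * (k ^ p * (χ x ^ (k - 1)) ^ p) * ‖gradient χ x‖ ^ p := by
          rw [Real.mul_rpow (x := lam * z * (k * χ x ^ (k - 1))) (by positivity) (by positivity),
            Real.mul_rpow (x := lam * z) (by positivity) (by positivity),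
            Real.mul_rpow (x := lam) (by positivity) (by positivity),
            Real.mul_rpow (x := (k:ℝ)) (by positivity) (by positivity)]
        have m2 : ((p - 1) / 2 * (lam * η)) ^ (p - 1) =
            ((p - 1) / 2) ^ (p - 1) * (lam ^ (p - 1) * η ^ (p - 1)) := by
          rw [Real.mul_rpow (x := (p - 1) / 2) (by positivity) (by positivity),
            Real.mul_rpow (x := lam) (by positivity) (by positivity)]
        rw [norm_smul, Real.norm_of_nonneg (by positivity), m1, m2, Real.inv_rpow (by positivity)]
        have := chi_pow (hχ0 x) (hχ1 x) hp hk hk2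
        have e3 : lam ^ p = lam ^ (p - 1) * lam := by
          rw [Real.rpow_sub_one hlam0.ne']; field_simp
        have hq : 0 < ((p - 1) / 2) ^ (p - 1) := by positivity
        have e : ((p - 1) / 2) ^ (p - 1) * (lam ^ (p - 1) * η ^ (p - 1)) *
            (s ^ p * ((((p - 1) / 2) ^ (p - 1))⁻¹ * k ^ p / p * ‖gradient χ x‖ ^ p)) =
          lam ^ (p - 1) * (s ^ p / p) * (k ^ p * η ^ (p - 1)) * ‖gradient χ x‖ ^ p := by
          field_simp
        rw [e, ← hlamz, e3, mul_assoc (lam ^ (p - 1)) lam]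
        gcongr) (by
          have : 0 ≤ ((p - 1) / 2)⁻¹ := by positivity
          positivity)
    rw [ev]
    have hφ : s ^ p / p * (η * z ^ (1 - p)) = lam * η * z := by
      rw [hlam, e1]; ring
    have hφ0 : 0 ≤ lam * η * z := by positivity
    have hσz : u x + lam * η * z ≤ z := by
      have : lam * η * z ≤ s := by
        have a1 : lam * z ≤ s := by
          have : lam * z = s * (s ^ (p-1) / z ^ (p - 1)) / p := by
            rw [hlam, Real.rpow_neg hz0.le, Real.rpow_sub_one hs.ne', Real.rpow_sub_one hz0.ne']
            field_simp
          rw [this, div_le_iff₀ hpp]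
          have : s ^ (p-1) / z ^ (p - 1) ≤ 1 := by
            rw [div_le_one (by positivity)]
            exact Real.rpow_le_rpow hs.le hsz (by linarith)
          nlinarith
        nlinarith [mul_pos hlam0 hz0]
      linarith
    rw [hφ, abs_of_nonneg (by positivity : 0 ≤ u x + lam * η * z), abs_of_nonneg hux]
    have hVb : V x * (u x + lam * η * z) ^ p ≤ V x * u x ^ p + s ^ p * (Λ * η) := by
      by_cases hx : x ∈ tsupport χ
      · have h2 := hΛ x hx
        have hΛ0 : 0 ≤ Λ := (abs_nonneg _).trans h2
        have h3 : V x ≤ Λ := (le_abs_self _).trans h2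
        have h4 := rpow_diff_le hux hφ0 hp
        have h5 : p * (lam * η * z) * (u x + lam * η * z) ^ (p - 1) ≤ s ^ p * η := by
          calc p * (lam * η * z) * (u x + lam * η * z) ^ (p - 1) ≤
              p * (lam * η * z) * z ^ (p - 1) := by gcongr
            _ = p * (lam * z ^ p) * η := by rw [Real.rpow_sub_one hz0.ne']; field_simp
            _ = _ := by rw [hlamz]; field_simp
        have h6 : 0 ≤ (u x + lam * η * z) ^ p - u x ^ p := by
          rw [sub_nonneg]; exact Real.rpow_le_rpow hux (by linarith) hpp.le
        have h7 : V x * ((u x + lam * η * z) ^ p - u x ^ p) ≤ Λ * (s ^ p * η) := by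
          calc _ ≤ Λ * ((u x + lam * η * z) ^ p - u x ^ p) := by gcongr
            _ ≤ _ := by gcongr; linarith
        have h8 : Λ * (s ^ p * η) = s ^ p * (Λ * η) := by ring
        rw [mul_sub] at h7
        linarith
      · have : η = 0 := by
          rw [hη, image_eq_zero_of_notMem_tsupport hx, zero_pow (by omega)]
        simp [this]
    have e9 : (p - 1) / (2 * p) * s ^ p * (η * (‖gradient u x‖ ^ p / z ^ p)) =
        (p - 1) / 2 * (lam * η) * ‖gradient u x‖ ^ p := by
      rw [hlam, Real.rpow_neg hz0.le]; field_simp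
    rw [e9]
    linarith

end CP

namespace CP

section poinc
open scoped ENNReal
variable {d : ℕ}

lemma lint_affine (B : Set (Euc d)) (hB : MeasurableSet B) (hc : Convex ℝ B) (g : Euc d → ℝ≥0∞)
    (hg : Measurable g) {t : ℝ} (ht : 1 / 2 ≤ t) (ht1 : t ≤ 1) {y : Euc d} (hy : y ∈ B) :
    ∫⁻ z in B, g ((1 - t) • y + t • z) ≤ 2 ^ d * ∫⁻ w in B, g w := by
  rw [← lintegral_indicator hB, ← lintegral_indicator hB]
  have h1 : ∀ z, B.indicator (fun z => g ((1 - t) • y + t • z)) z ≤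
      B.indicator g ((1 - t) • y + t • z) := by
    intro z
    by_cases hz : z ∈ B
    · have : (1 - t) • y + t • z ∈ B := hc hy hz (by linarith) (by linarith) (by ring)
      simp [hz, this]
    · simp [hz]
  refine (lintegral_mono h1).trans ?_
  have hm : Measurable (B.indicator g) := hg.indicator hB
  have h2 : ∫⁻ z, B.indicator g ((1 - t) • y + t • z) =
      ∫⁻ z, B.indicator g ((1 - t) • y + z) ∂(Measure.map (fun z => t • z) (volume : Measure (Euc d))) := by
    rw [lintegral_map (f := fun z => B.indicator g ((1 - t) • y + z)) (hm.comp (measurable_const_add _))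
      (measurable_const_smul t)]
  rw [h2, Measure.map_addHaar_smul _ (by linarith : t ≠ 0), lintegral_smul_measure,
    lintegral_add_left_eq_self]
  rw [smul_eq_mul]
  gcongr
  rw [finrank_euclideanSpace, Fintype.card_fin, abs_of_nonneg (by positivity)]
  have : (t ^ d)⁻¹ ≤ 2 ^ d := by
    rw [← inv_pow]
    have : t⁻¹ ≤ 2 := by rw [inv_le_comm₀ (by linarith) (by norm_num)]; linarith
    have : 0 ≤ t⁻¹ := by positivity
    gcongr
  calc ENNReal.ofReal ((t ^ d)⁻¹) ≤ ENNReal.ofReal (2 ^ d) := ENNReal.ofReal_le_ofReal this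
    _ = 2 ^ d := by rw [ENNReal.ofReal_pow (by norm_num)]; simp

lemma path_bound {F : Euc d → ℝ} (hF : ContDiff ℝ 1 F) (y z : Euc d) :
    ‖F z - F y‖ₑ ≤ ∫⁻ t in Set.Icc (0:ℝ) 1, ‖fderiv ℝ F ((1 - t) • y + t • z)‖ₑ * ‖z - y‖ₑ := by
  have hder : ∀ t ∈ Set.uIcc (0:ℝ) 1, HasDerivAt (fun t : ℝ => F ((1 - t) • y + t • z))
      (fderiv ℝ F ((1 - t) • y + t • z) (z - y)) t := by
    intro t _
    have h1 : HasDerivAt (fun t : ℝ => (1 - t) • y + t • z) (z - y) t := by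
      have := (((hasDerivAt_id t).const_sub 1).smul_const y).add ((hasDerivAt_id t).smul_const z)
      refine this.congr_deriv ?_
      module
    exact ((hF.differentiable (by norm_num) _).hasFDerivAt).comp_hasDerivAt t h1
  have hc : Continuous (fun t : ℝ => fderiv ℝ F ((1 - t) • y + t • z) (z - y)) := by
    have := hF.continuous_fderiv (by norm_num)
    fun_prop
  have h2 := intervalIntegral.integral_eq_sub_of_hasDerivAt hder (hc.intervalIntegrable _ _)
  simp only [sub_self, zero_smul, one_smul, zero_add, sub_zero, add_zero] at h2
  rw [← h2, intervalIntegral.integral_of_le (by norm_num)]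
  refine (enorm_integral_le_lintegral_enorm _).trans ?_
  refine (lintegral_mono_set Set.Ioc_subset_Icc_self).trans ?_
  refine lintegral_mono (fun t => ?_)
  exact ContinuousLinearMap.le_opENorm _ _

lemma double_poincare {F : Euc d → ℝ} (hF : ContDiff ℝ 1 F) (x : Euc d) (ρ : ℝ) :
    ∫⁻ y in Metric.closedBall x ρ, ∫⁻ z in Metric.closedBall x ρ, ‖F z - F y‖ₑ ≤
      ENNReal.ofReal (2 * ρ) * (2 ^ d * (volume (Metric.closedBall x ρ) *
        ∫⁻ w in Metric.closedBall x ρ, ‖fderiv ℝ F w‖ₑ)) := by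
  set B := Metric.closedBall x ρ with hB
  have hBm : MeasurableSet B := Metric.isClosed_closedBall.measurableSet
  have hcd : Continuous (fderiv ℝ F) := hF.continuous_fderiv (by norm_num)
  set g : Euc d → ℝ≥0∞ := fun w => ‖fderiv ℝ F w‖ₑ with hg
  have hgm : Measurable g := hcd.enorm.measurable
  calc ∫⁻ y in B, ∫⁻ z in B, ‖F z - F y‖ₑ
      ≤ ∫⁻ y in B, ∫⁻ z in B, ∫⁻ t in Set.Icc (0:ℝ) 1, ENNReal.ofReal (2 * ρ) * g ((1 - t) • y + t • z) := by
        refine setLIntegral_mono' hBm (fun y hy => setLIntegral_mono' hBm (fun z hz => ?_))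
        refine (path_bound hF y z).trans (lintegral_mono (fun t => ?_))
        rw [mul_comm]
        gcongr
        rw [← ofReal_norm]
        refine ENNReal.ofReal_le_ofReal ?_
        rw [← dist_eq_norm]
        rw [hB, Metric.mem_closedBall] at hy hz
        linarith [dist_triangle_right z y x]
    _ = ∫⁻ y in B, ∫⁻ t in Set.Icc (0:ℝ) 1, ∫⁻ z in B, ENNReal.ofReal (2 * ρ) * g ((1 - t) • y + t • z) := by
        refine lintegral_congr (fun y => ?_)
        refine lintegral_lintegral_swap ?_
        refine Measurable.aemeasurable ?_
        unfold Function.uncurry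
        refine Measurable.const_mul (hgm.comp ?_) _
        fun_prop
    _ = ∫⁻ t in Set.Icc (0:ℝ) 1, ∫⁻ y in B, ∫⁻ z in B, ENNReal.ofReal (2 * ρ) * g ((1 - t) • y + t • z) := by
        refine lintegral_lintegral_swap ?_
        refine Measurable.aemeasurable ?_
        unfold Function.uncurry
        refine Measurable.lintegral_prod_right' (f := fun q : (Euc d × ℝ) × Euc d => 
          ENNReal.ofReal (2 * ρ) * g ((1 - q.1.2) • q.1.1 + q.1.2 • q.2)) ?_
        refine Measurable.const_mul (hgm.comp ?_) _
        fun_prop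
    _ ≤ ∫⁻ t in Set.Icc (0:ℝ) 1, ENNReal.ofReal (2 * ρ) * (2 ^ d * (volume B * ∫⁻ w in B, g w)) := by
        refine setLIntegral_mono' measurableSet_Icc (fun t ht => ?_)
        have e : ∀ y, ∫⁻ z in B, ENNReal.ofReal (2 * ρ) * g ((1 - t) • y + t • z) =
            ENNReal.ofReal (2 * ρ) * ∫⁻ z in B, g ((1 - t) • y + t • z) := by
          intro y
          rw [lintegral_const_mul]
          exact hgm.comp (by fun_prop)
        simp_rw [e]
        rw [lintegral_const_mul']
        swap
        · exact ENNReal.ofReal_ne_top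
        gcongr
        rcases le_total (1/2) t with h | h
        · calc ∫⁻ y in B, ∫⁻ z in B, g ((1 - t) • y + t • z) ≤ ∫⁻ y in B, 2 ^ d * ∫⁻ w in B, g w :=
              setLIntegral_mono' hBm (fun y hy => lint_affine B hBm (convex_closedBall x ρ) g hgm h ht.2 hy)
            _ = _ := by rw [setLIntegral_const]; ring
        · rw [lintegral_lintegral_swap]
          · calc ∫⁻ z in B, ∫⁻ y in B, g ((1 - t) • y + t • z) ≤ ∫⁻ y in B, 2 ^ d * ∫⁻ w in B, g w := by
                  refine setLIntegral_mono' hBm (fun z hz => ?_)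
                  have := lint_affine B hBm (convex_closedBall x ρ) g hgm (t := 1 - t) (by linarith) (by linarith [ht.1]) hz
                  simpa [add_comm] using this
              _ = _ := by rw [setLIntegral_const]; ring
          · refine Measurable.aemeasurable ?_
            unfold Function.uncurry
            exact hgm.comp (by fun_prop)
    _ = _ := by rw [setLIntegral_const]; simp

lemma poincare {F : Euc d → ℝ} (hF : ContDiff ℝ 1 F) (x : Euc d) {ρ : ℝ} (hρ : 0 < ρ) :
    ∫ z in Metric.closedBall x ρ, |F z - ⨍ y in Metric.closedBall x ρ, F y| ≤
      2 * 2 ^ d * ρ * ∫ z in Metric.closedBall x ρ, ‖gradient F z‖ := by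
  have h := double_poincare hF x ρ
  set B := Metric.closedBall x ρ with hB
  have hBm : MeasurableSet B := Metric.isClosed_closedBall.measurableSet
  have hBc : IsCompact B := isCompact_closedBall x ρ
  have hv0 : volume B ≠ 0 := (Metric.measure_closedBall_pos _ _ hρ).ne'
  have hvt : volume B ≠ ⊤ := hBc.measure_lt_top.ne
  have hFc := hF.continuous
  have hi : IntegrableOn F B := hFc.continuousOn.integrableOn_compact hBc
  have hcd : Continuous (fderiv ℝ F) := hF.continuous_fderiv (by norm_num)
  set m := ⨍ y in B, F y with hm
  have h1 : ∀ z, volume B * ‖F z - m‖ₑ ≤ ∫⁻ y in B, ‖F z - F y‖ₑ := by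
    intro z
    refine le_trans (le_of_eq ?_) (enorm_integral_le_lintegral_enorm _)
    rw [integral_sub (continuous_const.continuousOn.integrableOn_compact hBc) hi, setIntegral_const, hm, setAverage_eq]
    have : volume.real B • F z - ∫ y in B, F y = volume.real B * (F z - (volume.real B)⁻¹ • ∫ y in B, F y) := by
      have : volume.real B ≠ 0 := by
        rw [Measure.real]; exact (ENNReal.toReal_pos hv0 hvt).ne'
      simp only [smul_eq_mul]
      field_simp
    rw [this, enorm_mul]
    congr 1
    rw [Measure.real, Real.enorm_of_nonneg ENNReal.toReal_nonneg, ENNReal.ofReal_toReal hvt]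
  have h2 : volume B * ∫⁻ z in B, ‖F z - m‖ₑ ≤ volume B * (ENNReal.ofReal (2 * ρ) * (2 ^ d * ∫⁻ w in B, ‖fderiv ℝ F w‖ₑ)) := by
    rw [← lintegral_const_mul' _ _ hvt]
    calc _ ≤ ∫⁻ z in B, ∫⁻ y in B, ‖F z - F y‖ₑ := lintegral_mono h1
      _ = ∫⁻ z in B, ∫⁻ y in B, ‖F y - F z‖ₑ := by
        simp_rw [← edist_eq_enorm_sub, edist_comm]
      _ ≤ _ := h
      _ = _ := by ring
  have h3 := (ENNReal.mul_le_mul_iff_right hv0 hvt).1 h2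
  have e1 : ENNReal.ofReal (∫ z in B, |F z - m|) = ∫⁻ z in B, ‖F z - m‖ₑ := by
    have : Continuous (fun z => F z - m) := by fun_prop
    have hi2 : IntegrableOn (fun z => F z - m) B := this.continuousOn.integrableOn_compact hBc
    have := ofReal_integral_norm_eq_lintegral_enorm hi2
    simpa [Real.norm_eq_abs] using this
  have e2 : ENNReal.ofReal (∫ z in B, ‖gradient F z‖) = ∫⁻ z in B, ‖fderiv ℝ F z‖ₑ := by
    have hi2 : IntegrableOn (fderiv ℝ F) B := hcd.continuousOn.integrableOn_compact hBc
    simp_rw [norm_grad]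
    exact ofReal_integral_norm_eq_lintegral_enorm hi2
  rw [← e1, ← e2] at h3
  have h0 : 0 ≤ ∫ z in B, ‖gradient F z‖ := integral_nonneg (fun _ => norm_nonneg _)
  have e4 : (2:ℝ≥0∞) ^ d = ENNReal.ofReal (2 ^ d) := by rw [ENNReal.ofReal_pow (by norm_num)]; simp
  rw [e4, ← ENNReal.ofReal_mul (by positivity), ← ENNReal.ofReal_mul (by positivity)] at h3
  rw [ENNReal.ofReal_le_ofReal_iff (by positivity)] at h3
  refine h3.trans (le_of_eq (by ring))

end poinc
end CP

namespace CP

section tools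
open scoped ENNReal NNReal
variable {d : ℕ}

lemma cutoff (d : ℕ) : ∃ C : ℝ, 1 ≤ C ∧ ∀ (y : Euc d) (ρ : ℝ), 0 < ρ → ∃ χ : Euc d → ℝ,
    ContDiff ℝ (⊤ : ℕ∞) χ ∧ (∀ x, 0 ≤ χ x) ∧ (∀ x, χ x ≤ 1) ∧
    (∀ x ∈ Metric.closedBall y ρ, χ x = 1) ∧ HasCompactSupport χ ∧
    tsupport χ ⊆ Metric.closedBall y (2 * ρ) ∧ ∀ x, ‖gradient χ x‖ ≤ C / ρ := by
  let f : ContDiffBump (0 : Euc d) := ⟨1, 2, by norm_num, by norm_num⟩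
  have hf1 : ContDiff ℝ 1 f := f.contDiff
  obtain ⟨C, hC⟩ := (cont_grad hf1).bounded_above_of_compact_support (hcs_grad f.hasCompactSupport)
  refine ⟨max C 1, le_max_right _ _, fun y ρ hρ => ?_⟩
  have hs : Function.support (fun x => f (ρ⁻¹ • (x - y))) ⊆ Metric.closedBall y (2 * ρ) := by
    intro x hx
    rw [Metric.mem_closedBall]
    by_contra h
    push Not at h
    apply hx
    apply f.zero_of_le_dist
    rw [dist_zero_right, norm_smul, Real.norm_of_nonneg (by positivity), ← dist_eq_norm]
    show 2 ≤ _
    rw [inv_mul_eq_div, le_div_iff₀ hρ]; exact h.le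
  have hts : tsupport (fun x => f (ρ⁻¹ • (x - y))) ⊆ Metric.closedBall y (2 * ρ) :=
    closure_minimal hs Metric.isClosed_closedBall
  have hsm : ContDiff ℝ (⊤ : ℕ∞) (fun x => f (ρ⁻¹ • (x - y))) := 
      f.contDiff.comp ((contDiff_id.sub contDiff_const).const_smul _)
  refine ⟨fun x => f (ρ⁻¹ • (x - y)), hsm, fun x => f.nonneg, fun x => f.le_one, ?_, ?_, hts, ?_⟩
  · intro x hx
    apply f.one_of_mem_closedBall
    rw [mem_closedBall_zero_iff, norm_smul, Real.norm_of_nonneg (by positivity), ← dist_eq_norm]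
    show _ ≤ (1:ℝ)
    rw [inv_mul_eq_div, div_le_one hρ]; exact hx
  · exact (isCompact_closedBall y (2 * ρ)).of_isClosed_subset (isClosed_tsupport _) hts
  · intro x
    rw [norm_grad]
    have h1 : HasFDerivAt (fun x : Euc d => ρ⁻¹ • (x - y)) (ρ⁻¹ • ContinuousLinearMap.id ℝ (Euc d)) x :=
      ((hasFDerivAt_id x).sub_const y).const_smul ρ⁻¹
    have h2 := ((hf1.differentiable (by norm_num) (ρ⁻¹ • (x - y))).hasFDerivAt).comp x h1
    have h3 : fderiv ℝ (fun x => f (ρ⁻¹ • (x - y))) x = ρ⁻¹ • fderiv ℝ f (ρ⁻¹ • (x - y)) := by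
      have : fderiv ℝ (fun x => f (ρ⁻¹ • (x - y))) x = _ := h2.fderiv
      rw [this]; ext v; simp
    rw [h3, norm_smul, Real.norm_of_nonneg (by positivity), ← norm_grad, div_eq_inv_mul]
    gcongr
    exact (hC _).trans (le_max_left _ _)

lemma gns (hd : 2 ≤ d) : ∃ C : ℝ, 0 ≤ C ∧ ∀ (f : Euc d → ℝ), ContDiff ℝ 1 f → HasCompactSupport f →
    ∀ S : Set (Euc d), volume S ≠ ⊤ → Function.support f ⊆ S →
      ∫ x, |f x| ≤ C * (volume.real S) ^ ((1:ℝ) / d) * ∫ x, ‖gradient f x‖ := by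
  have hd0 : (0:ℝ) < d := by positivity
  have hd1 : (1:ℝ) < d := by exact_mod_cast (by omega : 1 < d)
  have hdn : (1:ℝ≥0) < d := by exact_mod_cast (by omega : 1 < d)
  let q : ℝ≥0 := NNReal.conjExponent (d : ℝ≥0)
  have hq : NNReal.HolderConjugate (Module.finrank ℝ (Euc d)) q := by
    rw [finrank_euclideanSpace, Fintype.card_fin]
    exact NNReal.HolderConjugate.conjExponent hdn
  have hq' : NNReal.HolderConjugate (d : ℝ≥0) q := NNReal.HolderConjugate.conjExponent hdn
  have hq1 : 1 < q := hq'.symm.lt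
  refine ⟨(eLpNormLESNormFDerivOneConst (volume : Measure (Euc d)) q : ℝ≥0), NNReal.coe_nonneg _, fun f hf hfc S hS hfS => ?_⟩
  have h1 := eLpNorm_le_eLpNorm_fderiv_one (volume : Measure (Euc d)) hf hfc hq
  have h2 := eLpNorm_le_eLpNorm_mul_rpow_measure_univ (μ := volume.restrict S) (f := f)
    (p := 1) (q := (q : ℝ≥0∞)) (by exact_mod_cast hq1.le) hf.continuous.aestronglyMeasurable
  rw [eLpNorm_restrict_eq_of_support_subset hfS, eLpNorm_restrict_eq_of_support_subset hfS,
    Measure.restrict_apply_univ] at h2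
  have hfi : Integrable f := hf.continuous.integrable_of_hasCompactSupport hfc
  have hgi : Integrable (fderiv ℝ f) := 
    (hf.continuous_fderiv (by norm_num)).integrable_of_hasCompactSupport (hfc.fderiv ℝ)
  have e1 : eLpNorm f 1 volume = ENNReal.ofReal (∫ x, |f x|) := by
    rw [eLpNorm_one_eq_lintegral_enorm, ← ofReal_integral_norm_eq_lintegral_enorm hfi]; rfl
  have e2 : eLpNorm (fderiv ℝ f) 1 volume = ENNReal.ofReal (∫ x, ‖gradient f x‖) := by
    simp_rw [norm_grad]
    rw [eLpNorm_one_eq_lintegral_enorm, ← ofReal_integral_norm_eq_lintegral_enorm hgi]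
  have e3 : 1 / (1:ℝ≥0∞).toReal - 1 / (q : ℝ≥0∞).toReal = 1 / d := by
    have := hq'.coe.inv_add_inv_eq_one
    simp only [ENNReal.toReal_one, ENNReal.coe_toReal, NNReal.coe_natCast] at *
    rw [one_div, one_div, one_div]; linarith
  rw [e3, e1] at h2
  rw [e2] at h1
  have h3 : ENNReal.ofReal (∫ x, |f x|) ≤ ENNReal.ofReal ((eLpNormLESNormFDerivOneConst (volume : Measure (Euc d)) q : ℝ≥0) * (∫ x, ‖gradient f x‖) * (volume.real S) ^ ((1:ℝ) / d)) := by
    refine h2.trans ?_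
    rw [ENNReal.ofReal_mul (by positivity), ENNReal.ofReal_mul (by positivity), ENNReal.ofReal_coe_nnreal,
      ← ENNReal.ofReal_rpow_of_nonneg (by positivity) (by positivity), Measure.real, ENNReal.ofReal_toReal hS]
    gcongr
  rw [ENNReal.ofReal_le_ofReal_iff (by positivity)] at h3
  linarith

lemma pos_rpow_deriv {p : ℝ} (hp : 1 < p) (t : ℝ) :
    HasDerivAt (fun t : ℝ => (max t 0) ^ p) (p * (max t 0) ^ (p - 1)) t := by
  have hp0 : p ≠ 0 := by linarith
  have hp1 : p - 1 ≠ 0 := by linarith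
  rcases lt_trichotomy t 0 with h | h | h
  · rw [max_eq_right h.le, Real.zero_rpow hp1, mul_zero]
    refine (hasDerivAt_const t (0:ℝ)).congr_of_eventuallyEq ?_
    filter_upwards [Iio_mem_nhds h] with s hs
    rw [max_eq_right (le_of_lt hs), Real.zero_rpow hp0]
  · subst h
    rw [max_self, Real.zero_rpow hp1, mul_zero]
    rw [← hasDerivWithinAt_univ, ← Set.Iic_union_Ici (a := (0:ℝ))]
    refine HasDerivWithinAt.union ?_ ?_
    · refine (hasDerivWithinAt_const (0:ℝ) _ (0:ℝ)).congr (fun s hs => ?_) ?_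
      · rw [max_eq_right hs, Real.zero_rpow hp0]
      · rw [max_self, Real.zero_rpow hp0]
    · have := (Real.hasDerivAt_rpow_const (x := 0) (p := p) (Or.inr hp.le)).hasDerivWithinAt (s := Set.Ici 0)
      rw [Real.zero_rpow hp1, mul_zero] at this
      refine this.congr (fun s hs => ?_) ?_
      · rw [max_eq_left hs]
      · rw [max_self]
  · rw [max_eq_left h.le]
    refine (Real.hasDerivAt_rpow_const (Or.inr hp.le)).congr_of_eventuallyEq ?_
    filter_upwards [Ioi_mem_nhds h] with s hs
    rw [max_eq_left (le_of_lt hs)]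

lemma pos_rpow_contDiff {p : ℝ} (hp : 1 < p) : ContDiff ℝ 1 (fun t : ℝ => (max t 0) ^ p) := by
  rw [contDiff_one_iff_deriv]
  refine ⟨fun t => (pos_rpow_deriv hp t).differentiableAt, ?_⟩
  have : deriv (fun t : ℝ => (max t 0) ^ p) = fun t => p * (max t 0) ^ (p - 1) :=
    funext fun t => (pos_rpow_deriv hp t).deriv
  rw [this]
  refine continuous_const.mul ((continuous_id.max continuous_const).rpow_const (fun _ => Or.inr (by linarith)))

end tools
end CP

namespace CP

section bmo
variable {d : ℕ} {Ω : Set (Euc d)} {V : Euc d → ℝ} {p : ℝ}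

/-- Volume of the unit ball. -/
def om (d : ℕ) : ℝ := volume.real (Metric.closedBall (0 : Euc d) 1)

lemma om_pos (d : ℕ) : 0 < om d := by
  unfold om Measure.real
  exact ENNReal.toReal_pos (Metric.measure_closedBall_pos _ _ one_pos).ne' (isCompact_closedBall _ _).measure_lt_top.ne

lemma vol_ball (x : Euc d) {r : ℝ} (hr : 0 < r) : volume.real (Metric.closedBall x r) = r ^ d * om d := by
  have h := Measure.addHaar_real_closedBall' (volume : Measure (Euc d)) x hr.le
  rw [h, finrank_euclideanSpace, Fintype.card_fin]; rfl

lemma vol_ball_pos (x : Euc d) {r : ℝ} (hr : 0 < r) : 0 < volume.real (Metric.closedBall x r) := by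
  rw [vol_ball x hr]; have := om_pos d; positivity

lemma iob {f : Euc d → ℝ} (hf : Continuous f) (x : Euc d) (r : ℝ) :
    IntegrableOn f (Metric.closedBall x r) :=
  hf.continuousOn.integrableOn_compact (isCompact_closedBall x r)

lemma exists_k (p : ℝ) : ∃ k : ℕ, p ≤ k ∧ 2 ≤ k := by
  obtain ⟨k, hk⟩ := exists_nat_ge p
  exact ⟨max k 2, hk.trans (by exact_mod_cast le_max_left _ _), le_max_right _ _⟩

lemma set_le_of_ind {f g : Euc d → ℝ} {A B : Set (Euc d)} (hA : MeasurableSet A) (hB : MeasurableSet B)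
    (hf : Integrable f) (hf0 : ∀ x, 0 ≤ f x) (h1 : ∀ x ∈ A, g x ≤ f x) (hg : IntegrableOn g A) :
    ∫ x in A, g x ≤ ∫ x, f x :=
  (setIntegral_mono_on hg hf.integrableOn hA h1).trans (setIntegral_le_integral hf (Eventually.of_forall hf0))

lemma int_le_of_ind {f g : Euc d → ℝ} {A : Set (Euc d)} (hA : MeasurableSet A)
    (hf : Integrable f) (hg : IntegrableOn g A) (h1 : ∀ x ∈ A, f x ≤ g x) (h2 : ∀ x, x ∉ A → f x ≤ 0) :
    ∫ x, f x ≤ ∫ x in A, g x := by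
  rw [← integral_indicator hA]
  refine integral_mono hf ((integrable_indicator_iff hA).2 hg) (fun x => ?_)
  by_cases hx : x ∈ A
  · simpa [hx] using h1 x hx
  · simpa [hx] using h2 x hx

lemma bmo (hp : 1 < p) (hV : LocBddPotential Ω V)
    (hQ : ∀ u : Euc d → ℝ, IsTestFun Ω u → 0 ≤ energyQ Ω V p u) {Λ : ℝ} (hΛ : 0 ≤ Λ) :
    ∃ C : ℝ, 1 ≤ C ∧ ∀ (y : Euc d) (ρ : ℝ), 0 < ρ → ρ ≤ 1 → Metric.closedBall y (2 * ρ) ⊆ Ω →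
      (∀ x ∈ Metric.closedBall y (2 * ρ), |V x| ≤ Λ) → ∀ u, IsTestFun Ω u → (∀ x, 0 ≤ u x) →
      ∀ s, 0 < s → energyQ Ω V p u ≤ s ^ p * ρ ^ d →
      ∫ z in Metric.closedBall y ρ, |Real.log (u z + s) -
        ⨍ w in Metric.closedBall y ρ, Real.log (u w + s)| ≤ C * volume.real (Metric.closedBall y ρ) := by
  obtain ⟨k, hk, hk2⟩ := exists_k p
  obtain ⟨C₀, hC₀, hcut⟩ := cutoff d
  have hpp : 0 < p := by linarith
  have hom := om_pos d
  set c₁ : ℝ := ((p - 1) / 2)⁻¹ ^ (p - 1) * k ^ p / p with hc₁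
  have hp1 : 0 < (p - 1) / 2 := by linarith
  have hc₁0 : 0 ≤ c₁ := by positivity
  set c₂ : ℝ := (p - 1) / (2 * p) with hc₂
  have hc₂0 : 0 < c₂ := by rw [hc₂]; apply div_pos <;> linarith
  set C₁ : ℝ := c₂⁻¹ * (1 + (c₁ * C₀ ^ p + Λ) * (2 ^ d * om d)) with hC₁
  have hC₁0 : 0 ≤ C₁ := by positivity
  refine ⟨max 1 (2 * 2 ^ d * (1 + C₁ / om d)), le_max_left _ _, fun y ρ hρ hρ1 hsub hVb u hu hu0 s hs hen => ?_⟩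
  obtain ⟨χ, hχs, hχ0, hχ1, hχ11, hχc, hχt, hχg⟩ := hcut y ρ hρ
  have hχ : IsTestFun Ω χ := ⟨hχs, hχc, hχt.trans hsub⟩
  have hz : ∀ x, 0 < u x + s := fun x => by linarith [hu0 x]
  have huc : Continuous u := hu.1.continuous
  have hguc : Continuous (gradient u) := cont_grad (test_c1 hu)
  have hF : ContDiff ℝ 1 (fun z => Real.log (u z + s)) :=
    ((test_c1 hu).add contDiff_const).log (fun x => (hz x).ne')
  have hgF : ∀ x, ‖gradient (fun z => Real.log (u z + s)) x‖ = ‖gradient u x‖ / (u x + s) := by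
    intro x
    have := hg_comp (f := fun y => u y + s) (h := Real.log)
        (Real.hasDerivAt_log (hz x).ne') (hg_add (hg_of_contDiff (test_c1 hu) x) (hg_const s))
    rw [this.gradient, add_zero, norm_smul, Real.norm_of_nonneg (inv_nonneg.2 (hz x).le), div_eq_inv_mul]
  have hlog := logcacc hp hV hQ hk hk2 hu hu0 hχ hχ0 hχ1 (fun x hx => hVb x (hχt hx)) hs
  have hG : Continuous (fun x => ‖gradient u x‖ ^ p / (u x + s) ^ p) :=
    (hguc.norm.rpow_const (fun _ => Or.inr (by linarith))).div
      ((huc.add continuous_const).rpow_const (fun _ => Or.inr (by linarith)))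
      (fun x => (Real.rpow_pos_of_pos (hz x) _).ne')
  have hG0 : ∀ x, 0 ≤ ‖gradient u x‖ ^ p / (u x + s) ^ p := fun x => by
    have := hz x; positivity
  have hsp : 0 < s ^ p := by positivity
  have hBm : ∀ r, MeasurableSet (Metric.closedBall y r) := fun r => Metric.isClosed_closedBall.measurableSet
  -- lower bound
  have hlow : c₂ * s ^ p * ∫ x in Metric.closedBall y ρ, ‖gradient u x‖ ^ p / (u x + s) ^ p ≤
      ∫ x, c₂ * s ^ p * (χ x ^ k * (‖gradient u x‖ ^ p / (u x + s) ^ p)) := by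
    rw [← integral_const_mul]
    refine set_le_of_ind (hBm ρ) (hBm ρ) ?_ ?_ ?_ ?_
    · refine Continuous.integrable_of_hasCompactSupport (by fun_prop) ?_
      refine HasCompactSupport.intro hχc (fun x hx => ?_)
      rw [image_eq_zero_of_notMem_tsupport hx, zero_pow (by omega)]; ring
    · intro x
      have := hG0 x
      have := hχ0 x
      positivity
    · intro x hx
      rw [hχ11 x hx]; simp
    · exact iob (by fun_prop) _ _
  have hup : ∫ x, s ^ p * (c₁ * ‖gradient χ x‖ ^ p + Λ * χ x ^ k) ≤
      s ^ p * ((c₁ * C₀ ^ p + Λ) * (2 ^ d * om d)) * ρ ^ ((d:ℝ) - p) := by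
    have hgχ : Continuous (fun x => ‖gradient χ x‖ ^ p) :=
      (cont_grad (test_c1 hχ)).norm.rpow_const (fun _ => Or.inr (by linarith))
    have : ∫ x, s ^ p * (c₁ * ‖gradient χ x‖ ^ p + Λ * χ x ^ k) ≤
        ∫ x in Metric.closedBall y (2 * ρ), s ^ p * ((c₁ * C₀ ^ p + Λ) * ρ ^ (-p)) := by
      refine int_le_of_ind (hBm _) ?_ (iob (by fun_prop) _ _) ?_ ?_
      · refine Continuous.integrable_of_hasCompactSupport (by fun_prop) ?_
        refine HasCompactSupport.intro hχc (fun x hx => ?_)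
        simp [grad_zero_of_nmem hx, image_eq_zero_of_notMem_tsupport hx, hpp.ne']
        right; right; omega
      · intro x _
        have h1 : ‖gradient χ x‖ ^ p ≤ C₀ ^ p * ρ ^ (-p) := by
          calc ‖gradient χ x‖ ^ p ≤ (C₀ / ρ) ^ p := by gcongr; exact hχg x
            _ = _ := by rw [Real.div_rpow (by linarith) hρ.le, Real.rpow_neg hρ.le]; rfl
        have h2 : χ x ^ k ≤ ρ ^ (-p) := (pow_le_one₀ (hχ0 x) (hχ1 x)).trans
          (Real.one_le_rpow_of_pos_of_le_one_of_nonpos hρ hρ1 (by linarith))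
        calc _ ≤ s ^ p * (c₁ * (C₀ ^ p * ρ ^ (-p)) + Λ * ρ ^ (-p)) := by gcongr
          _ = _ := by ring
      · intro x hx
        have hx' : x ∉ tsupport χ := fun h => hx (hχt h)
        rw [grad_zero_of_nmem hx', image_eq_zero_of_notMem_tsupport hx', norm_zero,
          Real.zero_rpow hpp.ne', zero_pow (by omega)]
        simp
    refine this.trans (le_of_eq ?_)
    rw [setIntegral_const, vol_ball y (by positivity), smul_eq_mul, Real.rpow_sub hρ, Real.rpow_natCast,
      Real.rpow_neg hρ.le, mul_pow]
    field_simp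
  have hρd : ρ ^ d ≤ ρ ^ ((d:ℝ) - p) := by
    rw [← Real.rpow_natCast]
    exact Real.rpow_le_rpow_of_exponent_ge hρ hρ1 (by linarith)
  have hGb : ∫ x in Metric.closedBall y ρ, ‖gradient u x‖ ^ p / (u x + s) ^ p ≤ C₁ * ρ ^ ((d:ℝ) - p) := by
    have h1 : c₂ * s ^ p * ∫ x in Metric.closedBall y ρ, ‖gradient u x‖ ^ p / (u x + s) ^ p ≤
        s ^ p * (1 + (c₁ * C₀ ^ p + Λ) * (2 ^ d * om d)) * ρ ^ ((d:ℝ) - p) := by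
      have : s ^ p * ρ ^ d ≤ s ^ p * ρ ^ ((d:ℝ) - p) := by gcongr
      linarith
    rw [hC₁]
    have h2 : c₂ * s ^ p * ∫ x in Metric.closedBall y ρ, ‖gradient u x‖ ^ p / (u x + s) ^ p ≤
       c₂ * s ^ p * (c₂⁻¹ * (1 + (c₁ * C₀ ^ p + Λ) * (2 ^ d * om d)) * ρ ^ ((d:ℝ) - p)) := by
      refine h1.trans (le_of_eq ?_)
      field_simp
    exact le_of_mul_le_mul_left h2 (by positivity)
  have hgint : ∫ z in Metric.closedBall y ρ, ‖gradient (fun z => Real.log (u z + s)) z‖ ≤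
      ρ⁻¹ * (ρ ^ d * (om d + C₁)) := by
    have h1 : ∫ z in Metric.closedBall y ρ, ‖gradient (fun z => Real.log (u z + s)) z‖ ≤
        ∫ z in Metric.closedBall y ρ, ρ⁻¹ * (1 + ρ ^ p * (‖gradient u z‖ ^ p / (u z + s) ^ p)) := by
      refine setIntegral_mono_on (iob (cont_grad hF).norm _ _) (iob (by fun_prop) _ _) (hBm ρ) (fun x _ => ?_)
      rw [hgF, ← Real.div_rpow (norm_nonneg _) (hz x).le]
      set a := ‖gradient u x‖ / (u x + s) with ha
      have ha0 : 0 ≤ a := div_nonneg (norm_nonneg _) (hz x).le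
      rw [← Real.mul_rpow hρ.le ha0]
      have : ρ * a ≤ 1 + (ρ * a) ^ p := by
        rcases le_total (ρ * a) 1 with h | h
        · have : 0 ≤ (ρ * a) ^ p := by positivity
          linarith
        · have := Real.self_le_rpow_of_one_le h hp.le
          linarith
      calc a = ρ⁻¹ * (ρ * a) := by field_simp
        _ ≤ _ := by gcongr
    refine h1.trans ?_
    rw [integral_const_mul]
    have e : ∫ z in Metric.closedBall y ρ, (1 + ρ ^ p * (‖gradient u z‖ ^ p / (u z + s) ^ p)) =
       ρ ^ d * om d + ρ ^ p * ∫ z in Metric.closedBall y ρ, (‖gradient u z‖ ^ p / (u z + s) ^ p) := by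
      rw [integral_add (iob (by fun_prop) _ _) (iob (by fun_prop) _ _), integral_const_mul, setIntegral_const,
        vol_ball y hρ]; simp
    rw [e]
    gcongr
    have : ρ ^ p * (C₁ * ρ ^ ((d:ℝ) - p)) = C₁ * ρ ^ d := by
      rw [Real.rpow_sub hρ, Real.rpow_natCast]; field_simp
    have h3 : ρ ^ p * ∫ z in Metric.closedBall y ρ, (‖gradient u z‖ ^ p / (u z + s) ^ p) ≤ ρ ^ p * (C₁ * ρ ^ ((d:ℝ) - p)) := by gcongr
    linarith
  refine (poincare hF y hρ).trans ?_
  rw [vol_ball y hρ]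
  calc 2 * 2 ^ d * ρ * ∫ z in Metric.closedBall y ρ, ‖gradient (fun z => Real.log (u z + s)) z‖
      ≤ 2 * 2 ^ d * ρ * (ρ⁻¹ * (ρ ^ d * (om d + C₁))) := by gcongr
    _ = (2 * 2 ^ d * (1 + C₁ / om d)) * (ρ ^ d * om d) := by field_simp
    _ ≤ _ := by gcongr; exact le_max_right _ _

end bmo
end CP

namespace CP

section chain
variable {d : ℕ} {Ω : Set (Euc d)} {V : Euc d → ℝ} {p : ℝ}

lemma mean_step {F : Euc d → ℝ} (hF : Continuous F) (x : Euc d) {ρ C m : ℝ} (hρ : 0 < ρ)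
    (h : ∫ z in Metric.closedBall x (2 * ρ), |F z - m| ≤ C * volume.real (Metric.closedBall x (2 * ρ))) :
    (⨍ z in Metric.closedBall x ρ, F z) ≤ m + 2 ^ d * C := by
  have hv := vol_ball_pos x hρ
  have h1 : volume.real (Metric.closedBall x (2 * ρ)) = 2 ^ d * volume.real (Metric.closedBall x ρ) := by
    rw [vol_ball x hρ, vol_ball x (by positivity), mul_pow]; ring
  rw [h1] at h
  have h2 : ∫ z in Metric.closedBall x ρ, F z ≤ ∫ z in Metric.closedBall x ρ, (m + |F z - m|) := by
    refine setIntegral_mono (iob hF _ _) (iob (by fun_prop) _ _) (fun z => ?_)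
    have := le_abs_self (F z - m)
    show F z ≤ _
    linarith
  have h3 : ∫ z in Metric.closedBall x ρ, |F z - m| ≤ ∫ z in Metric.closedBall x (2 * ρ), |F z - m| := by
    refine setIntegral_mono_set (iob (by fun_prop) _ _) (Eventually.of_forall fun z => abs_nonneg _) ?_
    exact (Metric.closedBall_subset_closedBall (by linarith)).eventuallyLE
  rw [integral_add (iob (by fun_prop) _ _) (iob (by fun_prop) _ _), setIntegral_const, smul_eq_mul] at h2
  rw [setAverage_eq, smul_eq_mul, inv_mul_le_iff₀ hv]
  nlinarith

lemma mean_chain {F : Euc d → ℝ} (hF : Continuous F) (x : Euc d) {ρ C : ℝ} (hρ : 0 < ρ) (J : ℕ)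
    (h : ∀ j ≤ J, ∫ z in Metric.closedBall x (2 ^ j * ρ), |F z - ⨍ w in Metric.closedBall x (2 ^ j * ρ), F w| ≤
      C * volume.real (Metric.closedBall x (2 ^ j * ρ))) :
    (⨍ z in Metric.closedBall x ρ, F z) ≤ (⨍ z in Metric.closedBall x (2 ^ J * ρ), F z) + J * (2 ^ d * C) := by
  induction J with
  | zero => simp
  | succ j ih =>
    have h1 := ih (fun i hi => h i (by omega))
    have e : (2:ℝ) ^ (j + 1) * ρ = 2 * (2 ^ j * ρ) := by ring
    have h2 := h (j + 1) le_rfl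
    rw [e] at h2 ⊢
    have h3 := mean_step hF x (by positivity : 0 < 2 ^ j * ρ) h2
    push_cast
    linarith

lemma mean_upper {F : Euc d → ℝ} (hF : Continuous F) (x : Euc d) {ρ C c₀ a : ℝ} (hc₀ : 0 < c₀)
    (hC : 0 ≤ C) {m : ℝ}
    (h : ∫ z in Metric.closedBall x ρ, |F z - m| ≤ C) {S : Set (Euc d)} (hSm : MeasurableSet S)
    (hS : S ⊆ Metric.closedBall x ρ) (hSv : c₀ ≤ volume.real S) (hSa : ∀ z ∈ S, F z ≤ a) :
    m ≤ a + C / c₀ := by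
  rcases le_total m a with h0 | h0
  · have : 0 ≤ C / c₀ := by positivity
    linarith
  have h1 : ∫ z in S, (m - a) ≤ ∫ z in S, |F z - m| := by
    refine setIntegral_mono_on ((iob continuous_const x ρ).mono_set hS) ((iob (by fun_prop) x ρ).mono_set hS) hSm (fun z hz => ?_)
    have := neg_le_abs (F z - m)
    linarith [hSa z hz]
  have h2 : ∫ z in S, |F z - m| ≤ ∫ z in Metric.closedBall x ρ, |F z - m| :=
    setIntegral_mono_set (iob (by fun_prop) _ _) (Eventually.of_forall fun z => abs_nonneg _) hS.eventuallyLE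
  rw [setIntegral_const, smul_eq_mul] at h1
  have h3 : c₀ * (m - a) ≤ volume.real S * (m - a) := by gcongr
  have : m - a ≤ C / c₀ := by rw [le_div_iff₀ hc₀]; linarith
  linarith

lemma cheb {F : Euc d → ℝ} (hF : Continuous F) (x : Euc d) {ρ C δ m : ℝ} (hC : 0 < C) (hδ : 0 < δ) {v : ℝ}
    (h : ∫ z in Metric.closedBall x ρ, |F z - m| ≤ C * v) {S : Set (Euc d)} (hSm : MeasurableSet S)
    (hS : S ⊆ Metric.closedBall x ρ) (hSa : ∀ z ∈ S, m + C / δ ≤ F z) :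
    volume.real S ≤ δ * v := by
  have h1 : ∫ z in S, (C / δ) ≤ ∫ z in S, |F z - m| := by
    refine setIntegral_mono_on ((iob continuous_const x ρ).mono_set hS) ((iob (by fun_prop) x ρ).mono_set hS) hSm (fun z hz => ?_)
    have := le_abs_self (F z - m)
    linarith [hSa z hz]
  have h2 : ∫ z in S, |F z - m| ≤ ∫ z in Metric.closedBall x ρ, |F z - m| :=
    setIntegral_mono_set (iob (by fun_prop) _ _) (Eventually.of_forall fun z => abs_nonneg _) hS.eventuallyLE
  rw [setIntegral_const, smul_eq_mul] at h1
  have h3 : volume.real S * (C / δ) ≤ (δ * v) * (C / δ) := by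
    have : (δ * v) * (C / δ) = C * v := by field_simp
    linarith
  exact le_of_mul_le_mul_right h3 (by positivity)

lemma young {p a b : ℝ} (hp : 1 < p) (ha : 0 ≤ a) (hb : 0 ≤ b) :
    p * a ^ (p - 1) * b ≤ (p - 1) * a ^ p + b ^ p := by
  have hc : p.HolderConjugate (p / (p - 1)) := Real.HolderConjugate.conjExponent hp
  have h := Real.young_inequality_of_nonneg hb (Real.rpow_nonneg ha (p - 1)) hc
  rw [← Real.rpow_mul ha] at h
  have e : (p - 1) * (p / (p - 1)) = p := by
    have : p - 1 ≠ 0 := by linarith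
    field_simp
  rw [e] at h
  have e2 : a ^ p / (p / (p - 1)) = (p - 1) * a ^ p / p := by
    have : p - 1 ≠ 0 := by linarith
    have : p ≠ 0 := by linarith
    field_simp
  rw [e2, ← add_div, le_div_iff₀ (by linarith)] at h
  linarith

lemma add_rpow_le {p a b : ℝ} (hp : 0 < p) (ha : 0 ≤ a) (hb : 0 ≤ b) :
    (a + b) ^ p ≤ 2 ^ p * (a ^ p + b ^ p) := by
  have : a + b ≤ 2 * max a b := by
    rcases le_total a b with h | h
    · rw [max_eq_right h]; linarith
    · rw [max_eq_left h]; linarith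
  calc (a + b) ^ p ≤ (2 * max a b) ^ p := by gcongr
    _ = 2 ^ p * (max a b) ^ p := by rw [Real.mul_rpow (by norm_num) (le_max_of_le_left ha)]
    _ ≤ _ := by
      have h1 : 0 ≤ a ^ p := by positivity
      have h2 : 0 ≤ b ^ p := by positivity
      gcongr
      rcases le_total a b with h | h
      · rw [max_eq_right h]; linarith
      · rw [max_eq_left h]; linarith

set_option maxHeartbeats 1000000 in
lemma gns_step (hd : 2 ≤ d) (hp : 1 < p) (hV : LocBddPotential Ω V)
    (hQ : ∀ u : Euc d → ℝ, IsTestFun Ω u → 0 ≤ energyQ Ω V p u) {Λ : ℝ} (hΛ : 0 ≤ Λ) :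
    ∃ C : ℝ, 0 ≤ C ∧ ∀ (y : Euc d) (r : ℝ), 0 < r → r ≤ 1 → Metric.closedBall y (2 * r) ⊆ Ω →
      (∀ x ∈ Metric.closedBall y (2 * r), |V x| ≤ Λ) → ∀ u, IsTestFun Ω u → (∀ x, 0 ≤ u x) →
      ∀ q, 0 ≤ q → ∀ κ, 0 ≤ κ → 
      volume.real {z ∈ Metric.closedBall y (2 * r) | q < u z} ≤ κ ^ d * volume.real (Metric.closedBall y (2 * r)) →
      ∫ z in Metric.closedBall y r, u z ^ p ≤ 2 ^ p * (q ^ p * volume.real (Metric.closedBall y r)) +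
        C * κ * ((∫ z in Metric.closedBall y (2 * r), u z ^ p) + energyQ Ω V p u) := by
  obtain ⟨k, hk, hk2⟩ := exists_k p
  obtain ⟨C₀, hC₀, hcut⟩ := cutoff d
  obtain ⟨Cg, hCg, hgns⟩ := gns hd
  have hpp : 0 < p := by linarith
  have hom := om_pos d
  set c₁ : ℝ := 2 * (2 ^ (p - 1) * k ^ p * C₀ ^ p + Λ * p) with hc₁
  have hc₁0 : 0 ≤ c₁ := by positivity
  set c₂ : ℝ := (p - 1) + k * C₀ with hc₂
  have hc₂0 : 0 ≤ c₂ := by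
    have : 0 ≤ k * C₀ := by positivity
    linarith
  refine ⟨2 ^ p * (Cg * (2 * om d ^ ((1:ℝ) / d)) * (c₂ + c₁ + 2)), by positivity, 
    fun y r hr hr1 hsub hVb u hu hu0 q hq κ hκ hvol => ?_⟩
  obtain ⟨χ, hχs, hχ0, hχ1, hχ11, hχc, hχt, hχg⟩ := hcut y r hr
  have hχ : IsTestFun Ω χ := ⟨hχs, hχc, hχt.trans hsub⟩
  have huc : Continuous u := hu.1.continuous
  have hguc : Continuous (gradient u) := cont_grad (test_c1 hu)
  have hgup : Continuous (fun x => ‖gradient u x‖ ^ p) := hguc.norm.rpow_const (fun _ => Or.inr (by linarith))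
  have hgχ : Continuous (fun x => ‖gradient χ x‖ ^ p) :=
    (cont_grad (test_c1 hχ)).norm.rpow_const (fun _ => Or.inr (by linarith))
  have hχcont : Continuous χ := hχs.continuous
  have hup : Continuous (fun x => u x ^ p) := huc.rpow_const (fun _ => Or.inr (by linarith))
  have hBm : ∀ r, MeasurableSet (Metric.closedBall y r) := fun r => Metric.isClosed_closedBall.measurableSet
  have hen := hQ u hu
  set I := ∫ z in Metric.closedBall y (2 * r), u z ^ p with hI
  have hup0 : ∀ x, 0 ≤ u x ^ p := fun x => Real.rpow_nonneg (hu0 x) _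
  have hI0 : 0 ≤ I := integral_nonneg hup0
  -- Caccioppoli
  have hcac := cacc hp hV hQ hk hk2 hu hu0 hχ hχ0 hχ1 (fun x hx => hVb x (hχt hx))
  have hrp : r ^ p * r ^ (-p) = 1 := by rw [← Real.rpow_add hr]; simp
  have hr1p : r ^ p ≤ 1 := Real.rpow_le_one hr.le hr1 hpp.le
  have hrp0 : 0 < r ^ p := by positivity
  have hr1m : 1 ≤ r ^ (-p) := Real.one_le_rpow_of_pos_of_le_one_of_nonpos hr hr1 (by linarith)
  have hc2 : r ^ p * ∫ x, χ x ^ k * ‖gradient u x‖ ^ p ≤ c₁ * I + 2 * energyQ Ω V p u := by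
    have h1 : ∫ x, (2 ^ (p - 1) * k ^ p * (u x ^ p * ‖gradient χ x‖ ^ p) + Λ * p * (χ x ^ k * u x ^ p)) ≤
        ∫ x in Metric.closedBall y (2 * r), (c₁ / 2 * r ^ (-p)) * u x ^ p := by
      refine int_le_of_ind (hBm _) ?_ (iob (by fun_prop) _ _) ?_ ?_
      · refine Continuous.integrable_of_hasCompactSupport (by fun_prop) ?_
        refine HasCompactSupport.intro hu.2.1 (fun x hx => ?_)
        simp [image_eq_zero_of_notMem_tsupport hx, hpp.ne']
      · intro x _
        have h1 : ‖gradient χ x‖ ^ p ≤ C₀ ^ p * r ^ (-p) := by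
          calc ‖gradient χ x‖ ^ p ≤ (C₀ / r) ^ p := by gcongr; exact hχg x
            _ = _ := by rw [Real.div_rpow (by linarith) hr.le, Real.rpow_neg hr.le]; rfl
        have h2 : χ x ^ k ≤ r ^ (-p) := (pow_le_one₀ (hχ0 x) (hχ1 x)).trans hr1m
        have h3 := hup0 x
        calc _ ≤ 2 ^ (p - 1) * k ^ p * (u x ^ p * (C₀ ^ p * r ^ (-p))) + Λ * p * (r ^ (-p) * u x ^ p) := by gcongr
          _ = _ := by rw [hc₁]; ring
      · intro x hx
        have hx' : x ∉ tsupport χ := fun h => hx (hχt h)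
        rw [grad_zero_of_nmem hx', image_eq_zero_of_notMem_tsupport hx', norm_zero,
          Real.zero_rpow hpp.ne', zero_pow (by omega)]
        simp
    rw [integral_const_mul, ← hI] at h1
    rw [integral_div] at hcac
    have h2 : ∫ x, χ x ^ k * ‖gradient u x‖ ^ p ≤ 2 * energyQ Ω V p u + c₁ * r ^ (-p) * I := by linarith
    calc _ ≤ r ^ p * (2 * energyQ Ω V p u + c₁ * r ^ (-p) * I) := by gcongr
      _ = r ^ p * (2 * energyQ Ω V p u) + (r ^ p * r ^ (-p)) * c₁ * I := by ring
      _ ≤ 1 * (2 * energyQ Ω V p u) + (r ^ p * r ^ (-p)) * c₁ * I := by gcongr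
      _ = _ := by rw [hrp]; ring
  -- the truncated function
  set f : Euc d → ℝ := fun x => (max (u x - q) 0) ^ p * χ x ^ k with hf
  have hfc1 : ContDiff ℝ 1 f :=
    ((pos_rpow_contDiff hp).comp ((test_c1 hu).sub contDiff_const)).mul ((test_c1 hχ).pow k)
  have hfcs : HasCompactSupport f := by
    refine HasCompactSupport.intro hχc (fun x hx => ?_)
    simp only [hf]
    rw [image_eq_zero_of_notMem_tsupport hx, zero_pow (by omega), mul_zero]
  have hf0 : ∀ x, 0 ≤ f x := fun x => 
    mul_nonneg (Real.rpow_nonneg (le_max_right _ _) _) (pow_nonneg (hχ0 x) _)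
  have hfs : Function.support f ⊆ {z ∈ Metric.closedBall y (2 * r) | q < u z} := by
    intro x hx
    refine ⟨?_, ?_⟩
    · by_contra h
      apply hx
      simp only [hf]
      rw [image_eq_zero_of_notMem_tsupport (fun h' => h (hχt h')), zero_pow (by omega), mul_zero]
    · by_contra h
      apply hx
      simp only [hf]
      rw [max_eq_right (by linarith), Real.zero_rpow hpp.ne', zero_mul]
  have hg1 := hgns f hfc1 hfcs _ (ne_top_of_le_ne_top (isCompact_closedBall y (2 * r)).measure_lt_top.ne
    (measure_mono (Set.sep_subset _ _))) hfs
  have hgf : r * ∫ x, ‖gradient f x‖ ≤ c₂ * I + r ^ p * ∫ x, χ x ^ k * ‖gradient u x‖ ^ p := by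
    rw [← integral_const_mul, ← integral_const_mul, ← integral_const_mul, ← integral_indicator (hBm _),
      ← integral_add]
    rotate_left
    · exact (integrable_indicator_iff (hBm _)).2 (iob (by fun_prop) _ _)
    · refine Continuous.integrable_of_hasCompactSupport (by fun_prop) ?_
      refine HasCompactSupport.intro hχc (fun x hx => ?_)
      rw [image_eq_zero_of_notMem_tsupport hx, zero_pow (by omega)]; ring
    refine integral_mono ?_ ?_ (fun x => ?_)
    · refine Continuous.integrable_of_hasCompactSupport (by have := cont_grad hfc1; fun_prop) ?_
      refine HasCompactSupport.intro hfcs (fun x hx => ?_)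
      rw [grad_zero_of_nmem hx]; simp
    · refine Integrable.add ((integrable_indicator_iff (hBm _)).2 (iob (by fun_prop) _ _)) ?_
      refine Continuous.integrable_of_hasCompactSupport (by fun_prop) ?_
      refine HasCompactSupport.intro hχc (fun x hx => ?_)
      rw [image_eq_zero_of_notMem_tsupport hx, zero_pow (by omega)]; ring
    · simp only [Pi.add_apply]
      have hχk0 : 0 ≤ χ x ^ k := pow_nonneg (hχ0 x) _
      by_cases hx : x ∈ Metric.closedBall y (2 * r)
      · rw [Set.indicator_of_mem hx]
        have hχk : HasGradientAt (fun y => χ y ^ k) ((k * χ x ^ (k - 1)) • gradient χ x) x :=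
          hg_comp (hasDerivAt_pow k (χ x)) (hg_of_contDiff (test_c1 hχ) x)
        have hug : HasGradientAt (fun y => (max (u y - q) 0) ^ p)
            ((p * (max (u x - q) 0) ^ (p - 1)) • gradient u x) x := by
          have h0 := hg_add (hg_of_contDiff (test_c1 hu) x) (hg_const (-q))
          rw [add_zero] at h0
          have := hg_comp (f := fun y => u y + -q) (h := fun t : ℝ => (max t 0) ^ p) (pos_rpow_deriv hp _) h0
          simpa [← sub_eq_add_neg] using this
        have hfg : gradient f x = _ := (hg_mul hug hχk).gradient
        rw [hfg]
        set a := max (u x - q) 0 with ha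
        have ha0 : 0 ≤ a := le_max_right _ _
        have hau : a ≤ u x := max_le (by linarith) (hu0 x)
        have hap : a ^ p ≤ u x ^ p := by gcongr
        have hχk1 : χ x ^ k ≤ 1 := pow_le_one₀ (hχ0 x) (hχ1 x)
        have hχk11 : χ x ^ (k - 1) ≤ 1 := pow_le_one₀ (hχ0 x) (hχ1 x)
        have hχk10 : 0 ≤ χ x ^ (k - 1) := pow_nonneg (hχ0 x) _
        have hap0 : 0 ≤ a ^ p := by positivity
        have hyg := young hp ha0 (mul_nonneg hr.le (norm_nonneg (gradient u x)))
        have hgx := hχg x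
        calc r * ‖a ^ p • (k * χ x ^ (k - 1)) • gradient χ x + χ x ^ k • (p * a ^ (p - 1)) • gradient u x‖
            ≤ r * (a ^ p * ((k * χ x ^ (k - 1)) * ‖gradient χ x‖) + χ x ^ k * ((p * a ^ (p - 1)) * ‖gradient u x‖)) := by
              gcongr
              refine (norm_add_le _ _).trans (le_of_eq ?_)
              rw [norm_smul, norm_smul, norm_smul, norm_smul, Real.norm_of_nonneg hap0,
                Real.norm_of_nonneg (by positivity : 0 ≤ k * χ x ^ (k - 1)), Real.norm_of_nonneg hχk0,
                Real.norm_of_nonneg (by positivity : 0 ≤ p * a ^ (p - 1))]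
          _ ≤ r * (u x ^ p * ((k * 1) * (C₀ / r)) + χ x ^ k * ((p * a ^ (p - 1)) * ‖gradient u x‖)) := by
              have := hup0 x
              gcongr
          _ = k * C₀ * u x ^ p + χ x ^ k * (p * a ^ (p - 1) * (r * ‖gradient u x‖)) := by field_simp
          _ ≤ k * C₀ * u x ^ p + χ x ^ k * ((p - 1) * a ^ p + (r * ‖gradient u x‖) ^ p) := by gcongr
          _ = k * C₀ * u x ^ p + χ x ^ k * ((p - 1) * a ^ p) + r ^ p * (χ x ^ k * ‖gradient u x‖ ^ p) := by
              rw [Real.mul_rpow hr.le (norm_nonneg _)]; ring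
          _ ≤ k * C₀ * u x ^ p + 1 * ((p - 1) * u x ^ p) + r ^ p * (χ x ^ k * ‖gradient u x‖ ^ p) := by
              have hp1 : 0 ≤ p - 1 := by linarith
              gcongr
          _ = _ := by rw [hc₂]; ring
      · rw [Set.indicator_of_notMem hx]
        have : x ∉ tsupport f := by
          intro h
          have : tsupport f ⊆ Metric.closedBall y (2 * r) :=
            closure_minimal (hfs.trans (Set.sep_subset _ _)) Metric.isClosed_closedBall
          exact hx (this h)
        rw [grad_zero_of_nmem this, norm_zero, mul_zero]
        positivity
  have hintf : ∫ x, f x ≤ Cg * (2 * om d ^ ((1:ℝ) / d)) * (c₂ + c₁ + 2) * κ * (I + energyQ Ω V p u) := by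
    have hd0 : (d:ℝ) ≠ 0 := by positivity
    have h1 : volume.real {z ∈ Metric.closedBall y (2 * r) | q < u z} ^ ((1:ℝ) / d) ≤ κ * (2 * r) * om d ^ ((1:ℝ) / d) := by
      calc _ ≤ (κ ^ d * volume.real (Metric.closedBall y (2 * r))) ^ ((1:ℝ) / d) := by gcongr
        _ = ((κ * (2 * r)) ^ d * om d) ^ ((1:ℝ) / d) := by
          rw [vol_ball y (by positivity), mul_pow]; ring_nf
        _ = _ := by
          rw [Real.mul_rpow (by positivity) hom.le, ← Real.rpow_natCast, ← Real.rpow_mul (by positivity), mul_one_div_cancel hd0,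
            Real.rpow_one]
    have h2 : ∫ x, f x = ∫ x, |f x| := by
      congr 1; ext x; rw [abs_of_nonneg (hf0 x)]
    have h3 : 0 ≤ ∫ x, ‖gradient f x‖ := integral_nonneg (fun _ => norm_nonneg _)
    rw [h2]
    calc _ ≤ _ := hg1
      _ ≤ Cg * (κ * (2 * r) * om d ^ ((1:ℝ) / d)) * ∫ x, ‖gradient f x‖ := by gcongr
      _ = Cg * (2 * om d ^ ((1:ℝ) / d)) * κ * (r * ∫ x, ‖gradient f x‖) := by ring
      _ ≤ Cg * (2 * om d ^ ((1:ℝ) / d)) * κ * ((c₂ + c₁ + 2) * (I + energyQ Ω V p u)) := by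
          refine mul_le_mul_of_nonneg_left ?_ (by positivity)
          nlinarith [mul_nonneg hc₂0 hen, mul_nonneg hc₁0 hen]
      _ = _ := by ring
  have hfin : ∫ z in Metric.closedBall y r, u z ^ p ≤ 2 ^ p * (q ^ p * volume.real (Metric.closedBall y r)) + 2 ^ p * ∫ x, f x := by
    have hfi : Integrable f := hfc1.continuous.integrable_of_hasCompactSupport hfcs
    have hfcont := hfc1.continuous
    calc ∫ z in Metric.closedBall y r, u z ^ p ≤ ∫ z in Metric.closedBall y r, (2 ^ p * q ^ p + 2 ^ p * f z) := by
          refine setIntegral_mono_on (iob hup _ _) (iob (by fun_prop) _ _) (hBm r) (fun x hx => ?_)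
          simp only [hf]
          rw [hχ11 x hx, one_pow, mul_one, ← mul_add]
          refine le_trans ?_ (add_rpow_le hpp hq (le_max_right _ _))
          refine Real.rpow_le_rpow (hu0 x) ?_ hpp.le
          linarith [le_max_left (u x - q) 0]
      _ = 2 ^ p * (q ^ p * volume.real (Metric.closedBall y r)) + 2 ^ p * ∫ z in Metric.closedBall y r, f z := by
          rw [integral_add (iob (by fun_prop) _ _) (iob (by fun_prop) _ _), setIntegral_const, integral_const_mul, smul_eq_mul]
          ring
      _ ≤ _ := by
          have := setIntegral_le_integral (s := Metric.closedBall y r) hfi (Eventually.of_forall hf0)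
          have h2p : (0:ℝ) ≤ 2 ^ p := by positivity
          have := mul_le_mul_of_nonneg_left this h2p
          linarith
  calc _ ≤ _ := hfin
    _ ≤ 2 ^ p * (q ^ p * volume.real (Metric.closedBall y r)) + 2 ^ p * (Cg * (2 * om d ^ ((1:ℝ) / d)) * (c₂ + c₁ + 2) * κ * (I + energyQ Ω V p u)) := by gcongr
    _ = _ := by ring

end chain
end CP

namespace CP

section lemH
variable {d : ℕ} {Ω : Set (Euc d)} {V : Euc d → ℝ} {p : ℝ}

lemma covering (d : ℕ) : ∃ N : ℕ, ∀ (x : Euc d) (r : ℝ), 0 < r → ∃ T : Finset (Euc d), T.card ≤ N ∧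
    (∀ y ∈ T, y ∈ Metric.closedBall x (2 * r)) ∧
    Metric.closedBall x (2 * r) ⊆ ⋃ y ∈ T, Metric.closedBall y (r / 2) := by
  classical
  obtain ⟨t, htf, hfin, hcov⟩ := (isCompact_closedBall (0 : Euc d) 2).finite_cover_balls (e := 1/2) (by norm_num)
  refine ⟨hfin.toFinset.card, fun x r hr => ⟨hfin.toFinset.image (fun z => x + r • z), Finset.card_image_le, ?_, ?_⟩⟩
  · intro y hy
    simp only [Finset.mem_image, Set.Finite.mem_toFinset] at hy
    obtain ⟨z, hz, rfl⟩ := hy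
    have := htf hz
    rw [mem_closedBall_zero_iff] at this
    rw [Metric.mem_closedBall, dist_self_add_left, norm_smul, Real.norm_of_nonneg hr.le]
    nlinarith
  · intro w hw
    rw [Metric.mem_closedBall, dist_eq_norm] at hw
    have h1 : r⁻¹ • (w - x) ∈ Metric.closedBall (0 : Euc d) 2 := by
      rw [mem_closedBall_zero_iff, norm_smul, Real.norm_of_nonneg (by positivity), inv_mul_le_iff₀ hr]
      linarith
    have h2 := hcov h1
    simp only [Set.mem_iUnion] at h2
    obtain ⟨z, hz, hzw⟩ := h2
    simp only [Set.mem_iUnion]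
    refine ⟨x + r • z, ?_, ?_⟩
    · simp only [Finset.mem_image, Set.Finite.mem_toFinset]
      exact ⟨z, hz, rfl⟩
    · rw [Metric.mem_ball, dist_eq_norm] at hzw
      rw [Metric.mem_closedBall, dist_eq_norm]
      have : w - (x + r • z) = r • (r⁻¹ • (w - x) - z) := by
        rw [smul_sub, smul_smul, mul_inv_cancel₀ hr.ne', one_smul]; abel
      rw [this, norm_smul, Real.norm_of_nonneg hr.le]
      nlinarith

lemma cover_bound {N : ℕ} {f : Euc d → ℝ} (hf : Continuous f) (hf0 : ∀ x, 0 ≤ f x) {x : Euc d} {r b : ℝ} (hb : 0 ≤ b)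
    {T : Finset (Euc d)} (hT : T.card ≤ N)
    (hc : Metric.closedBall x (2 * r) ⊆ ⋃ y ∈ T, Metric.closedBall y (r / 2))
    (h : ∀ y ∈ T, ∫ z in Metric.closedBall y (r / 2), f z ≤ b) :
    ∫ z in Metric.closedBall x (2 * r), f z ≤ N * b := by
  have hm : ∀ (y : Euc d) r, MeasurableSet (Metric.closedBall y r) := fun y r => Metric.isClosed_closedBall.measurableSet
  have hi : ∀ y ∈ T, Integrable ((Metric.closedBall y (r / 2)).indicator f) := fun y _ =>
      (integrable_indicator_iff (hm _ _)).2 (iob hf _ _)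
  have hfi : ∀ y z, 0 ≤ (Metric.closedBall y (r / 2)).indicator f z := fun y z => 
    Set.indicator_nonneg (fun _ _ => hf0 _) z
  calc ∫ z in Metric.closedBall x (2 * r), f z ≤ ∫ z, ∑ y ∈ T, (Metric.closedBall y (r / 2)).indicator f z := by
        refine set_le_of_ind (hm _ _) (hm x r) (integrable_finsetSum _ hi) (fun z => Finset.sum_nonneg (fun y _ => hfi y z)) ?_ (iob hf _ _)
        intro z hz
        have := hc hz
        simp only [Set.mem_iUnion] at this
        obtain ⟨y, hy, hyz⟩ := this
        refine le_trans (le_of_eq ?_) (Finset.single_le_sum (f := fun y => (Metric.closedBall y (r / 2)).indicator f z) (fun y _ => hfi y z) hy)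
        simp [Set.indicator_of_mem hyz]
    _ = ∑ y ∈ T, ∫ z in Metric.closedBall y (r / 2), f z := by
        rw [integral_finsetSum _ hi]
        refine Finset.sum_congr rfl (fun y _ => ?_)
        rw [integral_indicator (hm _ _)]
    _ ≤ ∑ y ∈ T, b := Finset.sum_le_sum h
    _ = T.card * b := by simp
    _ ≤ _ := by gcongr

lemma iterate {X : Type*} (D : ℕ → Set X) (f : ℕ → X → ℝ) {A M θ S : ℝ} (hA : 0 ≤ A) (hM : 1 ≤ M)
    (hθ : 0 ≤ θ) (hθM : θ * M ≤ 1 / 2) (hS0 : 0 ≤ S) (hS : ∀ n x, f n x ≤ S)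
    (h : ∀ n, ∀ x ∈ D n, ∀ b, 0 ≤ b → (∀ y ∈ D (n + 1), f (n + 1) y ≤ b) → f n x ≤ A * M ^ n + θ * b)
    {x₀ : X} (hx₀ : x₀ ∈ D 0) : f 0 x₀ ≤ 2 * A := by
  have h1 : ∀ k n, ∀ x ∈ D n, f n x ≤ 2 * A * M ^ n + θ ^ k * S := by
    intro k
    induction k with
    | zero =>
      intro n x _
      have : 0 ≤ 2 * A * M ^ n := by positivity
      have := hS n x
      rw [pow_zero]; linarith
    | succ k ih =>
      intro n x hx
      have h2 := h n x hx (2 * A * M ^ (n + 1) + θ ^ k * S) (by positivity) (fun y hy => ih (n + 1) y hy)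
      refine h2.trans ?_
      have h3 : θ * (2 * A * M ^ (n + 1)) ≤ A * M ^ n := by
        have : θ * (2 * A * M ^ (n + 1)) = (θ * M) * (2 * A * M ^ n) := by ring
        rw [this]
        have : 0 ≤ 2 * A * M ^ n := by positivity
        nlinarith
      have h4 : θ * (θ ^ k * S) = θ ^ (k + 1) * S := by ring
      rw [mul_add]
      linarith
  have hθ1 : θ < 1 := by nlinarith
  have h2 : Tendsto (fun k => 2 * A * M ^ 0 + θ ^ k * S) atTop (𝓝 (2 * A * M ^ 0 + 0 * S)) :=
    ((tendsto_pow_atTop_nhds_zero_of_lt_one hθ hθ1).mul_const S).const_add _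
  have := ge_of_tendsto' h2 (fun k => h1 k 0 x₀ hx₀)
  simpa using this

set_option maxHeartbeats 1000000 in
lemma lemmaH (hd : 2 ≤ d) (hp : 1 < p) (hV : LocBddPotential Ω V)
    (hQ : ∀ u : Euc d → ℝ, IsTestFun Ω u → 0 ≤ energyQ Ω V p u) {Λ : ℝ} (hΛ : 0 ≤ Λ)
    {x₀ : Euc d} {R : ℝ} (hR : 0 < R) (hR1 : 16 * R ≤ 1) (hsub : Metric.closedBall x₀ (16 * R) ⊆ Ω)
    (hVb : ∀ x ∈ Metric.closedBall x₀ (16 * R), |V x| ≤ Λ) {K c₀ : ℝ} (hK : 0 ≤ K) (hc₀ : 0 < c₀) :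
    ∃ C : ℝ, 0 ≤ C ∧ ∀ u, IsTestFun Ω u → (∀ x, 0 ≤ u x) → ∀ ε, 0 < ε → energyQ Ω V p u ≤ ε →
      c₀ ≤ volume.real {x ∈ Metric.closedBall x₀ R | u x ^ p ≤ K * ε} →
      ∫ x in Metric.closedBall x₀ (R / 8), u x ^ p ≤ C * ε := by
  obtain ⟨C, hC1, hbmo⟩ := bmo hp hV hQ hΛ
  obtain ⟨C₃, hC₃, hgns⟩ := gns_step hd hp hV hQ hΛ
  obtain ⟨N, hN⟩ := covering d
  have hpp : 0 < p := by linarith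
  have hom := om_pos d
  set L : ℝ := 2 ^ d * C with hL
  have hL0 : 0 ≤ L := by positivity
  set M : ℝ := Real.exp (p * L) with hM
  have hM1 : 1 ≤ M := Real.one_le_exp (by positivity)
  set κ : ℝ := (2 * (C₃ + 1) * (N + 1) * M)⁻¹ with hκ
  have hκ0 : 0 < κ := by positivity
  set δ : ℝ := κ ^ d with hδ
  have hδ0 : 0 < δ := by positivity
  set E : ℝ := C * ((4 * R) ^ d * om d) / c₀ + 4 * L + C / δ with hE
  set A₀ : ℝ := 2 ^ p * (2 ^ p * (K + 1) * Real.exp (p * E) * om d) + C₃ * κ with hA₀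
  have hA₀0 : 0 ≤ A₀ := by positivity
  refine ⟨2 * A₀, by positivity, fun u hu hu0 ε hε hen hvol => ?_⟩
  have huc : Continuous u := hu.1.continuous
  have hup : Continuous (fun x => u x ^ p) := huc.rpow_const (fun _ => Or.inr (by linarith))
  have hup0 : ∀ x, 0 ≤ u x ^ p := fun x => Real.rpow_nonneg (hu0 x) _
  have hupi : Integrable (fun x => u x ^ p) := hup.integrable_of_hasCompactSupport
    (hu.2.1.comp_left (g := fun t : ℝ => t ^ p) (by simp [hpp.ne']))
  set rr : ℕ → ℝ := fun n => R / 8 * (1 / 2) ^ n with hrr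
  have hiter := iterate (fun n => Metric.closedBall x₀ (R * (2 - (1 / 2) ^ n)))
    (fun n x => ∫ z in Metric.closedBall x (rr n), u z ^ p) (A := A₀ * ε) (M := M) (θ := C₃ * κ * N)
    (S := ∫ z, u z ^ p) (by positivity) hM1 (by positivity) ?_ (integral_nonneg hup0)
    (fun n x => setIntegral_le_integral hupi (Eventually.of_forall hup0)) ?_
    (x₀ := x₀) (Metric.mem_closedBall_self (by norm_num; exact hR.le))
  · simp only [hrr, pow_zero, mul_one] at hiter
    linarith
  · have : C₃ * κ * N * M = C₃ / (C₃ + 1) * (N / (N + 1)) * (1 / 2) := by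
      rw [hκ]; field_simp
    rw [this]
    have h1 : C₃ / (C₃ + 1) ≤ 1 := by rw [div_le_one (by positivity)]; linarith
    have h2 : (N:ℝ) / (N + 1) ≤ 1 := by rw [div_le_one (by positivity)]; linarith
    have h3 : 0 ≤ C₃ / (C₃ + 1) := by positivity
    have h4 : 0 ≤ (N:ℝ) / (N + 1) := by positivity
    nlinarith
  · intro n x hx b hb hbn
    rw [Metric.mem_closedBall] at hx
    have hpn : (0:ℝ) < (1 / 2) ^ n := by positivity
    have hpn1 : ((1:ℝ) / 2) ^ n ≤ 1 := pow_le_one₀ (by norm_num) (by norm_num)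
    have hx2 : dist x x₀ ≤ 2 * R := by nlinarith
    set r := rr n with hr
    have hr0 : 0 < r := by rw [hr, hrr]; positivity
    have hr8 : r ≤ R / 8 := by
      simp only [hr, hrr]
      nlinarith
    have hr1 : r ≤ 1 := by linarith
    have hbig : ∀ ρ, ρ ≤ 14 * R → Metric.closedBall x ρ ⊆ Metric.closedBall x₀ (16 * R) := fun ρ hρ =>
      Metric.closedBall_subset_closedBall' (by linarith)
    -- scale
    set s : ℝ := (ε / r ^ d) ^ (1 / p) with hs
    have hs0 : 0 < s := by positivity
    have hsp : s ^ p = ε / r ^ d := by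
      rw [hs, ← Real.rpow_mul (by positivity), one_div_mul_cancel hpp.ne', Real.rpow_one]
    set F : Euc d → ℝ := fun z => Real.log (u z + s) with hF
    have hz : ∀ x, 0 < u x + s := fun x => by linarith [hu0 x]
    have hFc : Continuous F := (huc.add continuous_const).log (fun x => (hz x).ne')
    have hFb : ∀ j ≤ n + 4, ∫ z in Metric.closedBall x (2 ^ j * (2 * r)), |F z - ⨍ w in Metric.closedBall x (2 ^ j * (2 * r)), F w| ≤
      C * volume.real (Metric.closedBall x (2 ^ j * (2 * r))) := by
      intro j hj
      have h1 : (2:ℝ) ^ j * (2 * r) ≤ 4 * R := by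
        calc (2:ℝ) ^ j * (2 * r) ≤ 2 ^ (n + 4) * (2 * r) := by gcongr; norm_num
          _ = 4 * R * (2 ^ n * (1 / 2) ^ n) := by simp only [hr, hrr]; ring
          _ = 4 * R := by rw [← mul_pow]; norm_num
      have h2 : r ≤ 2 ^ j * (2 * r) := by
        have : (1:ℝ) ≤ 2 ^ j := one_le_pow₀ (by norm_num)
        nlinarith
      refine hbmo x (2 ^ j * (2 * r)) (by positivity) (by linarith) ((hbig _ (by linarith)).trans hsub)
        (fun z hz => hVb z (hbig _ (by linarith) hz)) u hu hu0 s hs0 ?_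
      calc energyQ Ω V p u ≤ ε := hen
        _ = s ^ p * r ^ d := by rw [hsp]; field_simp
        _ ≤ _ := by gcongr
    have hchain := mean_chain hFc x (by positivity : 0 < 2 * r) (n + 4) hFb
    have hR4 : (2:ℝ) ^ (n + 4) * (2 * r) = 4 * R := by
      calc (2:ℝ) ^ (n + 4) * (2 * r) = 4 * R * (2 ^ n * (1 / 2) ^ n) := by simp only [hr, hrr]; ring
          _ = 4 * R := by rw [← mul_pow]; norm_num
    have hFJ := hFb (n + 4) le_rfl
    rw [hR4] at hchain hFJ
    set m₀ := ⨍ z in Metric.closedBall x (2 * r), F z with hm₀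
    set mJ := ⨍ z in Metric.closedBall x (4 * R), F z with hmJ
    set s₀ : ℝ := (K * ε) ^ (1 / p) with hs₀
    have hs₀0 : 0 ≤ s₀ := by positivity
    have hs₀p : s₀ ^ p = K * ε := by
      rw [hs₀, ← Real.rpow_mul (by positivity), one_div_mul_cancel hpp.ne', Real.rpow_one]
    have hupper := mean_upper hFc x (a := Real.log (s₀ + s)) hc₀ (by positivity) hFJ
      (S := {x ∈ Metric.closedBall x₀ R | u x ^ p ≤ K * ε})
      (Metric.isClosed_closedBall.measurableSet.inter (measurableSet_le hup.measurable measurable_const))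
      ?_ hvol ?_
    rotate_left
    · intro z hz
      have h1 := hz.1
      rw [Metric.mem_closedBall] at h1 ⊢
      rw [dist_comm] at hx2
      linarith [dist_triangle z x₀ x]
    · intro z hz
      refine Real.log_le_log (by linarith [hu0 z]) ?_
      have h1 := hz.2
      rw [← hs₀p] at h1
      have := (Real.rpow_le_rpow_iff (hu0 z) hs₀0 hpp).1 h1
      linarith
    rw [vol_ball x (by positivity)] at hupper
    set q := Real.exp (m₀ + C / δ) with hq
    have hq0 : 0 < q := Real.exp_pos _
    have hqle : q ≤ (s₀ + s) * Real.exp (E + n * L) := by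
      have : q ≤ Real.exp (Real.log (s₀ + s) + (E + n * L)) := by
        rw [hq]
        refine Real.exp_le_exp.2 ?_
        rw [hE]
        push_cast at hchain
        linarith
      rwa [Real.exp_add, Real.exp_log (by positivity)] at this
    have hqp : q ^ p * volume.real (Metric.closedBall x r) ≤ 2 ^ p * (K + 1) * Real.exp (p * E) * om d * M ^ n * ε := by
      rw [vol_ball x hr0]
      have h1 : (Real.exp (E + n * L)) ^ p = Real.exp (p * E) * M ^ n := by
        rw [hM, ← Real.exp_mul, ← Real.exp_nat_mul, ← Real.exp_add]; ring_nf
      have h2 : (s₀ + s) ^ p ≤ 2 ^ p * (K * ε + ε / r ^ d) := by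
        rw [← hs₀p, ← hsp]; exact add_rpow_le hpp hs₀0 hs0.le
      have h3 : (K * ε + ε / r ^ d) * r ^ d ≤ (K + 1) * ε := by
        have e : (K * ε + ε / r ^ d) * r ^ d = K * ε * r ^ d + ε := by field_simp
        have : r ^ d ≤ 1 := pow_le_one₀ hr0.le hr1
        have : K * ε * r ^ d ≤ K * ε * 1 := by gcongr
        rw [e]; linarith
      calc q ^ p * (r ^ d * om d) ≤ ((s₀ + s) * Real.exp (E + n * L)) ^ p * (r ^ d * om d) := by gcongr
        _ = (s₀ + s) ^ p * (Real.exp (p * E) * M ^ n) * (r ^ d * om d) := by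
            rw [Real.mul_rpow (by positivity) (Real.exp_pos _).le, h1]
        _ ≤ (2 ^ p * (K * ε + ε / r ^ d)) * (Real.exp (p * E) * M ^ n) * (r ^ d * om d) := by gcongr
        _ = 2 ^ p * ((K * ε + ε / r ^ d) * r ^ d) * (Real.exp (p * E) * M ^ n) * om d := by ring
        _ ≤ 2 ^ p * ((K + 1) * ε) * (Real.exp (p * E) * M ^ n) * om d := by gcongr
        _ = _ := by ring
    have hF0 := hFb 0 (by omega)
    rw [pow_zero, one_mul] at hF0
    have hch := cheb hFc x (by linarith : 0 < C) hδ0 hF0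
      (S := {z ∈ Metric.closedBall x (2 * r) | q < u z})
      (Metric.isClosed_closedBall.measurableSet.inter (measurableSet_lt measurable_const huc.measurable))
      (Set.sep_subset _ _) (fun z hz => by
        have : q < u z := hz.2
        show m₀ + C / δ ≤ Real.log (u z + s)
        rw [Real.le_log_iff_exp_le (by linarith [hu0 z])]
        linarith)
    have hstep := hgns x r hr0 hr1 ((hbig _ (by linarith)).trans hsub) (fun z hz => hVb z (hbig _ (by linarith) hz))
      u hu hu0 q hq0.le κ hκ0.le hch
    obtain ⟨T, hTN, hTb, hTc⟩ := hN x r hr0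
    have hcb := cover_bound hup hup0 hb hTN hTc (fun y hy => by
      have h1 := hTb y hy
      have e : r / 2 = rr (n + 1) := by simp only [hr, hrr]; ring
      rw [e]
      apply hbn
      rw [Metric.mem_closedBall] at h1 ⊢
      have e2 : 2 * r = R * ((1 / 2) ^ n / 4) := by simp only [hr, hrr]; ring
      have e3 : ((1:ℝ) / 2) ^ (n + 1) = (1 / 2) ^ n / 2 := by ring
      have h2 := dist_triangle y x x₀
      rw [e3]
      nlinarith)
    have hMn : 1 ≤ M ^ n := one_le_pow₀ hM1
    calc ∫ z in Metric.closedBall x r, u z ^ p ≤ _ := hstep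
      _ ≤ 2 ^ p * (2 ^ p * (K + 1) * Real.exp (p * E) * om d * M ^ n * ε) + C₃ * κ * (N * b + ε) := by gcongr
      _ = 2 ^ p * (2 ^ p * (K + 1) * Real.exp (p * E) * om d) * ε * M ^ n + C₃ * κ * ε * 1 + C₃ * κ * N * b := by ring
      _ ≤ 2 ^ p * (2 ^ p * (K + 1) * Real.exp (p * E) * om d) * ε * M ^ n + C₃ * κ * ε * M ^ n + C₃ * κ * N * b := by gcongr
      _ = _ := by rw [hA₀]; ring

end lemH
end CP

namespace CP

section stepA
variable {d : ℕ} {Ω : Set (Euc d)} {p : ℝ}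

lemma mod1 {E : Type*} [NormedAddCommGroup E] [InnerProductSpace ℝ E] (hp : 1 < p) {η τ h s z : ℝ}
    (hmod : ∀ h, 0 ≤ h → h ≤ τ → ∀ x y : E,
      |‖x + h • y‖ ^ p - ‖x‖ ^ p - h * (p * ‖x‖ ^ (p - 2) * ⟪x, y⟫)| ≤ h * η * (‖x‖ + ‖y‖) ^ p)
    (hh : 0 ≤ h) (hτ : h ≤ τ) (hs : 0 < s) (hsz : s ≤ z) (X Y : E) :
    |‖X + (h * (s ^ p * z ^ (-p)) * z) • Y‖ ^ p - ‖X‖ ^ p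
      - h * s ^ p * (p * ‖z⁻¹ • X‖ ^ (p - 2) * ⟪z⁻¹ • X, Y⟫)| ≤ h * η * s ^ p * (‖X‖ / z + ‖Y‖) ^ p := by
  have hz : 0 < z := by linarith
  have hpp : 0 < p := by linarith
  set lam := s ^ p * z ^ (-p) with hlam
  have hlam0 : 0 < lam := by positivity
  have hlz : lam * z ^ p = s ^ p := by
    rw [hlam, mul_assoc, ← Real.rpow_add hz]; simp
  have hlam1 : lam ≤ 1 := by
    have : lam = s ^ p / z ^ p := by rw [hlam, Real.rpow_neg hz.le]; rfl
    rw [this, div_le_one (by positivity)]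
    exact Real.rpow_le_rpow hs.le hsz hpp.le
  have h1 := hmod (h * lam) (by positivity) (by nlinarith) (z⁻¹ • X) Y
  have e1 : X + (h * lam * z) • Y = z • (z⁻¹ • X + (h * lam) • Y) := by
    rw [smul_add, smul_smul, smul_smul, mul_inv_cancel₀ hz.ne', one_smul]
    congr 2; ring
  have e2 : ‖X‖ = z * ‖z⁻¹ • X‖ := by
    rw [norm_smul, norm_inv, Real.norm_of_nonneg hz.le]; field_simp
  have e3 : ‖X‖ / z = ‖z⁻¹ • X‖ := by
    rw [e2]; field_simp
  have e4 : ‖X + (h * lam * z) • Y‖ ^ p = z ^ p * ‖z⁻¹ • X + (h * lam) • Y‖ ^ p := by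
    rw [e1, norm_smul, Real.norm_of_nonneg hz.le, Real.mul_rpow hz.le (norm_nonneg _)]
  have e5 : ‖X‖ ^ p = z ^ p * ‖z⁻¹ • X‖ ^ p := by
    rw [e2, Real.mul_rpow hz.le (norm_nonneg _)]
  rw [e4, e5, e3, ← hlz]
  set G := p * ‖z⁻¹ • X‖ ^ (p - 2) * ⟪z⁻¹ • X, Y⟫
  have hzp : 0 < z ^ p := by positivity
  have e6 : z ^ p * ‖z⁻¹ • X + (h * lam) • Y‖ ^ p - z ^ p * ‖z⁻¹ • X‖ ^ p - h * (lam * z ^ p) * G =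
    z ^ p * (‖z⁻¹ • X + (h * lam) • Y‖ ^ p - ‖z⁻¹ • X‖ ^ p - h * lam * G) := by ring
  rw [e6, abs_mul, abs_of_pos hzp]
  calc _ ≤ z ^ p * (h * lam * η * (‖z⁻¹ • X‖ + ‖Y‖) ^ p) := mul_le_mul_of_nonneg_left h1 hzp.le
    _ = _ := by ring

/-- Pointwise second-order-free perturbation inequality. -/
lemma pert_pw (hp : 1 < p) {η τ h s : ℝ}
    (hmodE : ∀ h, 0 ≤ h → h ≤ τ → ∀ x y : Euc d,
      |‖x + h • y‖ ^ p - ‖x‖ ^ p - h * (p * ‖x‖ ^ (p - 2) * ⟪x, y⟫)| ≤ h * η * (‖x‖ + ‖y‖) ^ p)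
    (hmodR : ∀ h, 0 ≤ h → h ≤ τ → ∀ x y : ℝ,
      |‖x + h • y‖ ^ p - ‖x‖ ^ p - h * (p * ‖x‖ ^ (p - 2) * ⟪x, y⟫)| ≤ h * η * (‖x‖ + ‖y‖) ^ p)
    (hη : 0 ≤ η) (hh : 0 ≤ h) (hτ : h ≤ τ) (hs : 0 < s) {u ψ a0 a1 Λ M : ℝ} {X P : Euc d} (hu : 0 ≤ u)
    (hψ : |ψ| ≤ M) (hP : ‖P‖ ≤ M) (h0 : |a0| ≤ Λ) (h1 : |a1| ≤ Λ) :
    let z := u + s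
    let c := h * (s ^ p * z ^ (-p)) * z
    let Y := P - ((p - 1) * ψ / z) • X
    (‖X + c • Y‖ ^ p + a0 * |u + c * ψ| ^ p) + (‖X + (-c) • Y‖ ^ p + a1 * |u + (-c) * ψ| ^ p) ≤
      (‖X‖ ^ p + a0 * |u| ^ p) + (‖X‖ ^ p + a1 * |u| ^ p)
        - h * p * s ^ p * ((a1 - a0) * ((u / z) ^ (p - 1) * ψ))
        + h * η * s ^ p * (2 * (1 + p * M) ^ p * 2 ^ p * (‖X‖ ^ p / z ^ p + 1) + 2 * Λ * (1 + M) ^ p) := by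
  intro z c Y
  have hpp : 0 < p := by linarith
  have hz : 0 < z := by simp only [z]; linarith
  have hsz : s ≤ z := by simp only [z]; linarith
  have hM : 0 ≤ M := (abs_nonneg _).trans hψ
  have hΛ : 0 ≤ Λ := (abs_nonneg _).trans h0
  have v1 := mod1 hp hmodE hh hτ hs hsz X Y
  have v2 := mod1 hp hmodE hh hτ hs hsz X (-Y)
  have r1 := mod1 hp hmodR hh hτ hs hsz u ψ
  have r2 := mod1 hp hmodR hh hτ hs hsz u (-ψ)
  have ec : h * (s ^ p * z ^ (-p)) * z = c := rfl
  rw [ec] at v1 v2 r1 r2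
  rw [smul_neg, ← neg_smul, inner_neg_right, norm_neg] at v2
  have hr0 : 0 ≤ u / z := by positivity
  have hr1 : u / z ≤ 1 := by rw [div_le_one hz]; simp only [z]; linarith
  have er : ∀ y : ℝ, p * ‖z⁻¹ • u‖ ^ (p - 2) * ⟪z⁻¹ • u, y⟫ = p * ((u / z) ^ (p - 1) * y) := by
    intro y
    have e : z⁻¹ • u = u / z := by rw [smul_eq_mul]; field_simp
    rw [e, Real.norm_of_nonneg hr0]
    have e2 : ⟪u / z, y⟫ = u / z * y := by simp [mul_comm]
    rw [e2]
    rcases hr0.eq_or_lt with h | h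
    · rw [← h, Real.zero_rpow (by linarith : p - 1 ≠ 0)]; simp
    · have : (u / z) ^ (p - 1) = (u / z) ^ (p - 2) * (u / z) := by
        rw [← Real.rpow_add_one h.ne']; ring_nf
      rw [this]; ring
  rw [er] at r1 r2
  simp only [smul_eq_mul, Real.norm_eq_abs, mul_neg, abs_neg] at r1 r2
  have hhs : 0 ≤ h * η * s ^ p := by positivity
  have hY : ‖Y‖ ≤ M + (p - 1) * M * (‖X‖ / z) := by
    calc ‖Y‖ ≤ ‖P‖ + ‖((p - 1) * ψ / z) • X‖ := norm_sub_le _ _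
      _ = ‖P‖ + (p - 1) * |ψ| * (‖X‖ / z) := by
        rw [norm_smul, Real.norm_eq_abs, abs_div, abs_mul, abs_of_pos hz, abs_of_pos (by linarith : 0 < p - 1)]
        ring
      _ ≤ _ := by
        have : 0 ≤ p - 1 := by linarith
        gcongr
  have hxz : 0 ≤ ‖X‖ / z := by positivity
  have hA : (‖X‖ / z + ‖Y‖) ^ p ≤ (1 + p * M) ^ p * 2 ^ p * (‖X‖ ^ p / z ^ p + 1) := by
    calc (‖X‖ / z + ‖Y‖) ^ p ≤ ((1 + p * M) * (‖X‖ / z + 1)) ^ p := by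
          refine Real.rpow_le_rpow (by positivity) ?_ hpp.le
          nlinarith [mul_nonneg hM hxz, mul_nonneg hpp.le hM]
      _ = (1 + p * M) ^ p * (‖X‖ / z + 1) ^ p := Real.mul_rpow (by positivity) (by positivity)
      _ ≤ (1 + p * M) ^ p * (2 ^ p * ((‖X‖ / z) ^ p + 1 ^ p)) :=
          mul_le_mul_of_nonneg_left (add_rpow_le hpp hxz zero_le_one) (by positivity)
      _ = _ := by rw [Real.div_rpow (norm_nonneg _) hz.le, Real.one_rpow]; ring
  have hB : (|u| / z + |ψ|) ^ p ≤ (1 + M) ^ p := by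
    rw [abs_of_nonneg hu]
    exact Real.rpow_le_rpow (by positivity) (by linarith) hpp.le
  have hA' := mul_le_mul_of_nonneg_left hA hhs
  have hB' := mul_le_mul_of_nonneg_left hB hhs
  have v1' := (abs_le.1 v1).2
  have v2' := (abs_le.1 v2).2
  have key : ∀ a b e : ℝ, |a| ≤ Λ → |b| ≤ e → a * b ≤ Λ * e := fun a b e ha hb =>
    (le_abs_self _).trans (by rw [abs_mul]; exact mul_le_mul ha hb (abs_nonneg _) hΛ)
  have k1 := key a0 _ _ h0 (r1.trans hB')
  have k2 := key a1 _ _ h1 (r2.trans hB')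
  have ec2 : u + -c * ψ = u + -(c * ψ) := by ring
  rw [ec2]
  nlinarith

end stepA
end CP

namespace CP

section stepA2
variable {d : ℕ} {Ω : Set (Euc d)} {p : ℝ} {V₀ V₁ : Euc d → ℝ}

lemma int_E {V u : Euc d → ℝ} (hp : 1 < p) (hV : LocBddPotential Ω V) (hu : IsTestFun Ω u) :
    Integrable (fun x => ‖gradient u x‖ ^ p + V x * |u x| ^ p) :=
  (int_gradp hp hu).add (int_Vp hp hV hu)

lemma pert_grad (hp : 1 < p) {u ψ : Euc d → ℝ} (hu : ContDiff ℝ 1 u) (hψ : ContDiff ℝ 1 ψ) {s h : ℝ}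
    (x : Euc d) (hz : 0 < u x + s) :
    gradient (fun y => u y + ψ y * (h * s ^ p * (u y + s) ^ (1 - p))) x =
      gradient u x + (h * (s ^ p * (u x + s) ^ (-p)) * (u x + s)) •
        (gradient ψ x - ((p - 1) * ψ x / (u x + s)) • gradient u x) := by
  have hzg : HasGradientAt (fun y => (u y + s) ^ (1 - p))
      (((1 - p) * (u x + s) ^ (1 - p - 1)) • (gradient u x + 0)) x :=
    hg_comp (f := fun y => u y + s) (h := fun t => t ^ (1 - p))
      (Real.hasDerivAt_rpow_const (Or.inl hz.ne'))
      (hg_add (hg_of_contDiff hu x) (hg_const s))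
  have hg := hg_add (hg_of_contDiff hu x)
    (hg_mul (hg_of_contDiff hψ x) (hg_const_mul (h * s ^ p) hzg))
  rw [hg.gradient]
  set z := u x + s
  have e1 : z ^ (1 - p) = z ^ (-p) * z := by
    rw [← Real.rpow_add_one hz.ne']; ring_nf
  have e2 : z ^ (1 - p - 1) = z ^ (-p) := by ring_nf
  rw [e1, e2, add_zero, smul_sub, smul_smul _ ((p - 1) * ψ x / z)]
  have e3 : h * (s ^ p * z ^ (-p)) * z * ((p - 1) * ψ x / z) = h * (s ^ p * z ^ (-p)) * ((p - 1) * ψ x) := by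
    field_simp
  rw [e3]
  module

lemma pert (hp : 1 < p) (hV₀ : LocBddPotential Ω V₀) (hV₁ : LocBddPotential Ω V₁)
    (hQ₀ : ∀ u : Euc d → ℝ, IsTestFun Ω u → 0 ≤ energyQ Ω V₀ p u)
    (hQ₁ : ∀ u : Euc d → ℝ, IsTestFun Ω u → 0 ≤ energyQ Ω V₁ p u) {η τ h s : ℝ}
    (hmodE : ∀ h, 0 ≤ h → h ≤ τ → ∀ x y : Euc d,
      |‖x + h • y‖ ^ p - ‖x‖ ^ p - h * (p * ‖x‖ ^ (p - 2) * ⟪x, y⟫)| ≤ h * η * (‖x‖ + ‖y‖) ^ p)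
    (hmodR : ∀ h, 0 ≤ h → h ≤ τ → ∀ x y : ℝ,
      |‖x + h • y‖ ^ p - ‖x‖ ^ p - h * (p * ‖x‖ ^ (p - 2) * ⟪x, y⟫)| ≤ h * η * (‖x‖ + ‖y‖) ^ p)
    (hη : 0 ≤ η) (hh : 0 ≤ h) (hτ : h ≤ τ) (hs : 0 < s) {u ψ χ : Euc d → ℝ} {Λ M : ℝ}
    (hu : IsTestFun Ω u) (hu0 : ∀ x, 0 ≤ u x) (hψ : IsTestFun Ω ψ) (hχ : IsTestFun Ω χ) (hχ0 : ∀ x, 0 ≤ χ x)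
    (hχψ : ∀ x ∈ tsupport ψ, χ x = 1) (hψM : ∀ x, |ψ x| ≤ M) (hψM' : ∀ x, ‖gradient ψ x‖ ≤ M)
    (h0 : ∀ x ∈ tsupport ψ, |V₀ x| ≤ Λ) (h1 : ∀ x ∈ tsupport ψ, |V₁ x| ≤ Λ) (hΛ : 0 ≤ Λ)
    {k : ℕ} (hk : k ≠ 0) :
    h * p * s ^ p * (∫ x, (V₁ x - V₀ x) * ((u x / (u x + s)) ^ (p - 1) * ψ x)) ≤
      energyQ Ω V₀ p u + energyQ Ω V₁ p u + h * η * s ^ p *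
        ∫ x, (2 * (1 + p * M) ^ p * 2 ^ p * (χ x ^ k * (‖gradient u x‖ ^ p / (u x + s) ^ p)) +
          (2 * (1 + p * M) ^ p * 2 ^ p + 2 * Λ * (1 + M) ^ p) * χ x ^ k) := by
  have hp0 : p ≠ 0 := by linarith
  have hM : 0 ≤ M := (abs_nonneg _).trans (hψM 0)
  have hpp : 0 < p := by linarith
  have hz : ∀ x, 0 < u x + s := fun x => by linarith [hu0 x]
  have hgu : Continuous (fun x => ‖gradient u x‖ ^ p) :=
    (cont_grad (test_c1 hu)).norm.rpow_const (fun _ => Or.inr (by linarith))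
  have huc : Continuous u := hu.1.continuous
  have hχc : Continuous χ := hχ.1.continuous
  have hψc : Continuous ψ := hψ.1.continuous
  have hzp : Continuous (fun x => (u x + s) ^ p) := (huc.add continuous_const).rpow_const (fun _ => Or.inr (by linarith))
  have hzs : ContDiff ℝ (⊤ : ℕ∞) (fun x => (u x + s) ^ (1 - p)) :=
    (hu.1.add contDiff_const).rpow_const_of_ne (fun x => (hz x).ne')
  have ht : ∀ h : ℝ, IsTestFun Ω (fun x => u x + ψ x * (h * s ^ p * (u x + s) ^ (1 - p))) := fun h =>
    test_add_mul hu hψ (contDiff_const.mul hzs)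
  have q0 := hQ₀ _ (ht h)
  have q1 := hQ₁ _ (ht (-h))
  rw [energy_eq hp (ht h)] at q0
  rw [energy_eq hp (ht (-h))] at q1
  rw [energy_eq hp hu, energy_eq hp hu, ← integral_const_mul, ← integral_const_mul]
  have hrc : Continuous (fun x => (u x / (u x + s)) ^ (p - 1) * ψ x) :=
    (((huc.div (huc.add continuous_const) (fun x => (hz x).ne')).rpow_const (fun _ => Or.inr (by linarith))).mul hψc)
  have hrs : HasCompactSupport (fun x => (u x / (u x + s)) ^ (p - 1) * ψ x) := hψ.2.1.mul_left
  have hrt : tsupport (fun x => (u x / (u x + s)) ^ (p - 1) * ψ x) ⊆ Ω :=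
    (tsupport_mul_subset_right).trans hψ.2.2
  have iA : Integrable (fun x => h * p * s ^ p * ((V₁ x - V₀ x) * ((u x / (u x + s)) ^ (p - 1) * ψ x))) := by
    refine Integrable.const_mul ?_ _
    simp only [sub_mul]
    exact (int_V hV₁ hrc hrs hrt).sub (int_V hV₀ hrc hrs hrt)
  have iB : Integrable (fun x => h * η * s ^ p * (2 * (1 + p * M) ^ p * 2 ^ p * (χ x ^ k * (‖gradient u x‖ ^ p / (u x + s) ^ p)) +
          (2 * (1 + p * M) ^ p * 2 ^ p + 2 * Λ * (1 + M) ^ p) * χ x ^ k)) := by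
    refine Continuous.integrable_of_hasCompactSupport ?_ ?_
    · have : Continuous (fun x => ‖gradient u x‖ ^ p / (u x + s) ^ p) :=
        hgu.div hzp (fun x => (Real.rpow_pos_of_pos (hz x) _).ne')
      fun_prop
    refine HasCompactSupport.intro hχ.2.1 (fun x hx => ?_)
    simp [image_eq_zero_of_notMem_tsupport hx, hk]
  have iC0 := int_E hp hV₀ hu
  have iC1 := int_E hp hV₁ hu
  have iC := iC0.add iC1
  have iD := int_E hp hV₀ (ht h)
  have iE := int_E hp hV₁ (ht (-h))
  have main := integral_mono (iD.add iE) ((iC.sub iA).add iB) (fun x => by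
    simp only [Pi.add_apply, Pi.sub_apply]
    by_cases hx : x ∈ tsupport ψ
    · have := pert_pw hp hmodE hmodR hη hh hτ hs (X := gradient u x) (hu0 x) (hψM x) (hψM' x) (h0 x hx) (h1 x hx)
      simp only at this
      rw [pert_grad hp (test_c1 hu) (test_c1 hψ) x (hz x), pert_grad hp (test_c1 hu) (test_c1 hψ) x (hz x)]
      have e1 : (u x + s) ^ (1 - p) = (u x + s) ^ (-p) * (u x + s) := by
        rw [← Real.rpow_add_one (hz x).ne']; ring_nf
      have e2 : ∀ h : ℝ, ψ x * (h * s ^ p * (u x + s) ^ (1 - p)) =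
          (h * (s ^ p * (u x + s) ^ (-p)) * (u x + s)) * ψ x := by
        intro h; rw [e1]; ring
      rw [e2, e2]
      rw [hχψ x hx, one_pow]
      have e3 : -h * (s ^ p * (u x + s) ^ (-p)) * (u x + s) = -(h * (s ^ p * (u x + s) ^ (-p)) * (u x + s)) := by ring
      rw [e3]
      refine this.trans (le_of_eq ?_)
      ring
    · rw [pert_grad hp (test_c1 hu) (test_c1 hψ) x (hz x), pert_grad hp (test_c1 hu) (test_c1 hψ) x (hz x),
        grad_zero_of_nmem hx, image_eq_zero_of_notMem_tsupport hx]
      have e1 : 0 ≤ χ x ^ k := pow_nonneg (hχ0 x) _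
      have e2 : 0 ≤ ‖gradient u x‖ ^ p / (u x + s) ^ p := by have := hz x; positivity
      have : 0 ≤ h * η * s ^ p * (2 * (1 + p * M) ^ p * 2 ^ p * (χ x ^ k * (‖gradient u x‖ ^ p / (u x + s) ^ p)) +
          (2 * (1 + p * M) ^ p * 2 ^ p + 2 * Λ * (1 + M) ^ p) * χ x ^ k) := by positivity
      simpa using this)
  rw [integral_add' iD iE, integral_add' (iC.sub iA) iB, integral_sub' iC iA, integral_add' iC0 iC1] at main
  have q2 := (add_nonneg q0 q1).trans main
  linarith

end stepA2
end CP

namespace CP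

section stepA3
variable {d : ℕ} {Ω : Set (Euc d)} {p : ℝ} {V₀ V₁ : Euc d → ℝ}

lemma locbdd_t (hV₀ : LocBddPotential Ω V₀) (hV₁ : LocBddPotential Ω V₁) (t : ℝ) :
    LocBddPotential Ω (fun x => t * V₁ x + (1 - t) * V₀ x) := by
  refine ⟨(hV₁.1.const_mul t).add (hV₀.1.const_mul (1 - t)), fun K hK hKc => ?_⟩
  obtain ⟨C₀, h0⟩ := hV₀.2 K hK hKc
  obtain ⟨C₁, h1⟩ := hV₁.2 K hK hKc
  refine ⟨|t| * C₁ + |1 - t| * C₀, fun x hx => (abs_add_le _ _).trans ?_⟩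
  rw [abs_mul, abs_mul]
  have := h0 x hx
  have := h1 x hx
  gcongr

lemma energy_t (hp : 1 < p) (hV₀ : LocBddPotential Ω V₀) (hV₁ : LocBddPotential Ω V₁) (t : ℝ) {u : Euc d → ℝ}
    (hu : IsTestFun Ω u) : energyQ Ω (fun x => t * V₁ x + (1 - t) * V₀ x) p u =
      t * energyQ Ω V₁ p u + (1 - t) * energyQ Ω V₀ p u := by
  rw [energy_eq hp hu, energy_eq hp hu, energy_eq hp hu, ← integral_const_mul, ← integral_const_mul,
    ← integral_add ((int_E hp hV₁ hu).const_mul t) ((int_E hp hV₀ hu).const_mul (1 - t))]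
  congr 1; ext x; ring

set_option maxHeartbeats 1000000 in
lemma stepA (hp : 1 < p) (hV₀ : LocBddPotential Ω V₀) (hV₁ : LocBddPotential Ω V₁)
    (hQ₀ : ∀ u : Euc d → ℝ, IsTestFun Ω u → 0 ≤ energyQ Ω V₀ p u)
    (hQ₁ : ∀ u : Euc d → ℝ, IsTestFun Ω u → 0 ≤ energyQ Ω V₁ p u) {t : ℝ} (ht0 : 0 < t) (ht1 : t < 1)
    {x₀ : Euc d} {R Λ : ℝ} (hR : 0 < R) (hsub : Metric.closedBall x₀ (2 * R) ⊆ Ω) (hΛ : 1 ≤ Λ)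
    (h0 : ∀ x ∈ Metric.closedBall x₀ (2 * R), |V₀ x| ≤ Λ)
    (h1 : ∀ x ∈ Metric.closedBall x₀ (2 * R), |V₁ x| ≤ Λ) {ψ : Euc d → ℝ}
    (hψ : IsTestFun Ω ψ) (hψs : tsupport ψ ⊆ Metric.closedBall x₀ R)
    (hψI : 0 < ∫ x, (V₁ x - V₀ x) * ψ x) :
    ∃ K c₀ : ℝ, 0 ≤ K ∧ 0 < c₀ ∧ ∀ u, IsTestFun Ω u → (∀ x, 0 ≤ u x) → ∀ ε, 0 < ε →
      t * energyQ Ω V₁ p u + (1 - t) * energyQ Ω V₀ p u ≤ ε →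
      c₀ ≤ volume.real {x ∈ Metric.closedBall x₀ R | u x ^ p ≤ K * ε} := by
  have hpp : 0 < p := by linarith
  have hp0 : p ≠ 0 := by linarith
  set I0 := ∫ x, (V₁ x - V₀ x) * ψ x with hI0
  obtain ⟨γ, hγ⟩ : ∃ γ, γ = I0 / 4 := ⟨_, rfl⟩
  have hγ0 : 0 < γ := by rw [hγ]; linarith
  obtain ⟨M1, hM1⟩ := hψ.1.continuous.bounded_above_of_compact_support hψ.2.1
  obtain ⟨M2, hM2⟩ := (cont_grad (test_c1 hψ)).bounded_above_of_compact_support (hcs_grad hψ.2.1)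
  obtain ⟨M, hM1', hM2', hM1''⟩ : ∃ M, M1 ≤ M ∧ M2 ≤ M ∧ 1 ≤ M :=
    ⟨max (max M1 M2) 1, (le_max_left _ _).trans (le_max_left _ _), (le_max_right _ _).trans (le_max_left _ _), le_max_right _ _⟩
  have hψM : ∀ x, |ψ x| ≤ M := fun x => (hM1 x).trans hM1'
  have hψM' : ∀ x, ‖gradient ψ x‖ ≤ M := fun x => (hM2 x).trans hM2'
  obtain ⟨k, hk, hk2⟩ := exists_k p
  obtain ⟨C, hC1, hC⟩ := cutoff d
  obtain ⟨χ, hχs, hχ0, hχ1, hχ2, hχ3, hχ4, hχ5⟩ := hC x₀ R hR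
  have hχ : IsTestFun Ω χ := ⟨hχs, hχ3, hχ4.trans hsub⟩
  have hR2 : Metric.closedBall x₀ R ⊆ Metric.closedBall x₀ (2 * R) := Metric.closedBall_subset_closedBall (by linarith)
  have hVt := locbdd_t hV₀ hV₁ t
  have hQt : ∀ u : Euc d → ℝ, IsTestFun Ω u → 0 ≤ energyQ Ω (fun x => t * V₁ x + (1 - t) * V₀ x) p u := by
    intro u hu
    rw [energy_t hp hV₀ hV₁ t hu]
    have := hQ₀ u hu
    have := hQ₁ u hu
    have : 0 ≤ 1 - t := by linarith
    positivity
  have hVtΛ : ∀ x ∈ tsupport χ, |t * V₁ x + (1 - t) * V₀ x| ≤ Λ := by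
    intro x hx
    have a0 := h0 x (hχ4 hx)
    have a1 := h1 x (hχ4 hx)
    refine (abs_add_le _ _).trans ?_
    rw [abs_mul, abs_mul, abs_of_pos ht0, abs_of_pos (by linarith : 0 < 1 - t)]
    nlinarith only [a0, a1, ht0, ht1]
  set C₁ : ℝ := 2 * (1 + p * M) ^ p * 2 ^ p with hC₁
  have hC₁0 : 0 < C₁ := by positivity
  set C₂ : ℝ := C₁ + 2 * Λ * (1 + M) ^ p with hC₂
  have hC₂0 : 0 < C₂ := by positivity
  set C₃ : ℝ := ∫ x, ((((p - 1) / 2)⁻¹ ^ (p - 1) * k ^ p / p) * ‖gradient χ x‖ ^ p + Λ * χ x ^ k) with hC₃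
  have hC₃0 : 0 ≤ C₃ := integral_nonneg (fun x => by
    have := hχ0 x
    have : 0 ≤ ((p - 1) / 2)⁻¹ := by rw [inv_nonneg]; linarith
    simp only [Pi.zero_apply]
    positivity)
  set C₄ : ℝ := ∫ x, χ x ^ k with hC₄
  have hC₄0 : 0 ≤ C₄ := integral_nonneg (fun x => pow_nonneg (hχ0 x) _)
  set q : ℝ := (p - 1) / (2 * p) with hq
  have hq0 : 0 < q := by rw [hq]; apply div_pos <;> linarith
  set H : ℝ := C₁ * ((1 + C₃) / q) + C₂ * C₄ with hH
  have hH0 : 0 < H := by positivity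
  set η : ℝ := γ * p / H with hη
  have hη0 : 0 < η := by positivity
  obtain ⟨τ1, hτ1, -, hmod1⟩ := modulus (E := Euc d) hp hη0
  obtain ⟨τ2, hτ2, -, hmod2⟩ := modulus (E := ℝ) hp hη0
  obtain ⟨h, hh, hhτ1, hhτ2⟩ : ∃ h, 0 < h ∧ h ≤ τ1 ∧ h ≤ τ2 :=
    ⟨min τ1 τ2, lt_min hτ1 hτ2, min_le_left _ _, min_le_right _ _⟩
  set T : ℝ := 1 / t + 1 / (1 - t) with hT
  have ht1' : 0 < 1 - t := by linarith
  have hT0 : 0 < T := by positivity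
  obtain ⟨A, hA1, hAT⟩ : ∃ A, 1 ≤ A ∧ T ≤ A * (h * p * γ) :=
    ⟨max 1 (T / (h * p * γ)), le_max_left _ _, by
      rw [← div_le_iff₀ (by positivity)]; exact le_max_right _ _⟩
  set vB := volume.real (Metric.closedBall x₀ R) with hvB
  have hvB0 : 0 ≤ vB := measureReal_nonneg
  obtain ⟨δ, hδ0, hδ⟩ : ∃ δ, 0 < δ ∧ 2 * Λ * M * δ * vB ≤ γ := by
    refine ⟨γ / (2 * Λ * M * (vB + 1)), by positivity, ?_⟩
    have : 2 * Λ * M * (γ / (2 * Λ * M * (vB + 1))) * vB = γ * (vB / (vB + 1)) := by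
      field_simp
    rw [this]
    have : vB / (vB + 1) ≤ 1 := by rw [div_le_one (by positivity)]; linarith
    nlinarith only [this, hγ0]
  obtain ⟨r₀, hr₀, hr₁, hrδ⟩ : ∃ r : ℝ, 0 < r ∧ r < 1 ∧ 1 - r ^ (p - 1) ≤ δ := by
    refine ⟨(1 - min δ (1 / 2)) ^ (1 / (p - 1)), ?_, ?_, ?_⟩
    · have := min_le_right δ (1 / 2)
      apply Real.rpow_pos_of_pos; linarith
    · have := min_le_right δ (1 / 2)
      have h3 : 0 < min δ (1 / 2) := lt_min hδ0 (by norm_num)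
      refine Real.rpow_lt_one (by linarith) (by linarith) ?_
      apply div_pos one_pos; linarith
    · have := min_le_right δ (1 / 2)
      have := min_le_left δ (1 / 2)
      have h4 : p - 1 ≠ 0 := by linarith
      rw [← Real.rpow_mul (by linarith), one_div_mul_cancel h4, Real.rpow_one]
      linarith
  obtain ⟨κ, hκ⟩ : ∃ κ, κ = r₀ / (1 - r₀) := ⟨_, rfl⟩
  have hr1' : 0 < 1 - r₀ := by linarith
  have hκ0 : 0 < κ := by rw [hκ]; positivity
  have hΛM : 0 < 2 * Λ * M := by positivity
  refine ⟨κ ^ p * A, γ / (2 * Λ * M), by positivity, by positivity, ?_⟩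
  intro u hu hu0 ε hε hQε
  have hAε : 0 < A * ε := by positivity
  obtain ⟨s, hs0, hsp⟩ : ∃ s : ℝ, 0 < s ∧ s ^ p = A * ε :=
    ⟨(A * ε) ^ (1 / p), by positivity, by
      rw [← Real.rpow_mul hAε.le, one_div, inv_mul_cancel₀ hp0, Real.rpow_one]⟩
  have hz : ∀ x, 0 < u x + s := fun x => by linarith [hu0 x]
  have hlc := logcacc hp hVt hQt hk hk2 hu hu0 hχ hχ0 hχ1 hVtΛ hs0
  have hpe := pert hp hV₀ hV₁ hQ₀ hQ₁ (τ := h) (h := h) (fun h' a b => hmod1 h' a (b.trans hhτ1))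
    (fun h' a b => hmod2 h' a (b.trans hhτ2)) hη0.le hh.le le_rfl hs0 hu hu0 hψ hχ hχ0
    (fun x hx => hχ2 x (hψs hx)) hψM hψM' (fun x hx => h0 x (hR2 (hψs hx))) (fun x hx => h1 x (hR2 (hψs hx)))
    (by linarith) (k := k) (by omega)
  rw [integral_const_mul, integral_const_mul, energy_t hp hV₀ hV₁ t hu] at hlc
  have hgu : Continuous (fun x => ‖gradient u x‖ ^ p) :=
    (cont_grad (test_c1 hu)).norm.rpow_const (fun _ => Or.inr (by linarith))
  have huc : Continuous u := hu.1.continuous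
  have hχc : Continuous χ := hχ.1.continuous
  have hψc : Continuous ψ := hψ.1.continuous
  have hzp : Continuous (fun x => (u x + s) ^ p) := (huc.add continuous_const).rpow_const (fun _ => Or.inr (by linarith))
  have i1 : Integrable (fun x => χ x ^ k * (‖gradient u x‖ ^ p / (u x + s) ^ p)) := by
    refine Continuous.integrable_of_hasCompactSupport ?_ ?_
    · have : Continuous (fun x => ‖gradient u x‖ ^ p / (u x + s) ^ p) :=
        hgu.div hzp (fun x => (Real.rpow_pos_of_pos (hz x) _).ne')
      fun_prop
    refine HasCompactSupport.intro hχ.2.1 (fun x hx => ?_)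
    simp only [image_eq_zero_of_notMem_tsupport hx]
    rw [zero_pow (by omega), zero_mul]
  have i2 : Integrable (fun x => χ x ^ k) := by
    refine Continuous.integrable_of_hasCompactSupport (by fun_prop) ?_
    refine HasCompactSupport.intro hχ.2.1 (fun x hx => ?_)
    simp only [image_eq_zero_of_notMem_tsupport hx]
    rw [zero_pow (by omega)]
  rw [integral_add (i1.const_mul _) (i2.const_mul _), integral_const_mul, integral_const_mul] at hpe
  set I := ∫ x, χ x ^ k * (‖gradient u x‖ ^ p / (u x + s) ^ p) with hI
  set J := ∫ x, (V₁ x - V₀ x) * ((u x / (u x + s)) ^ (p - 1) * ψ x) with hJ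
  rw [hsp] at hlc hpe
  have q0 := hQ₀ u hu
  have q1 := hQ₁ u hu
  have hQQ : energyQ Ω V₀ p u + energyQ Ω V₁ p u ≤ T * ε := by
    have b1 : energyQ Ω V₁ p u ≤ 1 / t * ε := by
      rw [div_mul_eq_mul_div, one_mul, le_div_iff₀ ht0]; nlinarith only [hQε, q0, ht1', mul_nonneg ht1'.le q0]
    have b0 : energyQ Ω V₀ p u ≤ 1 / (1 - t) * ε := by
      rw [div_mul_eq_mul_div, one_mul, le_div_iff₀ ht1']; nlinarith only [hQε, mul_nonneg ht0.le q1]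
    rw [hT, add_mul]; linarith
  have hIb : I ≤ (1 + C₃) / q := by
    rw [le_div_iff₀ hq0]
    have : (A * ε) * (I * q) ≤ (A * ε) * (1 + C₃) := by
      have : ε ≤ A * ε := by nlinarith only [hA1, hε]
      have e : q * (A * ε) * I = (A * ε) * (I * q) := by ring
      rw [← e]
      linarith
    exact le_of_mul_le_mul_left this hAε
  have hηH : η * H = γ * p := by rw [hη]; field_simp
  have hJb : J ≤ 2 * γ := by
    have e1 : h * η * (A * ε) * (C₁ * I + C₂ * C₄) ≤ h * (A * ε) * (γ * p) := by
      calc h * η * (A * ε) * (C₁ * I + C₂ * C₄) ≤ h * η * (A * ε) * H := by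
            refine mul_le_mul_of_nonneg_left ?_ (by positivity)
            rw [hH]
            have := mul_le_mul_of_nonneg_left hIb hC₁0.le
            linarith
        _ = h * (A * ε) * (η * H) := by ring
        _ = _ := by rw [hηH]
    have e2 : T * ε ≤ A * (h * p * γ) * ε := mul_le_mul_of_nonneg_right hAT hε.le
    have e3 : h * p * (A * ε) * J ≤ h * p * (A * ε) * (2 * γ) := by
      have e4 : h * p * (A * ε) * (2 * γ) = A * (h * p * γ) * ε + h * (A * ε) * (γ * p) := by ring
      rw [e4]; linarith
    exact le_of_mul_le_mul_left e3 (by positivity)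
  have hrc : Continuous (fun x => (u x / (u x + s)) ^ (p - 1) * ψ x) :=
    (((huc.div (huc.add continuous_const) (fun x => (hz x).ne')).rpow_const (fun _ => Or.inr (by linarith))).mul hψc)
  have hrs : HasCompactSupport (fun x => (u x / (u x + s)) ^ (p - 1) * ψ x) := hψ.2.1.mul_left
  have hrt : tsupport (fun x => (u x / (u x + s)) ^ (p - 1) * ψ x) ⊆ Ω :=
    (tsupport_mul_subset_right).trans hψ.2.2
  have iA : Integrable (fun x => (V₁ x - V₀ x) * ((u x / (u x + s)) ^ (p - 1) * ψ x)) := by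
    simp only [sub_mul]
    exact (int_V hV₁ hrc hrs hrt).sub (int_V hV₀ hrc hrs hrt)
  have iB : Integrable (fun x => (V₁ x - V₀ x) * ψ x) := by
    simp only [sub_mul]
    exact (int_V hV₁ hψc hψ.2.1 hψ.2.2).sub (int_V hV₀ hψc hψ.2.1 hψ.2.2)
  set S := {x ∈ Metric.closedBall x₀ R | u x ^ p ≤ κ ^ p * A * ε} with hS
  have hSm : MeasurableSet S := by
    refine measurableSet_closedBall.inter ?_
    exact measurableSet_le (huc.rpow_const (fun _ => Or.inr hpp.le)).measurable measurable_const
  have hSB : S ⊆ Metric.closedBall x₀ R := fun x hx => hx.1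
  have hfinB : volume (Metric.closedBall x₀ R) ≠ ⊤ := measure_closedBall_lt_top.ne
  have hfin : volume S ≠ ⊤ := ((measure_mono hSB).trans_lt measure_closedBall_lt_top).ne
  have ig1 : Integrable (S.indicator (fun _ => 2 * Λ * M)) :=
    (integrable_indicator_iff hSm).2 (integrableOn_const hfin)
  have ig2 : Integrable ((Metric.closedBall x₀ R).indicator (fun _ => 2 * Λ * M * δ)) :=
    (integrable_indicator_iff measurableSet_closedBall).2 (integrableOn_const hfinB)
  have hfinal := integral_mono (iB.sub iA) (ig1.add ig2) (fun x => by
    simp only [Pi.add_apply, Pi.sub_apply]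
    by_cases hx : x ∈ tsupport ψ
    · have hxB := hψs hx
      have a0 := abs_le.1 (h0 x (hR2 hxB))
      have a1 := abs_le.1 (h1 x (hR2 hxB))
      have hr0 : 0 ≤ u x / (u x + s) := div_nonneg (hu0 x) (hz x).le
      have hr1 : u x / (u x + s) ≤ 1 := by rw [div_le_one (hz x)]; linarith
      set r := u x / (u x + s)
      have hrp : r ^ (p - 1) ≤ 1 := Real.rpow_le_one hr0 hr1 (by linarith)
      have hrp0 : 0 ≤ r ^ (p - 1) := Real.rpow_nonneg hr0 _
      have m1 : (V₁ x - V₀ x) * ψ x - (V₁ x - V₀ x) * (r ^ (p - 1) * ψ x) ≤ 2 * Λ * M * (1 - r ^ (p - 1)) := by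
        have : (V₁ x - V₀ x) * ψ x - (V₁ x - V₀ x) * (r ^ (p - 1) * ψ x) = (V₁ x - V₀ x) * ψ x * (1 - r ^ (p - 1)) := by ring
        rw [this]
        refine mul_le_mul_of_nonneg_right ?_ (by linarith)
        refine (le_abs_self _).trans ?_
        rw [abs_mul]
        refine mul_le_mul (abs_le.2 ⟨by linarith, by linarith⟩) (hψM x) (abs_nonneg _) (by linarith)
      refine m1.trans ?_
      rw [Set.indicator_of_mem hxB]
      by_cases hxS : x ∈ S
      · rw [Set.indicator_of_mem hxS]
        have hd1 : 0 ≤ 2 * Λ * M * δ := by positivity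
        have hd2 : 2 * Λ * M * (1 - r ^ (p - 1)) ≤ 2 * Λ * M * 1 :=
          mul_le_mul_of_nonneg_left (by linarith only [hrp0]) hΛM.le
        linarith only [hd1, hd2]
      · rw [Set.indicator_of_notMem hxS, zero_add]
        refine mul_le_mul_of_nonneg_left ?_ hΛM.le
        refine le_trans ?_ hrδ
        have hxS' : κ ^ p * A * ε < u x ^ p := by
          by_contra hc
          exact hxS ⟨hxB, not_lt.1 hc⟩
        have e : κ ^ p * A * ε = (κ * s) ^ p := by
          rw [Real.mul_rpow hκ0.le hs0.le, hsp]; ring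
        rw [e] at hxS'
        have hlt : κ * s < u x := (Real.rpow_lt_rpow_iff (by positivity) (hu0 x) hpp).1 hxS'
        have : r₀ ≤ r := by
          rw [le_div_iff₀ (hz x)]
          have : r₀ * s < u x * (1 - r₀) := by
            have e2 : r₀ * s = κ * s * (1 - r₀) := by rw [hκ]; field_simp
            rw [e2]; exact mul_lt_mul_of_pos_right hlt hr1'
          linarith only [this]
        have := Real.rpow_le_rpow hr₀.le this (by linarith : 0 ≤ p - 1)
        linarith
    · rw [image_eq_zero_of_notMem_tsupport hx]
      have e1 : 0 ≤ S.indicator (fun _ => 2 * Λ * M) x := Set.indicator_nonneg (fun _ _ => hΛM.le) _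
      have e2 : 0 ≤ (Metric.closedBall x₀ R).indicator (fun _ => 2 * Λ * M * δ) x :=
        Set.indicator_nonneg (fun _ _ => by positivity) _
      simp only [mul_zero, sub_zero]
      linarith)
  rw [integral_sub' iB iA, integral_add' ig1 ig2, integral_indicator hSm, integral_indicator measurableSet_closedBall,
    setIntegral_const, setIntegral_const, smul_eq_mul, smul_eq_mul] at hfinal
  rw [div_le_iff₀ hΛM]
  have e5 : I0 = 4 * γ := by rw [hγ]; ring
  have e6 : vB * (2 * Λ * M * δ) = 2 * Λ * M * δ * vB := by ring
  rw [← hI0, ← hJ, e5] at hfinal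
  rw [← hvB, e6] at hfinal
  linarith

end stepA3
end CP

namespace CP

section gap
variable {d : ℕ} {Ω : Set (Euc d)} {p : ℝ} {V : Euc d → ℝ}

lemma reg_abs {u : Euc d → ℝ} (hu : IsTestFun Ω u) {η : ℝ} (hη : 0 < η) :
    IsTestFun Ω (fun x => √(u x ^ 2 + η ^ 2) - η) ∧ (∀ x, 0 ≤ √(u x ^ 2 + η ^ 2) - η) ∧
    (∀ x, √(u x ^ 2 + η ^ 2) - η ≤ |u x|) ∧ (∀ x, |u x| - η ≤ √(u x ^ 2 + η ^ 2) - η) ∧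
    (∀ x, ‖gradient (fun x => √(u x ^ 2 + η ^ 2) - η) x‖ ≤ ‖gradient u x‖) := by
  have hpos : ∀ x, 0 < u x ^ 2 + η ^ 2 := fun x => by positivity
  have hle : ∀ x, |u x| ≤ √(u x ^ 2 + η ^ 2) := fun x => by
    rw [← Real.sqrt_sq_eq_abs]; exact Real.sqrt_le_sqrt (by nlinarith)
  refine ⟨⟨?_, ?_, ?_⟩, ?_, ?_, ?_, ?_⟩
  · exact (((hu.1.pow 2).add contDiff_const).sqrt (fun x => (hpos x).ne')).sub contDiff_const
  · exact hu.2.1.comp_left (g := fun t : ℝ => √(t ^ 2 + η ^ 2) - η) (by simp [Real.sqrt_sq hη.le])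
  · refine (closure_mono ?_).trans hu.2.2
    intro x hx
    simp only [Function.mem_support] at *
    intro h; apply hx; simp [h, Real.sqrt_sq hη.le]
  · intro x
    have : √(η ^ 2) ≤ √(u x ^ 2 + η ^ 2) := Real.sqrt_le_sqrt (by nlinarith [sq_nonneg (u x)])
    rw [Real.sqrt_sq hη.le] at this
    linarith
  · intro x
    have : √(u x ^ 2 + η ^ 2) ≤ |u x| + η := by
      rw [Real.sqrt_le_left (by positivity)]
      nlinarith [sq_abs (u x), abs_nonneg (u x)]
    linarith
  · intro x; linarith [hle x]
  · intro x
    have hd : HasDerivAt (fun t : ℝ => √(t ^ 2 + η ^ 2) - η) (2 * u x / (2 * √(u x ^ 2 + η ^ 2))) (u x) := by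
      have h1 : HasDerivAt (fun t : ℝ => t ^ 2 + η ^ 2) (2 * u x) (u x) := by
        simpa using (hasDerivAt_pow 2 (u x)).add_const (η ^ 2)
      exact (h1.sqrt (hpos x).ne').sub_const η
    have hg := hg_comp hd (hg_of_contDiff (test_c1 hu) x)
    rw [hg.gradient, norm_smul]
    have : ‖2 * u x / (2 * √(u x ^ 2 + η ^ 2))‖ ≤ 1 := by
      have h0 : 0 < √(u x ^ 2 + η ^ 2) := Real.sqrt_pos.2 (hpos x)
      rw [mul_div_mul_left _ _ two_ne_zero, Real.norm_eq_abs, abs_div, abs_of_pos h0, div_le_one h0]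
      exact hle x
    nlinarith [norm_nonneg (gradient u x)]

lemma sign_red (hp : 1 < p) (hV : LocBddPotential Ω V) {B : Set (Euc d)} {C : ℝ} (hC : 0 ≤ C)
    (h : ∀ u, IsTestFun Ω u → (∀ x, 0 ≤ u x) → ∫ x in B, u x ^ p ≤ C * energyQ Ω V p u) :
    ∀ u, IsTestFun Ω u → ∫ x in B, |u x| ^ p ≤ C * energyQ Ω V p u := by
  intro u hu
  have hpp : 0 < p := by linarith
  set η : ℕ → ℝ := fun n => 1 / ((n : ℝ) + 1) with hη
  have hη0 : ∀ n, 0 < η n := fun n => by simp only [hη]; positivity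
  have hηl : Tendsto η atTop (𝓝 0) := tendsto_one_div_add_atTop_nhds_zero_nat
  set w : ℕ → Euc d → ℝ := fun n x => √(u x ^ 2 + η n ^ 2) - η n with hw
  have hr := fun n => reg_abs hu (hη0 n)
  have hwt : ∀ n, IsTestFun Ω (w n) := fun n => (hr n).1
  have hw0 : ∀ n x, 0 ≤ w n x := fun n => (hr n).2.1
  have hw1 : ∀ n x, w n x ≤ |u x| := fun n => (hr n).2.2.1
  have hw2 : ∀ n x, |u x| - η n ≤ w n x := fun n => (hr n).2.2.2.1
  have hw3 : ∀ n x, ‖gradient (w n) x‖ ≤ ‖gradient u x‖ := fun n => (hr n).2.2.2.2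
  have hl : ∀ x, Tendsto (fun n => w n x ^ p) atTop (𝓝 (|u x| ^ p)) := by
    intro x
    have : Tendsto (fun n => w n x) atTop (𝓝 |u x|) := by
      refine tendsto_of_tendsto_of_tendsto_of_le_of_le ?_ tendsto_const_nhds (fun n => hw2 n x) (fun n => hw1 n x)
      simpa using (tendsto_const_nhds (x := |u x|)).sub hηl
    exact this.rpow_const (Or.inr hpp.le)
  have hb : ∀ n x, w n x ^ p ≤ |u x| ^ p := fun n x => Real.rpow_le_rpow (hw0 n x) (hw1 n x) hpp.le
  have hiu : Integrable (fun x => |u x| ^ p) :=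
    (abs_rpow_props hp hu).1.integrable_of_hasCompactSupport (abs_rpow_props hp hu).2.1
  have hcw : ∀ n, Continuous (fun x => w n x ^ p) := fun n =>
    (hwt n).1.continuous.rpow_const (fun _ => Or.inr hpp.le)
  have L1 : Tendsto (fun n => ∫ x in B, w n x ^ p) atTop (𝓝 (∫ x in B, |u x| ^ p)) := by
    refine tendsto_integral_of_dominated_convergence (fun x => |u x| ^ p)
      (fun n => (hcw n).aestronglyMeasurable) hiu.integrableOn (fun n => Eventually.of_forall (fun x => ?_))
      (Eventually.of_forall hl)
    rw [Real.norm_of_nonneg (Real.rpow_nonneg (hw0 n x) _)]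
    exact hb n x
  have L2 : Tendsto (fun n => ∫ x, V x * w n x ^ p) atTop (𝓝 (∫ x, V x * |u x| ^ p)) := by
    refine tendsto_integral_of_dominated_convergence (fun x => ‖V x * |u x| ^ p‖)
      (fun n => (hV.1.aestronglyMeasurable.mul (hcw n).aestronglyMeasurable)) (int_Vp hp hV hu).norm
      (fun n => Eventually.of_forall (fun x => ?_))
      (Eventually.of_forall (fun x => (hl x).const_mul _))
    rw [norm_mul, norm_mul, Real.norm_of_nonneg (Real.rpow_nonneg (hw0 n x) _), Real.norm_of_nonneg (by positivity : 0 ≤ |u x| ^ p)]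
    exact mul_le_mul_of_nonneg_left (hb n x) (norm_nonneg _)
  have L3 : Tendsto (fun n => C * ((∫ x, ‖gradient u x‖ ^ p) + ∫ x, V x * w n x ^ p)) atTop
      (𝓝 (C * ((∫ x, ‖gradient u x‖ ^ p) + ∫ x, V x * |u x| ^ p))) := (L2.const_add _).const_mul _
  rw [energy_eq hp hu, integral_add (int_gradp hp hu) (int_Vp hp hV hu)]
  refine le_of_tendsto_of_tendsto' L1 L3 (fun n => (h (w n) (hwt n) (hw0 n)).trans ?_)
  refine mul_le_mul_of_nonneg_left ?_ hC
  rw [energy_eq hp (hwt n), integral_add (int_gradp hp (hwt n)) (int_Vp hp hV (hwt n))]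
  refine add_le_add (integral_mono (int_gradp hp (hwt n)) (int_gradp hp hu) (fun x => ?_)) (le_of_eq ?_)
  · exact Real.rpow_le_rpow (norm_nonneg _) (hw3 n x) hpp.le
  · congr 1; ext x; rw [abs_of_nonneg (hw0 n x)]

lemma gap_of_quantile (hd : 2 ≤ d) (hp : 1 < p) (hV : LocBddPotential Ω V)
    (hQ : ∀ u : Euc d → ℝ, IsTestFun Ω u → 0 ≤ energyQ Ω V p u)
    {x₀ : Euc d} {R : ℝ} (hR : 0 < R) (hR1 : 16 * R ≤ 1) (hsub : Metric.closedBall x₀ (16 * R) ⊆ Ω)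
    {K c₀ : ℝ} (hK : 0 ≤ K) (hc₀ : 0 < c₀)
    (h : ∀ u, IsTestFun Ω u → (∀ x, 0 ≤ u x) → ∀ ε, 0 < ε → energyQ Ω V p u ≤ ε →
      c₀ ≤ volume.real {x ∈ Metric.closedBall x₀ R | u x ^ p ≤ K * ε}) :
    ∃ C : ℝ, 0 ≤ C ∧ ∀ u, IsTestFun Ω u → ∫ x in Metric.closedBall x₀ (R / 8), |u x| ^ p ≤ C * energyQ Ω V p u := by
  obtain ⟨Λ, hΛ⟩ := hV.2 _ hsub (isCompact_closedBall _ _)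
  have hΛ0 : 0 ≤ Λ := (abs_nonneg _).trans (hΛ x₀ (Metric.mem_closedBall_self (by positivity)))
  obtain ⟨C, hC, hH⟩ := lemmaH hd hp hV hQ hΛ0 hR hR1 hsub hΛ hK hc₀
  refine ⟨C, hC, sign_red hp hV hC (fun u hu hu0 => ?_)⟩
  refine le_of_forall_pos_le_add (fun δ hδ => ?_)
  have hδ' : 0 < δ / (C + 1) := by positivity
  have hq := hQ u hu
  have := hH u hu hu0 (energyQ Ω V p u + δ / (C + 1)) (by positivity) (by linarith)
    (h u hu hu0 _ (by positivity) (by linarith))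
  refine this.trans ?_
  rw [mul_add]
  have : C * (δ / (C + 1)) ≤ δ := by
    rw [mul_div_assoc', div_le_iff₀ (by positivity)]; nlinarith
  linarith

lemma propagate (hd : 2 ≤ d) (hp : 1 < p) (hV : LocBddPotential Ω V)
    (hQ : ∀ u : Euc d → ℝ, IsTestFun Ω u → 0 ≤ energyQ Ω V p u)
    {x₀ y : Euc d} {R r : ℝ} (hR : 0 < R) (hR1 : 16 * R ≤ 1) (hsub : Metric.closedBall x₀ (16 * R) ⊆ Ω)
    (hr : 0 < r) (hb : Metric.closedBall y r ⊆ Metric.closedBall x₀ R) {C : ℝ} (hC : 0 ≤ C)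
    (h : ∀ u, IsTestFun Ω u → ∫ x in Metric.closedBall y r, |u x| ^ p ≤ C * energyQ Ω V p u) :
    ∃ C : ℝ, 0 ≤ C ∧ ∀ u, IsTestFun Ω u → ∫ x in Metric.closedBall x₀ (R / 8), |u x| ^ p ≤ C * energyQ Ω V p u := by
  have hpp : 0 < p := by linarith
  set vb := volume.real (Metric.closedBall y r) with hvb
  have hvb0 : 0 < vb := vol_ball_pos y hr
  refine gap_of_quantile hd hp hV hQ hR hR1 hsub (K := 2 * (C + 1) / vb) (c₀ := vb / 2) (by positivity) (by positivity) ?_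
  intro u hu hu0 ε hε hQε
  set K := 2 * (C + 1) / vb with hK
  have hK0 : 0 < K := by positivity
  have huc := hu.1.continuous
  have hupc : Continuous (fun x => u x ^ p) := huc.rpow_const (fun _ => Or.inr hpp.le)
  set S := {x ∈ Metric.closedBall x₀ R | u x ^ p ≤ K * ε} with hS
  set N := {x ∈ Metric.closedBall y r | K * ε < u x ^ p} with hN
  have hNm : MeasurableSet N := measurableSet_closedBall.inter (measurableSet_lt measurable_const hupc.measurable)
  have hNs : N ⊆ Metric.closedBall y r := fun x hx => hx.1
  have hcov : Metric.closedBall y r ⊆ S ∪ N := by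
    intro x hx
    rcases le_or_gt (u x ^ p) (K * ε) with h | h
    · exact Or.inl ⟨hb hx, h⟩
    · exact Or.inr ⟨hx, h⟩
  have hSf : volume S ≠ ⊤ := ((measure_mono (fun x hx => hx.1)).trans_lt (measure_closedBall_lt_top (x := x₀) (r := R))).ne
  have hNf : volume N ≠ ⊤ := ((measure_mono hNs).trans_lt measure_closedBall_lt_top).ne
  have h1 : vb ≤ volume.real S + volume.real N :=
    (measureReal_mono hcov (measure_union_ne_top hSf hNf)).trans (measureReal_union_le _ _)
  have h2 : volume.real N * (K * ε) ≤ C * ε := by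
    have e1 : ∫ x in N, K * ε ≤ ∫ x in N, |u x| ^ p := by
      refine setIntegral_mono_on (integrableOn_const hNf) ?_ hNm (fun x hx => ?_)
      · exact ((abs_rpow_props hp hu).1.integrable_of_hasCompactSupport (abs_rpow_props hp hu).2.1).integrableOn
      · rw [abs_of_nonneg (hu0 x)]; exact hx.2.le
    have e2 : ∫ x in N, |u x| ^ p ≤ ∫ x in Metric.closedBall y r, |u x| ^ p := by
      refine setIntegral_mono_set ?_ (Eventually.of_forall (fun x => by simp only [Pi.zero_apply]; positivity)) hNs.eventuallyLE
      exact ((abs_rpow_props hp hu).1.integrable_of_hasCompactSupport (abs_rpow_props hp hu).2.1).integrableOn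
    rw [setIntegral_const, smul_eq_mul] at e1
    exact e1.trans (e2.trans ((h u hu).trans (mul_le_mul_of_nonneg_left hQε hC)))
  have h3 : volume.real N ≤ vb / 2 := by
    have e : volume.real N * K ≤ C := by
      refine le_of_mul_le_mul_right ?_ hε
      rw [mul_assoc]; exact h2
    rw [hK, mul_div_assoc', div_le_iff₀ hvb0] at e
    have : 0 ≤ volume.real N := measureReal_nonneg
    nlinarith
  linarith

lemma all_gap (hd : 2 ≤ d) (hΩo : IsOpen Ω) (hΩc : IsConnected Ω) (hp : 1 < p) (hV : LocBddPotential Ω V)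
    (hQ : ∀ u : Euc d → ℝ, IsTestFun Ω u → 0 ≤ energyQ Ω V p u)
    (h : ∃ x ∈ Ω, ∃ r > 0, ∃ C : ℝ, 0 ≤ C ∧ ∀ u, IsTestFun Ω u →
      ∫ x in Metric.closedBall x r, |u x| ^ p ≤ C * energyQ Ω V p u) :
    ∀ x ∈ Ω, ∃ r > 0, ∃ C : ℝ, 0 ≤ C ∧ ∀ u, IsTestFun Ω u →
      ∫ x in Metric.closedBall x r, |u x| ^ p ≤ C * energyQ Ω V p u := by
  set G : Set (Euc d) := {x | ∃ r > 0, ∃ C : ℝ, 0 ≤ C ∧ ∀ u, IsTestFun Ω u →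
      ∫ x in Metric.closedBall x r, |u x| ^ p ≤ C * energyQ Ω V p u} with hG
  have hmono : ∀ (u : Euc d → ℝ), IsTestFun Ω u → ∀ {x y : Euc d} {r s : ℝ},
      Metric.closedBall y s ⊆ Metric.closedBall x r →
      ∫ x in Metric.closedBall y s, |u x| ^ p ≤ ∫ x in Metric.closedBall x r, |u x| ^ p := by
    intro u hu x y r s hs
    refine setIntegral_mono_set ?_ (Eventually.of_forall (fun x => by simp only [Pi.zero_apply]; positivity)) hs.eventuallyLE
    exact ((abs_rpow_props hp hu).1.integrable_of_hasCompactSupport (abs_rpow_props hp hu).2.1).integrableOn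
  suffices hsub : Ω ⊆ G from fun x hx => hsub hx
  refine hΩc.isPreconnected.subset_of_closure_inter_subset ?_ ?_ ?_
  · rw [Metric.isOpen_iff]
    rintro x ⟨r, hr, C, hC, hg⟩
    refine ⟨r / 2, by positivity, fun y hy => ⟨r / 2, by positivity, C, hC, fun u hu => ?_⟩⟩
    refine (hmono u hu (Metric.closedBall_subset_closedBall' ?_)).trans (hg u hu)
    have := Metric.mem_ball.1 hy
    linarith
  · obtain ⟨x, hx, h⟩ := h
    exact ⟨x, hx, h⟩
  · rintro x ⟨hxc, hx⟩
    obtain ⟨ρ, hρ, hρs⟩ := Metric.nhds_basis_closedBall.mem_iff.1 (hΩo.mem_nhds hx)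
    obtain ⟨R, hR, hR1, hR2⟩ : ∃ R, 0 < R ∧ 16 * R ≤ 1 ∧ 16 * R ≤ ρ :=
      ⟨min 1 ρ / 16, by positivity, by linarith [min_le_left 1 ρ], by linarith [min_le_right 1 ρ]⟩
    obtain ⟨y, ⟨r, hr, C, hC, hg⟩, hxy⟩ := Metric.mem_closure_iff.1 hxc R hR
    set r' := min r (R - dist x y) with hr'
    have hr'0 : 0 < r' := lt_min hr (by linarith)
    have := propagate hd hp hV hQ hR hR1 ((Metric.closedBall_subset_closedBall hR2).trans hρs) hr'0 (y := y)
      (Metric.closedBall_subset_closedBall' (by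
        rw [dist_comm y x]; linarith [min_le_right r (R - dist x y)])) hC
      (fun u hu => (hmono u hu (Metric.closedBall_subset_closedBall (min_le_left _ _))).trans (hg u hu))
    exact ⟨R / 8, by positivity, this⟩

end gap
end CP

namespace CP

section fin
variable {d : ℕ} {Ω : Set (Euc d)} {p : ℝ} {V V₀ V₁ : Euc d → ℝ}

lemma build_W (hΩc : IsConnected Ω) (hp : 1 < p)
    (hQ : ∀ u : Euc d → ℝ, IsTestFun Ω u → 0 ≤ energyQ Ω V p u)
    (h : ∀ x ∈ Ω, ∃ r > 0, ∃ C : ℝ, 0 ≤ C ∧ ∀ u, IsTestFun Ω u →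
      ∫ x in Metric.closedBall x r, |u x| ^ p ≤ C * energyQ Ω V p u) :
    ∃ W : Euc d → ℝ, ContinuousOn W Ω ∧ (∀ x ∈ Ω, 0 < W x) ∧
      ∀ u : Euc d → ℝ, IsTestFun Ω u → (∫ x in Ω, W x * |u x| ^ p) ≤ energyQ Ω V p u := by
  have h' : ∀ x : Ω, ∃ r > 0, ∃ C : ℝ, 0 ≤ C ∧ ∀ u, IsTestFun Ω u →
      ∫ x in Metric.closedBall (x : Euc d) r, |u x| ^ p ≤ C * energyQ Ω V p u := fun x => h x x.2
  choose r hr C hC hg using h'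
  obtain ⟨T, hTc, hT⟩ := TopologicalSpace.isOpen_iUnion_countable (fun x : Ω => Metric.ball (x : Euc d) (r x))
    (fun x => Metric.isOpen_ball)
  have hcov : ∀ x ∈ Ω, ∃ y ∈ T, x ∈ Metric.ball (y : Euc d) (r y) := by
    intro x hx
    have : x ∈ ⋃ i ∈ T, Metric.ball (i : Euc d) (r i) := by
      rw [hT]; exact Set.mem_iUnion.2 ⟨⟨x, hx⟩, Metric.mem_ball_self (hr _)⟩
    simpa using this
  have hTne : T.Nonempty := by
    obtain ⟨x, hx⟩ := hΩc.nonempty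
    obtain ⟨y, hy, -⟩ := hcov x hx
    exact ⟨y, hy⟩
  obtain ⟨e, he⟩ := hTc.exists_eq_range hTne
  set f : ℕ → Euc d → ℝ := fun k x => (1 / 2) ^ (k + 1) / (1 + C (e k)) * max 0 (1 - dist x (e k) / r (e k)) with hf
  have hC1 : ∀ k, 0 < 1 + C (e k) := fun k => by have := hC (e k); linarith
  have hf0 : ∀ k x, 0 ≤ f k x := fun k x => mul_nonneg (div_nonneg (by positivity) (hC1 k).le) (le_max_left _ _)
  have hfc : ∀ k, Continuous (f k) := fun k => by
    simp only [hf]; fun_prop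
  have hf1 : ∀ k x, f k x ≤ (1 / 2) ^ (k + 1) / (1 + C (e k)) := fun k x => by
    have h1 : 0 ≤ ((1:ℝ) / 2) ^ (k + 1) / (1 + C (e k)) := div_nonneg (by positivity) (hC1 k).le
    have h2 : max 0 (1 - dist x (e k) / r (e k)) ≤ 1 := by
      refine max_le zero_le_one ?_
      have := div_nonneg (dist_nonneg (x := x) (y := e k)) (hr (e k)).le
      linarith
    have h3 := mul_le_mul_of_nonneg_left h2 h1
    rw [mul_one] at h3
    exact h3
  have hs0 : Summable (fun k : ℕ => ((1:ℝ) / 2) ^ (k + 1)) :=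
    (summable_nat_add_iff 1).2 (summable_geometric_of_lt_one (by norm_num) (by norm_num))
  have hfb : ∀ k x, ‖f k x‖ ≤ (1 / 2) ^ (k + 1) := fun k x => by
    rw [Real.norm_of_nonneg (hf0 k x)]
    exact (hf1 k x).trans (div_le_self (by positivity) (by linarith [hC (e k)]))
  have hsum : ∀ x, Summable (fun k => f k x) := fun x => Summable.of_norm_bounded hs0 (fun k => hfb k x)
  refine ⟨fun x => ∑' k, f k x, (continuous_tsum hfc hs0 hfb).continuousOn, ?_, ?_⟩
  · intro x hx
    obtain ⟨y, hy, hxy⟩ := hcov x hx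
    rw [he] at hy
    obtain ⟨k, rfl⟩ := hy
    refine (hsum x).tsum_pos (fun k => hf0 k x) k ?_
    refine mul_pos (div_pos (by positivity) (hC1 k)) (lt_max_of_lt_right ?_)
    rw [sub_pos, div_lt_one (hr _)]
    exact Metric.mem_ball.1 hxy
  · intro u hu
    have hq := hQ u hu
    have hiu : Integrable (fun x => |u x| ^ p) :=
      (abs_rpow_props hp hu).1.integrable_of_hasCompactSupport (abs_rpow_props hp hu).2.1
    have hFi : ∀ k, Integrable (fun x => f k x * |u x| ^ p) := fun k => by
      refine Continuous.integrable_of_hasCompactSupport ((hfc k).mul (abs_rpow_props hp hu).1) ?_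
      exact (abs_rpow_props hp hu).2.1.mul_left
    have hF0 : ∀ k x, 0 ≤ f k x * |u x| ^ p := fun k x => mul_nonneg (hf0 k x) (by positivity)
    have hFb : ∀ k, ∫ x in Ω, f k x * |u x| ^ p ≤ (1 / 2) ^ (k + 1) * energyQ Ω V p u := by
      intro k
      have s1 : ∫ x in Ω, f k x * |u x| ^ p ≤ ∫ x, f k x * |u x| ^ p :=
        setIntegral_le_integral (hFi k) (Eventually.of_forall (hF0 k))
      have s2 : ∫ x, f k x * |u x| ^ p ≤ ∫ x in Metric.closedBall (e k : Euc d) (r (e k)),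
          (1 / 2) ^ (k + 1) / (1 + C (e k)) * |u x| ^ p := by
        refine int_le_of_ind measurableSet_closedBall (hFi k) (hiu.const_mul _).integrableOn (fun x _ => ?_) (fun x hx => ?_)
        · exact mul_le_mul_of_nonneg_right (hf1 k x) (by positivity)
        · have : f k x = 0 := by
            simp only [hf]
            rw [max_eq_left, mul_zero]
            rw [sub_nonpos, one_le_div (hr _)]
            rw [Metric.mem_closedBall, not_le] at hx
            exact hx.le
          rw [this, zero_mul]
      refine s1.trans (s2.trans ?_)
      rw [integral_const_mul]
      have hk1 := hC1 k
      calc (1 / 2) ^ (k + 1) / (1 + C (e k)) * ∫ x in Metric.closedBall (e k : Euc d) (r (e k)), |u x| ^ p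
          ≤ (1 / 2) ^ (k + 1) / (1 + C (e k)) * ((1 + C (e k)) * energyQ Ω V p u) := by
            refine mul_le_mul_of_nonneg_left ((hg (e k) u hu).trans ?_) (by positivity)
            linarith
        _ = _ := by field_simp
    have hsF : Summable (fun k => ∫ x in Ω, ‖f k x * |u x| ^ p‖) := by
      refine Summable.of_nonneg_of_le (fun k => integral_nonneg (fun x => norm_nonneg _)) (fun k => ?_) (hs0.mul_right (energyQ Ω V p u))
      have : (fun x => ‖f k x * |u x| ^ p‖) = fun x => f k x * |u x| ^ p := by
        ext x; exact Real.norm_of_nonneg (hF0 k x)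
      rw [this]; exact hFb k
    have hH := hasSum_integral_of_summable_integral_norm (μ := volume.restrict Ω) (fun k => (hFi k).integrableOn) hsF
    have e1 : (fun x => (∑' k, f k x) * |u x| ^ p) = fun x => ∑' k, f k x * |u x| ^ p := by
      ext x; rw [tsum_mul_right]
    simp only [e1]
    have hgeo : HasSum (fun k : ℕ => ((1:ℝ) / 2) ^ (k + 1) * energyQ Ω V p u) (energyQ Ω V p u) := by
      have := (hasSum_geometric_two.mul_left (1 / 2 : ℝ)).mul_right (energyQ Ω V p u)
      have e3 : (1 / 2 * 2 * energyQ Ω V p u : ℝ) = energyQ Ω V p u := by ring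
      rw [e3] at this
      have e2 : (fun k : ℕ => ((1:ℝ) / 2) ^ (k + 1) * energyQ Ω V p u)
          = fun i : ℕ => 1 / 2 * (1 / 2) ^ i * energyQ Ω V p u := by
        ext k; rw [pow_succ]; ring
      rw [e2]; exact this
    exact hasSum_le hFb hH hgeo

lemma init_gap (hd : 2 ≤ d) (hΩo : IsOpen Ω) (hp : 1 < p) (hV₀ : LocBddPotential Ω V₀) (hV₁ : LocBddPotential Ω V₁)
    (hQ₀ : ∀ u : Euc d → ℝ, IsTestFun Ω u → 0 ≤ energyQ Ω V₀ p u)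
    (hQ₁ : ∀ u : Euc d → ℝ, IsTestFun Ω u → 0 ≤ energyQ Ω V₁ p u) {t : ℝ} (ht0 : 0 < t) (ht1 : t < 1)
    (hvol : 0 < volume {x ∈ Ω | V₀ x ≠ V₁ x}) :
    ∃ x ∈ Ω, ∃ r > 0, ∃ C : ℝ, 0 ≤ C ∧ ∀ u, IsTestFun Ω u →
      ∫ x in Metric.closedBall x r, |u x| ^ p ≤ C * energyQ Ω (fun x => t * V₁ x + (1 - t) * V₀ x) p u := by
  obtain ⟨x₀, ⟨hx₀, -⟩, hx₀'⟩ := exists_mem_forall_mem_nhdsWithin_pos_measure hvol.ne'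
  obtain ⟨ρ, hρ, hρs⟩ := Metric.nhds_basis_closedBall.mem_iff.1 (hΩo.mem_nhds hx₀)
  obtain ⟨R, hR, hR1, hR2⟩ : ∃ R, 0 < R ∧ 16 * R ≤ 1 ∧ 16 * R ≤ ρ :=
    ⟨min 1 ρ / 16, by positivity, by linarith [min_le_left 1 ρ], by linarith [min_le_right 1 ρ]⟩
  have hsub : Metric.closedBall x₀ (16 * R) ⊆ Ω := (Metric.closedBall_subset_closedBall hR2).trans hρs
  have hsub2 : Metric.closedBall x₀ (2 * R) ⊆ Ω := (Metric.closedBall_subset_closedBall (by linarith)).trans hsub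
  have hsub1 : Metric.closedBall x₀ R ⊆ Ω := (Metric.closedBall_subset_closedBall (by linarith)).trans hsub
  have hψ : ∃ ψ, IsTestFun Ω ψ ∧ tsupport ψ ⊆ Metric.closedBall x₀ R ∧ 0 < ∫ x, (V₁ x - V₀ x) * ψ x := by
    by_contra hcon
    push Not at hcon
    have hli : LocallyIntegrableOn (fun x => V₁ x - V₀ x) (Metric.ball x₀ R) volume := by
      refine IntegrableOn.locallyIntegrableOn ?_
      obtain ⟨C0, h0⟩ := hV₀.2 _ hsub1 (isCompact_closedBall _ _)
      obtain ⟨C1, h1⟩ := hV₁.2 _ hsub1 (isCompact_closedBall _ _)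
      refine Measure.integrableOn_of_bounded (M := C1 + C0) measure_ball_lt_top.ne (hV₁.1.sub hV₀.1).aestronglyMeasurable ?_
      refine (ae_restrict_iff' measurableSet_ball).2 (Eventually.of_forall (fun x hx => ?_))
      exact (norm_sub_le _ _).trans (add_le_add (h1 x (Metric.ball_subset_closedBall hx)) (h0 x (Metric.ball_subset_closedBall hx)))
    have hae := Metric.isOpen_ball.ae_eq_zero_of_integral_contDiff_smul_eq_zero hli (fun g hg hgc hgs => by
      have hgs' := hgs.trans (Metric.ball_subset_closedBall)
      have a1 := hcon g ⟨hg, hgc, hgs'.trans hsub1⟩ hgs'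
      have a2 := hcon (fun x => -g x) ⟨hg.neg, hgc.neg, by
        have : tsupport (fun x => -g x) = tsupport g := tsupport_neg g
        rw [this]; exact hgs'.trans hsub1⟩ (by
        have : tsupport (fun x => -g x) = tsupport g := tsupport_neg g
        rw [this]; exact hgs')
      simp only [mul_neg, integral_neg] at a2
      simp only [smul_eq_mul, mul_comm (g _)]
      linarith)
    have hpos := hx₀' ({x ∈ Ω | V₀ x ≠ V₁ x} ∩ Metric.ball x₀ R)
      (Filter.inter_mem self_mem_nhdsWithin (mem_nhdsWithin_of_mem_nhds (Metric.ball_mem_nhds _ hR)))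
    refine hpos.ne' (measure_mono_null ?_ hae)
    rintro x ⟨⟨-, hx⟩, hxb⟩
    simp only [Set.mem_compl_iff, Set.mem_ofPred_eq]
    intro hh
    exact hx (by linarith [hh hxb])
  obtain ⟨ψ, hψt, hψs, hψI⟩ := hψ
  obtain ⟨C0, h0⟩ := hV₀.2 _ hsub2 (isCompact_closedBall _ _)
  obtain ⟨C1, h1⟩ := hV₁.2 _ hsub2 (isCompact_closedBall _ _)
  obtain ⟨Λ, hΛ1, hΛ2, hΛ3⟩ : ∃ Λ, C0 ≤ Λ ∧ C1 ≤ Λ ∧ 1 ≤ Λ :=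
    ⟨max (max C0 C1) 1, (le_max_left _ _).trans (le_max_left _ _), (le_max_right _ _).trans (le_max_left _ _), le_max_right _ _⟩
  obtain ⟨K, c₀, hK, hc₀, hA⟩ := stepA hp hV₀ hV₁ hQ₀ hQ₁ ht0 ht1 hR hsub2 hΛ3
    (fun x hx => (h0 x hx).trans hΛ1) (fun x hx => (h1 x hx).trans hΛ2) hψt hψs hψI
  refine ⟨x₀, hx₀, R / 8, by positivity, ?_⟩
  refine gap_of_quantile hd hp (locbdd_t hV₀ hV₁ t) ?_ hR hR1 hsub hK hc₀ ?_
  · intro u hu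
    rw [energy_t hp hV₀ hV₁ t hu]
    have := hQ₀ u hu
    have := hQ₁ u hu
    have : 0 ≤ 1 - t := by linarith
    positivity
  · intro u hu hu0 ε hε hQε
    rw [energy_t hp hV₀ hV₁ t hu] at hQε
    exact hA u hu hu0 ε hε hQε

lemma main (hd : 2 ≤ d) (hΩo : IsOpen Ω) (hΩc : IsConnected Ω) (hp : 1 < p)
    (hV₀ : LocBddPotential Ω V₀) (hV₁ : LocBddPotential Ω V₁)
    (hQ₀ : ∀ u : Euc d → ℝ, IsTestFun Ω u → 0 ≤ energyQ Ω V₀ p u)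
    (hQ₁ : ∀ u : Euc d → ℝ, IsTestFun Ω u → 0 ≤ energyQ Ω V₁ p u) :
    (∀ t ∈ Set.Icc (0 : ℝ) 1, ∀ u : Euc d → ℝ, IsTestFun Ω u →
        0 ≤ t * energyQ Ω V₁ p u + (1 - t) * energyQ Ω V₀ p u) ∧
      (0 < volume {x ∈ Ω | V₀ x ≠ V₁ x} →
        ∀ t ∈ Set.Ioo (0 : ℝ) 1,
          ∃ W : Euc d → ℝ, ContinuousOn W Ω ∧ (∀ x ∈ Ω, 0 < W x) ∧
            ∀ u : Euc d → ℝ, IsTestFun Ω u →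
              (∫ x in Ω, W x * |u x| ^ p) ≤
                t * energyQ Ω V₁ p u + (1 - t) * energyQ Ω V₀ p u) := by
  have hpos : ∀ t ∈ Set.Icc (0 : ℝ) 1, ∀ u : Euc d → ℝ, IsTestFun Ω u →
        0 ≤ t * energyQ Ω V₁ p u + (1 - t) * energyQ Ω V₀ p u := fun t ht u hu =>
    add_nonneg (mul_nonneg ht.1 (hQ₁ u hu)) (mul_nonneg (by linarith [ht.2]) (hQ₀ u hu))
  refine ⟨hpos, fun hvol t ht => ?_⟩
  have hQt : ∀ u : Euc d → ℝ, IsTestFun Ω u → 0 ≤ energyQ Ω (fun x => t * V₁ x + (1 - t) * V₀ x) p u := by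
    intro u hu
    rw [energy_t hp hV₀ hV₁ t hu]
    exact hpos t ⟨ht.1.le, ht.2.le⟩ u hu
  obtain ⟨W, hW1, hW2, hW3⟩ := build_W hΩc hp hQt (all_gap hd hΩo hΩc hp (locbdd_t hV₀ hV₁ t) hQt
    (init_gap hd hΩo hp hV₀ hV₁ hQ₀ hQ₁ ht.1 ht.2 hvol))
  refine ⟨W, hW1, hW2, fun u hu => ?_⟩
  rw [← energy_t hp hV₀ hV₁ t hu]
  exact hW3 u hu

end fin
end CP

/-- **Convexity of positivity in the potential.** If `Q_{V₀} ≥ 0` and `Q_{V₁} ≥ 0` on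
test functions, then `Q_t := t Q_{V₁} + (1-t) Q_{V₀} ≥ 0` for every `t ∈ [0,1]`;
moreover if `V₀ ≠ V₁` on a set of positive measure then `Q_t` is strictly positive in
`Ω` for every `t ∈ (0,1)`. -/
theorem convexity_of_positivity {d : ℕ} (hd : 2 ≤ d)
    (Ω : Set (Euc d)) (hΩo : IsOpen Ω) (hΩc : IsConnected Ω)
    {p : ℝ} (hp₁ : 1 < p) (V₀ V₁ : Euc d → ℝ)
    (hV₀ : LocBddPotential Ω V₀) (hV₁ : LocBddPotential Ω V₁)
    (hQ₀ : ∀ u : Euc d → ℝ, IsTestFun Ω u → 0 ≤ energyQ Ω V₀ p u)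
    (hQ₁ : ∀ u : Euc d → ℝ, IsTestFun Ω u → 0 ≤ energyQ Ω V₁ p u) :
    (∀ t ∈ Set.Icc (0 : ℝ) 1, ∀ u : Euc d → ℝ, IsTestFun Ω u →
        0 ≤ t * energyQ Ω V₁ p u + (1 - t) * energyQ Ω V₀ p u) ∧
      (0 < volume {x ∈ Ω | V₀ x ≠ V₁ x} →
        ∀ t ∈ Set.Ioo (0 : ℝ) 1,
          ∃ W : Euc d → ℝ, ContinuousOn W Ω ∧ (∀ x ∈ Ω, 0 < W x) ∧
            ∀ u : Euc d → ℝ, IsTestFun Ω u →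
              (∫ x in Ω, W x * |u x| ^ p) ≤
                t * energyQ Ω V₁ p u + (1 - t) * energyQ Ω V₀ p u) := by
  exact CP.main hd hΩo hΩc hp₁ hV₀ hV₁ hQ₀ hQ₁
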